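/- arXiv:1308.1718 — 3 statements merged into one kernel-verified Lean document; each statement's English description precedes it below -/
import Mathlib

section
/- Let n ≥ 1 and let a, b, c be natural numbers. Consider the algebra P of polynomial functions on (V*)^a × V^b × SL_n(ℂ)^c, where V = ℂ^n: that is, the ℂ-subalgebra of complex-valued functions on the set ((Fin a → Module.Dual ℂ V) × (Fin b → V) × (Fin c → SL(n,ℂ))) generated by the coordinate functions (the entries of the a covectors, the entries of the b vectors, and the matrix entries of the c special linear matrices). The group SL(n,ℂ) acts on this set by g·(w, v, X) = (w ∘ g⁻¹ componentwise, g·v componentwise, g X g⁻¹ componentwise), and hence on functions by (g·f)(p) = f(g⁻¹·p). Then the subalgebra of SL(n,ℂ)-invariant elements of P is generated, as a ℂ-algebra, by the following functions: (i) the traces tr(M), where M ranges over all products of finitely many of the matrices X₁,…,X_c and their inverses (in any order, with repetitions allowed); (ii) the pairings w_j(M v_i), where M is any such product (including the empty product, the identity matrix); (iii) the volume forms det(M₁ v_{i₁}, …, M_n v_{i_n}), where M₁,…,M_n are such products and v_{i₁},…,v_{i_n} are among the b vectors; (iv) the dual volume forms det(w_{i₁} ∘ M₁, …, w_{i_n}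 ∘ M_n), where M₁,…,M_n are such products and w_{i₁},…,w_{i_n} are among the a covectors. -/
/-! Each generator is visibly a polynomial function (the inverse of a matrix in `SL(n,ℂ)` is its
adjugate) and visibly invariant. The content is the converse: an invariant polynomial function `f`
lies in the algebra of the generators.

*Removing the condition `det = 1`.* Write `f` as the restriction of a polynomial `p` in the
coordinates of the linear space `LinConfig` of covectors, vectors and arbitrary matrices. Since
determinants are `1` on configurations, every monomial of `p` may be multiplied by powers of the
determinants; choosing these so that the degree in each matrix is, up to its residue modulo `n`,
the same for all monomials gives a polynomial `lift p`. Comparing its values at the rescalings of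
determinant-one matrices by `n`-th roots of unity shows that it is invariant on all of `LinConfig`
(`lift_invariant`).

*Polarization.* The homogeneous components of an invariant polynomial on a linear space are
invariant, and each is the restriction to the diagonal of an invariant multilinear form
(`polynomial_mem`, resting on `polarization`). Splitting every argument of this form into its
covector, vector and matrix components, and every matrix as `X = ∑ᵢ (X eᵢ) ⊗ eᵢ*`, reduces the
problem to multilinear invariants of vectors and covectors (`diag_mem`).

*Multilinear invariants.* For equally many vectors and covectors, Schur–Weyl duality says that an
invariant form is a combination of complete products of pairings (`schurWeyl`). A form invariant
under `SL(n,ℂ)` intertwines the diagonal action of every matrix, by homogeneity and density;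
polarizing this, its coefficient matrix commutes with the commutant of the place permutations, so
by the double commutant theorem (`doubleCommutant`, proved by Maschke averaging) it is a
combination of place permutations. In general scalar matrices in `SL(n,ℂ)` force the numbers of
vectors and covectors to agree modulo `n` (`card_modEq`). Multiplying the form by determinants of
auxiliary arguments balances the numbers, and antisymmetrizing the auxiliary arguments over
standard frames recovers the form and turns the pairings with them into volume forms
(`contracted_mem_of_vectors`, `contracted_mem_of_covectors`).

*Contraction.* Summing over the indices `i` in the decompositions of the matrices glues pairings
into `w (M v)` with `M` a word, or closes them up to a trace of a word (`contract`). -/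

open Matrix

/-- The underlying set: `a` covectors, `b` vectors, and `c` special linear
matrices, where `V = ℂⁿ`. -/
abbrev InvConfig (n a b c : ℕ) :=
  (Fin a → Module.Dual ℂ (Fin n → ℂ)) × (Fin b → Fin n → ℂ) ×
    (Fin c → Matrix.SpecialLinearGroup (Fin n) ℂ)

/-- The product, in `SL(n,ℂ)`, of the word `word` in the letters `X₁,…,X_c`
and their inverses: the letter `(i, true)` stands for `X i`, and `(i, false)`
for `(X i)⁻¹`.  The empty word yields the identity matrix. -/
def wordProd {n c : ℕ} (X : Fin c → Matrix.SpecialLinearGroup (Fin n) ℂ)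
    (word : List (Fin c × Bool)) : Matrix.SpecialLinearGroup (Fin n) ℂ :=
  (word.map fun p => if p.2 then X p.1 else (X p.1)⁻¹).prod

/-! ### Polarization -/

/-- The multilinear map in the left block of arguments obtained by freezing the right block. -/
def fixRight {ι κ E : Type*} [AddCommGroup E] [Module ℂ E]
    (Φ : MultilinearMap ℂ (fun _ : ι ⊕ κ => E) ℂ) (w : κ → E) :
    MultilinearMap ℂ (fun _ : ι => E) ℂ where
  toFun v := Φ (Sum.elim v w)
  map_update_add' v i x y := by
    classical
    have h : ∀ z, (Sum.elim (Function.update v i z) w : ι ⊕ κ → E)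
        = Function.update (Sum.elim v w) (Sum.inl i) z := fun z => by
      rw [← Sum.update_elim_inl]
    rename_i inst
    have e : inst = fun a b => Classical.propDecidable (a = b) := Subsingleton.elim _ _
    subst e
    simp only [h, Φ.map_update_add]
  map_update_smul' v i a x := by
    classical
    have h : ∀ z, (Sum.elim (Function.update v i z) w : ι ⊕ κ → E)
        = Function.update (Sum.elim v w) (Sum.inl i) z := fun z => by
      rw [← Sum.update_elim_inl]
    rename_i inst
    have e : inst = fun a b => Classical.propDecidable (a = b) := Subsingleton.elim _ _
    subst e
    simp only [h, Φ.map_update_smul]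

/-- The multilinear map in the right block of arguments obtained by freezing the left block. -/
def fixLeft {ι κ E : Type*} [AddCommGroup E] [Module ℂ E]
    (Φ : MultilinearMap ℂ (fun _ : ι ⊕ κ => E) ℂ) (v : ι → E) :
    MultilinearMap ℂ (fun _ : κ => E) ℂ where
  toFun w := Φ (Sum.elim v w)
  map_update_add' w i x y := by
    classical
    have h : ∀ z, (Sum.elim v (Function.update w i z) : ι ⊕ κ → E)
        = Function.update (Sum.elim v w) (Sum.inr i) z := fun z => by
      rw [← Sum.update_elim_inr]
    rename_i inst
    have e : inst = fun a b => Classical.propDecidable (a = b) := Subsingleton.elim _ _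
    subst e
    simp only [h, Φ.map_update_add]
  map_update_smul' w i a x := by
    classical
    have h : ∀ z, (Sum.elim v (Function.update w i z) : ι ⊕ κ → E)
        = Function.update (Sum.elim v w) (Sum.inr i) z := fun z => by
      rw [← Sum.update_elim_inr]
    rename_i inst
    have e : inst = fun a b => Classical.propDecidable (a = b) := Subsingleton.elim _ _
    subst e
    simp only [h, Φ.map_update_smul]

lemma fixRight_apply {ι κ E : Type*} [AddCommGroup E] [Module ℂ E]
    (Φ : MultilinearMap ℂ (fun _ : ι ⊕ κ => E) ℂ) (v : ι → E) (w : κ → E) :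
    fixRight Φ w v = Φ (Sum.elim v w) := rfl

lemma fixLeft_apply {ι κ E : Type*} [AddCommGroup E] [Module ℂ E]
    (Φ : MultilinearMap ℂ (fun _ : ι ⊕ κ => E) ℂ) (v : ι → E) (w : κ → E) :
    fixLeft Φ v w = Φ (Sum.elim v w) := rfl

lemma sum_single_eq_iff {ι : Type*} [Fintype ι] [DecidableEq ι] (φ : ι → ι) :
    (∑ k, Finsupp.single (φ k) 1 = (∑ k, Finsupp.single k 1 : ι →₀ ℕ)) ↔
      Function.Bijective φ := by
  constructor
  · intro h
    rw [← Finite.surjective_iff_bijective]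
    intro i
    have h1 := DFunLike.congr_fun h i
    rw [Finsupp.finsetSum_apply, Finsupp.finsetSum_apply] at h1
    by_contra hne
    push Not at hne
    simp [Finsupp.single_apply, hne] at h1
  · intro h
    exact (Equiv.ofBijective φ h).sum_comp (fun k => (Finsupp.single k 1 : ι →₀ ℕ))

/-- A multilinear form vanishing on the diagonal has vanishing symmetrization: the sum over
permutations is the coefficient of `t₁ ⋯ t_d` in the value at `∑ tᵢ yᵢ`. -/
lemma polarization {ι E : Type*} [Fintype ι] [DecidableEq ι] [AddCommGroup E] [Module ℂ E]
    (T : MultilinearMap ℂ (fun _ : ι => E) ℂ) (h : ∀ y : E, T (fun _ => y) = 0) (y : ι → E) :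
    ∑ τ : Equiv.Perm ι, T (fun k => y (τ k)) = 0 := by
  classical
  let Q : MvPolynomial ι ℂ := ∑ φ : ι → ι,
    MvPolynomial.monomial (∑ k, Finsupp.single (φ k) 1) (T (fun k => y (φ k)))
  have hQ : Q = 0 := by
    apply MvPolynomial.funext
    intro t
    have h1 := h (∑ i, t i • y i)
    rw [T.map_sum (fun _ i => t i • y i)] at h1
    simp only [T.map_smul_univ] at h1
    rw [map_zero, ← h1]
    simp only [Q, map_sum, MvPolynomial.eval_monomial]
    refine Finset.sum_congr rfl fun φ _ => ?_
    rw [mul_comm, smul_eq_mul]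
    congr 1
    rw [← Finsupp.prod_finsetSum_index (by simp) (by intros; rw [pow_add])]
    simp
  have hc := congrArg (MvPolynomial.coeff (∑ k, Finsupp.single k 1)) hQ
  simp only [Q, MvPolynomial.coeff_sum, MvPolynomial.coeff_monomial, MvPolynomial.coeff_zero,
    sum_single_eq_iff] at hc
  rw [← hc, ← Finset.sum_filter]
  refine Finset.sum_bij (fun τ _ => (τ : ι → ι)) (by simp)
    (fun a _ b _ hab => DFunLike.coe_injective hab)
    (fun φ hφ => ⟨Equiv.ofBijective φ (by simpa using hφ), by simp, rfl⟩) (fun _ _ => rfl)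

/-! ### Double commutant of the symmetric group -/

/-- Left multiplication by a place permutation, on matrices indexed by multi-indices. -/
def placeShift {ι : Type*} {n : ℕ} (σ : Equiv.Perm ι) :
    Matrix (ι → Fin n) (ι → Fin n) ℂ →ₗ[ℂ] Matrix (ι → Fin n) (ι → Fin n) ℂ where
  toFun Y := Matrix.of fun I J => Y (I ∘ σ) J
  map_add' _ _ := rfl
  map_smul' _ _ := rfl

lemma placeShift_apply {ι : Type*} {n : ℕ} (σ : Equiv.Perm ι)
    (Y : Matrix (ι → Fin n) (ι → Fin n) ℂ) (I J : ι → Fin n) :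
    placeShift σ Y I J = Y (I ∘ σ) J := rfl

/-- If `Θ` commutes with every matrix in the commutant of the place permutations, then `Θ` is a
linear combination of place permutations. -/
lemma doubleCommutant {ι : Type*} [Fintype ι] [DecidableEq ι] {n : ℕ}
    (Θ : Matrix (ι → Fin n) (ι → Fin n) ℂ)
    (h : ∀ B : Matrix (ι → Fin n) (ι → Fin n) ℂ,
      (∀ (σ : Equiv.Perm ι) I J, B (I ∘ σ) (J ∘ σ) = B I J) → Θ * B = B * Θ) :
    ∃ c : Equiv.Perm ι → ℂ, Θ = ∑ τ, c τ • Matrix.of fun J I => if I = J ∘ τ then (1 : ℂ) else 0 := by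
  classical
  let P : Equiv.Perm ι → Matrix (ι → Fin n) (ι → Fin n) ℂ :=
    fun τ => Matrix.of fun J I => if I = J ∘ τ then (1 : ℂ) else 0
  let A : Submodule ℂ (Matrix (ι → Fin n) (ι → Fin n) ℂ) := Submodule.span ℂ (Set.range P)
  let sh := fun σ : Equiv.Perm ι => placeShift (n := n) σ
  have shA : ∀ σ, ∀ Y ∈ A, sh σ Y ∈ A := by
    intro σ Y hY
    induction hY using Submodule.span_induction with
    | mem x hx =>
      obtain ⟨τ, rfl⟩ := hx
      exact Submodule.subset_span ⟨σ * τ, rfl⟩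
    | zero => simp
    | add x y _ _ hx hy => rw [map_add]; exact add_mem hx hy
    | smul a x _ hx => rw [map_smul]; exact A.smul_mem _ hx
  obtain ⟨π₀, hπ₀⟩ := A.subtype.exists_leftInverse_of_injective (by simp)
  have hπ₀' : ∀ Y (hY : Y ∈ A), (π₀ Y : Matrix (ι → Fin n) (ι → Fin n) ℂ) = Y := fun Y hY => by
    have := LinearMap.congr_fun hπ₀ ⟨Y, hY⟩
    simpa using congrArg Subtype.val this
  -- Maschke averaging makes the projection onto `A` equivariant
  let π : Matrix (ι → Fin n) (ι → Fin n) ℂ →ₗ[ℂ] Matrix (ι → Fin n) (ι → Fin n) ℂ :=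
    ∑ σ : Equiv.Perm ι, (sh σ⁻¹) ∘ₗ A.subtype ∘ₗ π₀ ∘ₗ (sh σ)
  have shsh : ∀ σ τ Y, sh σ (sh τ Y) = sh (σ * τ) Y := fun σ τ Y => by
    ext I J; rfl
  have hπmem : ∀ Y, π Y ∈ A := fun Y => by
    simp only [π, LinearMap.sum_apply, LinearMap.comp_apply]
    exact sum_mem fun σ _ => shA _ _ (π₀ _).2
  have hπid : π 1 = (Fintype.card (Equiv.Perm ι) : ℂ) • (1 : Matrix (ι → Fin n) (ι → Fin n) ℂ) := by
    have h1 : (1 : Matrix (ι → Fin n) (ι → Fin n) ℂ) ∈ A := by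
      refine Submodule.subset_span ⟨1, ?_⟩
      ext I J
      simp [P, Matrix.one_apply, eq_comm]
    simp only [π, LinearMap.sum_apply, LinearMap.comp_apply, Submodule.subtype_apply]
    have : ∀ σ : Equiv.Perm ι, sh σ⁻¹ (π₀ (sh σ 1)) = (1 : Matrix (ι → Fin n) (ι → Fin n) ℂ) := fun σ => by
      rw [hπ₀' _ (shA σ 1 h1), shsh, inv_mul_cancel]
      rfl
    simp only [this, Finset.sum_const, Finset.card_univ, Nat.cast_smul_eq_nsmul]
  have hπsh : ∀ σ Y, π (sh σ Y) = sh σ (π Y) := fun σ Y => by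
    simp only [π, LinearMap.sum_apply, LinearMap.comp_apply, map_sum, shsh]
    refine Fintype.sum_equiv (Equiv.mulRight σ) _ _ fun τ => ?_
    simp
  -- `π` acts through matrices in the commutant, so it commutes with left multiplication by `Θ`
  have hπexp : ∀ Y I J, π Y I J = ∑ K, ∑ L, π (Matrix.single L K 1) I J * Y L K := fun Y I J => by
    conv_lhs => rw [Matrix.matrix_eq_sum_single Y]
    rw [Finset.sum_comm]
    simp only [map_sum, Matrix.sum_apply]
    refine Finset.sum_congr rfl fun K _ => Finset.sum_congr rfl fun L _ => ?_
    have : Matrix.single L K (Y L K) = Y L K • Matrix.single L K (1 : ℂ) := by simp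
    rw [this, map_smul, Matrix.smul_apply, smul_eq_mul, mul_comm]
  have hB : ∀ K J, (∀ (σ : Equiv.Perm ι) I L, π (Matrix.single (L ∘ σ) K 1) (I ∘ σ) J
      = π (Matrix.single L K 1) I J) := fun K J σ I L => by
    have h1 := hπsh σ (Matrix.single (L ∘ σ) K 1)
    have h2 : sh σ (Matrix.single (L ∘ σ) K 1) = Matrix.single L K 1 := by
      ext I' J'
      simp only [sh, placeShift_apply, Matrix.single_apply]
      congr 1
      rw [σ.surjective.injective_comp_right.eq_iff]
    rw [h2] at h1
    rw [h1]
    rfl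
  have hΘ : π Θ = Θ * π 1 := by
    have key : ∀ Y, π (Θ * Y) = Θ * π Y := fun Y => by
      ext I J
      have h3 : ∀ K, ∑ L, π (Matrix.single L K 1) I J * (Θ * Y) L K
          = ∑ L, Θ I L * ∑ M, π (Matrix.single M K 1) L J * Y M K := fun K => by
        have h4 := h (Matrix.of fun I L => π (Matrix.single L K 1) I J)
          (fun σ I L => hB K J σ I L)
        have h5 : (Matrix.of fun I L => π (Matrix.single L K 1) I J) * (Θ * Y)
            = Θ * ((Matrix.of fun I L => π (Matrix.single L K 1) I J) * Y) := by
          rw [← Matrix.mul_assoc, ← h4, Matrix.mul_assoc]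
        have h6 := congrFun (congrFun h5 I) K
        rw [Matrix.mul_apply, Matrix.mul_apply (M := Θ)] at h6
        simpa only [Matrix.mul_apply (N := Y), Matrix.of_apply] using h6
      rw [hπexp]
      simp only [h3, Matrix.mul_apply (M := Θ) (N := π Y), hπexp Y, Finset.mul_sum]
      rw [Finset.sum_comm]
    simpa using key 1
  have hcard : (Fintype.card (Equiv.Perm ι) : ℂ) ≠ 0 := by exact_mod_cast Fintype.card_ne_zero
  have hmem : Θ ∈ A := by
    have h6 : Θ = (Fintype.card (Equiv.Perm ι) : ℂ)⁻¹ • π Θ := by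
      rw [hΘ, hπid, Matrix.mul_smul, Matrix.mul_one, smul_smul, inv_mul_cancel₀ hcard, one_smul]
    rw [h6]
    exact A.smul_mem _ (hπmem _)
  obtain ⟨c, hc⟩ := (Submodule.mem_span_range_iff_exists_fun ℂ).1 hmem
  exact ⟨c, hc.symm⟩

/-! ### Schur–Weyl duality for multilinear invariants -/

lemma continuous_smul_add_diag {ι E : Type*} [Fintype ι] [AddCommGroup E] [Module ℂ E]
    (T : MultilinearMap ℂ (fun _ : ι => E) ℂ) (x y : E) :
    Continuous fun s : ℂ => T (fun _ => s • x + y) := by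
  classical
  have h : ∀ s : ℂ, T (fun _ => s • x + y)
      = ∑ S : Finset ι, s ^ S.card * T (S.piecewise (fun _ => x) (fun _ => y)) := fun s => by
    have := T.map_add_univ (fun _ => s • x) (fun _ => y)
    refine this.trans (Finset.sum_congr rfl fun S _ => ?_)
    have h2 := T.map_piecewise_smul (fun _ => s) (S.piecewise (fun _ => x) (fun _ => y)) S
    have h3 : S.piecewise (fun i => s • S.piecewise (fun _ => x) (fun _ => y) i)
        (S.piecewise (fun _ => x) (fun _ => y)) = S.piecewise (fun _ => s • x) (fun _ => y) := by
      funext i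
      by_cases hi : i ∈ S <;> simp [hi]
    rw [h3] at h2
    simpa using h2
  simp only [h]
  fun_prop

/-- A homogeneous form on matrices that vanishes on `SL(n,ℂ)` vanishes identically. -/
lemma diag_eq_zero_of_SL {ι : Type*} [Fintype ι] {n : ℕ} (hn : 1 ≤ n)
    (T : MultilinearMap ℂ (fun _ : ι => Matrix (Fin n) (Fin n) ℂ) ℂ)
    (h : ∀ g : SpecialLinearGroup (Fin n) ℂ, T (fun _ => g.val) = 0)
    (g : Matrix (Fin n) (Fin n) ℂ) : T (fun _ => g) = 0 := by
  -- invertible matrices are scalar multiples of matrices of determinant one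
  have hGL : ∀ g : Matrix (Fin n) (Fin n) ℂ, g.det ≠ 0 → T (fun _ => g) = 0 := fun g hg => by
    obtain ⟨t, ht⟩ := IsAlgClosed.exists_pow_nat_eq g.det (show 0 < n by lia)
    have ht0 : t ≠ 0 := by
      rintro rfl
      rw [zero_pow (by lia)] at ht
      exact hg ht.symm
    have hdet : (t⁻¹ • g).det = 1 := by
      rw [det_smul, Fintype.card_fin, inv_pow, ht, inv_mul_cancel₀ hg]
    have h1 := h ⟨t⁻¹ • g, hdet⟩
    have h2 := T.map_smul_univ (fun _ => t⁻¹) (fun _ => g)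
    simp only at h1
    rw [h1, Finset.prod_const, smul_eq_mul] at h2
    exact (mul_eq_zero.1 h2.symm).resolve_left (pow_ne_zero _ (inv_ne_zero ht0))
  -- `s • 1 + g` is invertible for all but finitely many `s`
  have hfin : {s : ℂ | (s • (1 : Matrix (Fin n) (Fin n) ℂ) + g).det = 0}.Finite := by
    have h0 : (-g).charpoly ≠ 0 := (charpoly_monic _).ne_zero
    refine ((-g).charpoly.roots.toFinset.finite_toSet).subset fun s hs => ?_
    simp only [Finset.mem_coe, Multiset.mem_toFinset]
    rw [Polynomial.mem_roots h0, Polynomial.IsRoot, eval_charpoly, ← hs]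
    congr 1
    rw [sub_neg_eq_add, smul_one_eq_diagonal]
    rfl
  have hd := hfin.countable.dense_compl ℂ
  have hc : (fun s : ℂ => T (fun _ => s • (1 : Matrix (Fin n) (Fin n) ℂ) + g)) = fun _ => 0 :=
    Continuous.ext_on hd (continuous_smul_add_diag T 1 g) continuous_const fun s hs => hGL _ hs
  simpa using congrFun hc 0

/-- Expansion of a form in a block of vectors and a block of covectors in coordinates. -/
lemma expand_coords {ι κ : Type*} [Fintype ι] [Fintype κ] [DecidableEq ι] [DecidableEq κ] {n : ℕ}
    (Φ : MultilinearMap ℂ (fun _ : ι ⊕ κ => Fin n → ℂ) ℂ) (v : ι → Fin n → ℂ)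
    (w : κ → Fin n → ℂ) :
    Φ (Sum.elim v w) = ∑ J : κ → Fin n, ∑ I : ι → Fin n, (∏ k, v k (I k)) * (∏ k, w k (J k)) *
      Φ (Sum.elim (fun k => Pi.single (I k) 1) (fun k => Pi.single (J k) 1)) := by
  have e : ∀ x : Fin n → ℂ, x = ∑ i, x i • (Pi.single i 1 : Fin n → ℂ) := fun x => by
    ext j; simp [Finset.sum_apply, Pi.single_apply]
  have hw : ∀ v, Φ (Sum.elim v w) = ∑ J : κ → Fin n, (∏ k, w k (J k)) *
      Φ (Sum.elim v (fun k => Pi.single (J k) 1)) := fun v => by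
    conv_lhs => rw [← fixLeft_apply, show w = fun k => ∑ i, w k i • Pi.single i 1 from
      funext fun k => e (w k)]
    rw [(fixLeft Φ v).map_sum (fun k i => w k i • (Pi.single i 1 : Fin n → ℂ))]
    refine Finset.sum_congr rfl fun J _ => ?_
    rw [(fixLeft Φ v).map_smul_univ (fun k => w k (J k))]
    rfl
  have hv : ∀ w', Φ (Sum.elim v w') = ∑ I : ι → Fin n, (∏ k, v k (I k)) *
      Φ (Sum.elim (fun k => Pi.single (I k) 1) w') := fun w' => by
    conv_lhs => rw [← fixRight_apply, show v = fun k => ∑ i, v k i • Pi.single i 1 from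
      funext fun k => e (v k)]
    rw [(fixRight Φ w').map_sum (fun k i => v k i • (Pi.single i 1 : Fin n → ℂ))]
    refine Finset.sum_congr rfl fun I _ => ?_
    rw [(fixRight Φ w').map_smul_univ (fun k => v k (I k))]
    rfl
  rw [hw]
  refine Finset.sum_congr rfl fun J _ => ?_
  rw [hv, Finset.mul_sum]
  exact Finset.sum_congr rfl fun I _ => by ring

/-- The form `g ↦ Φ(g v, w) - Φ(v, w g)`, with an independent matrix in each slot. -/
noncomputable def commForm {ι : Type*} {n : ℕ}
    (Φ : MultilinearMap ℂ (fun _ : ι ⊕ ι => Fin n → ℂ) ℂ) (v w : ι → Fin n → ℂ) :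
    MultilinearMap ℂ (fun _ : ι => Matrix (Fin n) (Fin n) ℂ) ℂ :=
  (fixRight Φ w).compLinearMap (fun k => (mulVecBilin ℂ ℂ).flip (v k)) -
    (fixLeft Φ v).compLinearMap (fun k => vecMulBilin ℂ ℂ (w k))

lemma commForm_apply {ι : Type*} {n : ℕ}
    (Φ : MultilinearMap ℂ (fun _ : ι ⊕ ι => Fin n → ℂ) ℂ) (v w : ι → Fin n → ℂ)
    (g : ι → Matrix (Fin n) (Fin n) ℂ) :
    commForm Φ v w g = Φ (Sum.elim (fun k => g k *ᵥ v k) w)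
      - Φ (Sum.elim v (fun k => w k ᵥ* g k)) := rfl

/-- Schur–Weyl duality when vectors and covectors are indexed by the same type. -/
lemma schurWeyl_perm {ι : Type*} [Fintype ι] [DecidableEq ι] {n : ℕ} (hn : 1 ≤ n)
    (Φ : MultilinearMap ℂ (fun _ : ι ⊕ ι => Fin n → ℂ) ℂ)
    (h : ∀ (g : SpecialLinearGroup (Fin n) ℂ) v w,
      Φ (Sum.elim (fun k => g.val *ᵥ v k) (fun k => w k ᵥ* (g⁻¹).val)) = Φ (Sum.elim v w)) :
    ∃ c : Equiv.Perm ι → ℂ, ∀ v w, Φ (Sum.elim v w) = ∑ τ, c τ * ∏ k, w (τ k) ⬝ᵥ v k := by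
  have h1 : ∀ v w, ∀ g : Matrix (Fin n) (Fin n) ℂ, commForm Φ v w (fun _ => g) = 0 := by
    intro v w
    refine diag_eq_zero_of_SL hn _ fun g => ?_
    have h2 := h g v (fun k => w k ᵥ* g.val)
    simp only [vecMul_vecMul] at h2
    rw [show g.val * (g⁻¹).val = 1 from congrArg Subtype.val (mul_inv_cancel g)] at h2
    simp only [vecMul_one] at h2
    rw [commForm_apply, h2, sub_self]
  have h2 := fun v w => polarization (commForm Φ v w) (h1 v w)
  let Θ : Matrix (ι → Fin n) (ι → Fin n) ℂ := Matrix.of fun J I =>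
    Φ (Sum.elim (fun k => Pi.single (I k) 1) (fun k => Pi.single (J k) 1))
  -- polarization, evaluated on elementary matrices
  have h3 : ∀ I J L M : ι → Fin n, ∑ τ : Equiv.Perm ι,
      ((if J ∘ τ = L then Θ M (I ∘ τ) else 0) - (if I ∘ τ = M then Θ (J ∘ τ) L else 0)) = 0 := by
    intro I J L M
    have h4 := h2 (fun k => Pi.single (L k) 1) (fun k => Pi.single (M k) 1)
      (fun k => Matrix.single (I k) (J k) 1)
    refine (Finset.sum_congr rfl fun τ _ => ?_).trans h4
    rw [commForm_apply]
    congr 1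
    · split_ifs with hJ
      · subst hJ
        simp only [Θ, Matrix.of_apply, Function.comp]
        congr 2
        funext k
        ext i
        simp [Matrix.single_apply, Pi.single_apply, eq_comm]
      · obtain ⟨k, hk⟩ := Function.ne_iff.1 hJ
        refine (Φ.map_coord_zero (Sum.inl k) ?_).symm
        ext i
        simp only [Function.comp] at hk
        simp [hk]
    · split_ifs with hJ
      · subst hJ
        simp only [Θ, Matrix.of_apply, Function.comp]
        congr 2
        funext k
        ext i
        simp [Matrix.single_apply, Pi.single_apply, eq_comm]
      · obtain ⟨k, hk⟩ := Function.ne_iff.1 hJ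
        refine (Φ.map_coord_zero (Sum.inr k) ?_).symm
        ext i
        simp only [Function.comp] at hk
        simp [hk]
  obtain ⟨c, hc⟩ := doubleCommutant Θ (by
    intro B hB
    ext M L
    have hcard : (Fintype.card (Equiv.Perm ι) : ℂ) ≠ 0 := by exact_mod_cast Fintype.card_ne_zero
    have h5 : ∑ I, ∑ J, B I J * ∑ τ : Equiv.Perm ι,
      ((if J ∘ τ = L then Θ M (I ∘ τ) else 0) - (if I ∘ τ = M then Θ (J ∘ τ) L else 0)) = 0 := by
      simp only [h3, mul_zero, Finset.sum_const_zero]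
    have h6 : ∀ τ : Equiv.Perm ι, ∑ I, ∑ J, B I J *
        ((if J ∘ τ = L then Θ M (I ∘ τ) else 0) - (if I ∘ τ = M then Θ (J ∘ τ) L else 0))
        = (Θ * B) M L - (B * Θ) M L := by
      intro τ
      let E : (ι → Fin n) ≃ (ι → Fin n) := Equiv.arrowCongr τ.symm (Equiv.refl _)
      have hE : ∀ I, E I = I ∘ τ := fun I => rfl
      have h7 := E.sum_comp (fun I => ∑ J, B I J *
        ((if J = L then Θ M I else 0) - (if I = M then Θ J L else 0)))
      have h8 := fun I => E.sum_comp (fun J => B (E I) J *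
        ((if J = L then Θ M (E I) else 0) - (if (E I) = M then Θ J L else 0)))
      simp only [← h8] at h7
      simp only [hE, hB] at h7
      rw [h7]
      simp only [mul_sub, Finset.sum_sub_distrib, Matrix.mul_apply]
      congr 1
      · simp [mul_comm]
      · rw [Finset.sum_comm]
        simp
    have h9 : ∑ τ : Equiv.Perm ι, ((Θ * B) M L - (B * Θ) M L) = 0 := by
      refine (Finset.sum_congr rfl fun τ _ => (h6 τ).symm).trans (Eq.trans ?_ h5)
      simp only [Finset.mul_sum]
      rw [Finset.sum_comm]
      exact Finset.sum_congr rfl fun I _ => Finset.sum_comm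
    rw [Finset.sum_const, Finset.card_univ, nsmul_eq_mul] at h9
    exact sub_eq_zero.1 ((mul_eq_zero.1 h9).resolve_left hcard))
  refine ⟨c, fun v w => ?_⟩
  have hΘ : ∀ I J, Φ (Sum.elim (fun k => Pi.single (I k) 1) (fun k => Pi.single (J k) 1))
      = ∑ τ, c τ * if I = J ∘ τ then (1 : ℂ) else 0 := fun I J => by
    have := congrFun (congrFun hc J) I
    simpa [Θ, Matrix.sum_apply] using this
  rw [expand_coords]
  simp only [hΘ, Finset.mul_sum]
  have : ∀ J : ι → Fin n, ∑ I : ι → Fin n, ∑ τ, (∏ k, v k (I k)) * (∏ k, w k (J k)) *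
      (c τ * if I = J ∘ τ then (1 : ℂ) else 0)
      = ∑ τ, c τ * ∏ k, (w (τ k) (J (τ k)) * v k (J (τ k))) := fun J => by
    rw [Finset.sum_comm]
    refine Finset.sum_congr rfl fun τ _ => ?_
    rw [Finset.sum_eq_single (J ∘ τ) (fun I _ hI => by simp [hI]) (by simp)]
    rw [Finset.prod_mul_distrib, Equiv.prod_comp τ (fun k => w k (J k))]
    simp only [Function.comp, if_true]
    ring
  simp only [this]
  rw [Finset.sum_comm]
  refine Finset.sum_congr rfl fun τ _ => ?_
  rw [← Finset.mul_sum]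
  congr 1
  simp only [dotProduct, Finset.prod_univ_sum, Fintype.piFinset_univ]
  exact (Equiv.arrowCongr τ.symm (Equiv.refl (Fin n))).sum_comp
    (fun J => ∏ k, (w (τ k) (J k) * v k (J k)))

/-- First fundamental theorem for multilinear invariants of as many vectors as covectors. -/
lemma schurWeyl {ι κ : Type*} [Fintype ι] [DecidableEq ι] [Fintype κ] [DecidableEq κ]
    {n : ℕ} (hn : 1 ≤ n) (e : κ ≃ ι)
    (Φ : MultilinearMap ℂ (fun _ : ι ⊕ κ => Fin n → ℂ) ℂ)
    (h : ∀ (g : SpecialLinearGroup (Fin n) ℂ) v w,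
      Φ (Sum.elim (fun k => g.val *ᵥ v k) (fun k => w k ᵥ* (g⁻¹).val)) = Φ (Sum.elim v w)) :
    ∃ c : Equiv.Perm ι → ℂ, ∀ v w,
      Φ (Sum.elim v w) = ∑ τ, c τ * ∏ j, w j ⬝ᵥ v ((e.trans τ) j) := by
  let Φ' := Φ.domDomCongr (Equiv.sumCongr (Equiv.refl ι) e)
  have hΦ' : ∀ v w, Φ' (Sum.elim v w) = Φ (Sum.elim v (w ∘ e)) := fun v w => by
    simp only [Φ', MultilinearMap.domDomCongr_apply]
    congr 1
    funext i
    rcases i with i | i <;> rfl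
  obtain ⟨c, hc⟩ := schurWeyl_perm hn Φ' (fun g v w => by
    rw [hΦ', hΦ']
    exact h g v (w ∘ e))
  refine ⟨fun τ => c τ⁻¹, fun v w => ?_⟩
  have h1 := hΦ' v (w ∘ e.symm)
  rw [hc, Function.comp_assoc, Equiv.symm_comp_self, Function.comp_id] at h1
  rw [← h1, ← Equiv.sum_comp (Equiv.inv (Equiv.Perm ι))]
  refine Finset.sum_congr rfl fun τ _ => ?_
  simp only [Equiv.inv_apply]
  congr 1
  rw [← (e.trans τ).prod_comp]
  simp

/-! ### Contracting matrix slots -/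

lemma wordProd_append {n c : ℕ} (X : Fin c → Matrix.SpecialLinearGroup (Fin n) ℂ)
    (s t : List (Fin c × Bool)) : wordProd X (s ++ t) = wordProd X s * wordProd X t := by
  simp [wordProd]

/-- The matrix of a word in the letters `X₁, …, X_c` and their inverses. -/
def wordMat {n c : ℕ} (X : Fin c → Matrix.SpecialLinearGroup (Fin n) ℂ)
    (s : List (Fin c × Bool)) : Matrix (Fin n) (Fin n) ℂ := (wordProd X s).val

lemma wordMat_append {n c : ℕ} (X : Fin c → Matrix.SpecialLinearGroup (Fin n) ℂ)
    (s t : List (Fin c × Bool)) : wordMat X (s ++ t) = wordMat X s * wordMat X t := by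
  rw [wordMat, wordProd_append]; rfl

lemma wordMat_nil {n c : ℕ} (X : Fin c → Matrix.SpecialLinearGroup (Fin n) ℂ) :
    wordMat X [] = 1 := rfl

lemma wordMat_letter {n c : ℕ} (X : Fin c → Matrix.SpecialLinearGroup (Fin n) ℂ) (l : Fin c) :
    wordMat X [(l, true)] = (X l).val := by
  simp [wordMat, wordProd]

/-- Contracting one matrix slot `X l = ∑ᵢ (X l eᵢ) ⊗ eᵢ*` in a product of pairings. The slot is
`none` on both sides of the matching `e`; it either closes up to a trace or glues two pairings. -/
lemma contract_one {n c : ℕ} {K L : Type} [Fintype K] [DecidableEq K]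
    (e : Option K ≃ Option L) (wd : Option K → List (Fin c × Bool)) (l : Fin c) :
    ∃ (wd' : K → List (Fin c × Bool)) (tr : List (List (Fin c × Bool))),
      ∀ (X : Fin c → Matrix.SpecialLinearGroup (Fin n) ℂ) (v : L → Fin n → ℂ) (w : K → Fin n → ℂ),
        ∑ i : Fin n, ∏ j : Option K, (j.elim (Pi.single i 1) w : Fin n → ℂ) ⬝ᵥ
          (wordMat X (wd j) *ᵥ ((e j).elim ((X l).val *ᵥ Pi.single i 1) v)) =
        (∏ j, w j ⬝ᵥ (wordMat X (wd' j) *ᵥ v (Equiv.removeNone e j))) *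
          (tr.map fun t => trace (wordMat X t)).prod := by
  rcases hnone : e none with _ | l₀
  · have hsome : ∀ j, e (some j) = some (Equiv.removeNone e j) := fun j => by
      rw [Equiv.removeNone_some]
      apply Option.ne_none_iff_exists'.1
      rw [← hnone]
      exact fun h => by simpa using e.injective h
    refine ⟨fun j => wd (some j), [wd none ++ [(l, true)]], fun X v w => ?_⟩
    simp only [Fintype.prod_option, hnone, hsome, Option.elim_none, Option.elim_some,
      List.map_cons, List.map_nil, List.prod_cons, List.prod_nil, mul_one]
    rw [← Finset.sum_mul, mul_comm]
    congr 1
    simp only [wordMat_append, wordMat_letter, single_one_dotProduct,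
      mulVec_single_one, trace]
    rfl
  · obtain ⟨j', hj'⟩ := e.surjective none
    obtain ⟨j₀, rfl⟩ : ∃ j, j' = some j := Option.ne_none_iff_exists'.1 (by
      rintro rfl
      rw [hnone] at hj'
      cases hj')
    have h0 : Equiv.removeNone e j₀ = l₀ := by
      have := Equiv.removeNone_none e hj'
      rw [hnone] at this
      exact Option.some_injective _ this
    have hsome : ∀ j, j ≠ j₀ → e (some j) = some (Equiv.removeNone e j) := fun j hj => by
      rw [Equiv.removeNone_some]
      apply Option.ne_none_iff_exists'.1
      rw [← hj']
      exact fun h => hj (by simpa using e.injective h)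
    refine ⟨Function.update (fun j => wd (some j)) j₀ (wd (some j₀) ++ ([(l, true)] ++ wd none)),
      [], fun X v w => ?_⟩
    simp only [Fintype.prod_option, hnone, Option.elim_none, Option.elim_some,
      List.map_nil, List.prod_nil, mul_one]
    rw [← Finset.mul_prod_erase _ _ (Finset.mem_univ j₀)]
    have h2 : ∀ i : Fin n, ∏ j : K, w j ⬝ᵥ (wordMat X (wd (some j)) *ᵥ
        ((e (some j)).elim ((X l).val *ᵥ Pi.single i 1) v)) =
        (w j₀ ⬝ᵥ (wordMat X (wd (some j₀)) *ᵥ ((X l).val *ᵥ Pi.single i 1))) *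
        ∏ j ∈ Finset.univ.erase j₀, w j ⬝ᵥ (wordMat X (wd (some j)) *ᵥ
          v (Equiv.removeNone e j)) := fun i => by
      rw [← Finset.mul_prod_erase _ _ (Finset.mem_univ j₀), hj']
      congr 1
      refine Finset.prod_congr rfl fun j hj => ?_
      rw [hsome j (Finset.ne_of_mem_erase hj)]
      rfl
    have h3 : ∏ j ∈ Finset.univ.erase j₀, w j ⬝ᵥ (wordMat X (Function.update
          (fun j => wd (some j)) j₀ (wd (some j₀) ++ ([(l, true)] ++ wd none)) j) *ᵥ
          v (Equiv.removeNone e j)) =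
        ∏ j ∈ Finset.univ.erase j₀, w j ⬝ᵥ (wordMat X (wd (some j)) *ᵥ
          v (Equiv.removeNone e j)) := by
      refine Finset.prod_congr rfl fun j hj => ?_
      rw [Function.update_of_ne (Finset.ne_of_mem_erase hj)]
    simp only [h2, h3, ← mul_assoc]
    rw [← Finset.sum_mul]
    congr 1
    rw [Function.update_self, h0, wordMat_append, wordMat_append, wordMat_letter,
      ← Matrix.mulVec_mulVec, ← Matrix.mulVec_mulVec]
    generalize wordMat X (wd none) *ᵥ v l₀ = y
    simp only [mulVec_mulVec, dotProduct_mulVec]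
    generalize w j₀ ᵥ* (wordMat X (wd (some j₀)) * (X l).val) = z
    simp [dotProduct, Pi.single_apply, mul_comm]

/-- The slot set `K ⊕ Fin (m + 1)` with its slot `0` split off. -/
def optionSumFin (K : Type) (m : ℕ) : Option (K ⊕ Fin m) ≃ K ⊕ Fin (m + 1) where
  toFun o := o.elim (Sum.inr 0) (Sum.map id Fin.succ)
  invFun := Sum.elim (fun k => some (Sum.inl k))
    (Fin.cases none (fun i => some (Sum.inr i)))
  left_inv o := by rcases o with _ | k | i <;> simp
  right_inv o := by
    rcases o with k | i
    · simp
    · refine Fin.cases ?_ (fun i => ?_) i <;> simp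

/-- Contracting all matrix slots in a product of pairings leaves a product of pairings and
traces. -/
lemma contract {n c : ℕ} (m : ℕ) : ∀ {K L : Type} [Fintype K] [DecidableEq K]
    (e : K ⊕ Fin m ≃ L ⊕ Fin m) (wd : K ⊕ Fin m → List (Fin c × Bool)) (lc : Fin m → Fin c),
    ∃ (e' : K ≃ L) (wd' : K → List (Fin c × Bool)) (tr : List (List (Fin c × Bool))),
      ∀ (X : Fin c → Matrix.SpecialLinearGroup (Fin n) ℂ) (v : L → Fin n → ℂ) (w : K → Fin n → ℂ),
        ∑ I : Fin m → Fin n, ∏ j : K ⊕ Fin m,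
          (Sum.elim w (fun k => Pi.single (I k) 1) j : Fin n → ℂ) ⬝ᵥ (wordMat X (wd j) *ᵥ
            (Sum.elim v (fun k => (X (lc k)).val *ᵥ Pi.single (I k) 1) (e j))) =
        (∏ j, w j ⬝ᵥ (wordMat X (wd' j) *ᵥ v (e' j))) *
          (tr.map fun t => trace (wordMat X t)).prod := by
  induction m with
  | zero =>
    intro K L _ _ e wd lc
    refine ⟨((Equiv.sumEmpty K (Fin 0)).symm.trans e).trans (Equiv.sumEmpty L (Fin 0)),
      fun j => wd (Sum.inl j), [], fun X v w => ?_⟩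
    have h : ∀ x : L ⊕ Fin 0, ∀ f : Fin 0 → Fin n → ℂ,
        Sum.elim v f x = v (Equiv.sumEmpty L (Fin 0) x) := by
      rintro (x | x) f
      · rfl
      · exact x.elim0
    simp [h]
  | succ m ih =>
    intro K L _ _ e wd lc
    let e₁ : Option (K ⊕ Fin m) ≃ Option (L ⊕ Fin m) :=
      (optionSumFin K m).trans (e.trans (optionSumFin L m).symm)
    obtain ⟨wd₁, tr₁, h₁⟩ := contract_one (n := n) e₁ (fun j => wd (optionSumFin K m j)) (lc 0)
    obtain ⟨e', wd', tr₂, h₂⟩ := ih (Equiv.removeNone e₁) wd₁ (fun k => lc k.succ)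
    refine ⟨e', wd', tr₂ ++ tr₁, fun X v w => ?_⟩
    rw [← (Fin.consEquiv (fun _ : Fin (m + 1) => Fin n)).sum_comp, Fintype.sum_prod_type_right]
    rw [List.map_append, List.prod_append, ← mul_assoc, ← h₂, Finset.sum_mul]
    refine Finset.sum_congr rfl fun I _ => ?_
    rw [← h₁]
    refine Finset.sum_congr rfl fun i _ => ?_
    rw [← (optionSumFin K m).prod_comp]
    refine Finset.prod_congr rfl fun j _ => ?_
    congr 1
    · rcases j with _ | k | k <;> simp [optionSumFin, Fin.consEquiv]
    · congr 1
      have he : e (optionSumFin K m j) = optionSumFin L m (e₁ j) := by simp [e₁]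
      rw [he]
      generalize e₁ j = j'
      rcases j' with _ | k | k <;> simp [optionSumFin, Fin.consEquiv]

/-! ### Padding by determinants -/

/-- The product of `k` determinants, as a multilinear form in `k * n` vectors. -/
noncomputable def detPow (k n : ℕ) :
    MultilinearMap ℂ (fun _ : Fin k × Fin n => Fin n → ℂ) ℂ where
  toFun u := ∏ i, det (of fun r => u (i, r))
  map_update_add' := by
    intro inst u q x y
    have e : inst = fun a b => instDecidableEqProd a b := Subsingleton.elim _ _
    subst e
    have hne : ∀ z, ∏ i ∈ Finset.univ.erase q.1, det (of fun r => Function.update u q z (i, r))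
        = ∏ i ∈ Finset.univ.erase q.1, det (of fun r => u (i, r)) := fun z =>
      Finset.prod_congr rfl fun i hi => by
        congr 2
        ext1 r
        exact Function.update_of_ne (fun h => Finset.ne_of_mem_erase hi (congrArg Prod.fst h)) _ _
    have heq : ∀ z, det (of fun r => Function.update u q z (q.1, r))
        = det (updateRow (of fun r => u (q.1, r)) q.2 z) := fun z => by
      congr 1
      ext r j
      by_cases hr : r = q.2
      · subst hr; simp
      · rw [of_apply, Function.update_of_ne (fun h => hr (congrArg Prod.snd h)),
          updateRow_ne hr, of_apply]
    simp only [← Finset.mul_prod_erase _ _ (Finset.mem_univ q.1), hne, heq, det_updateRow_add,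
      add_mul]
  map_update_smul' := by
    intro inst u q a x
    have e : inst = fun a b => instDecidableEqProd a b := Subsingleton.elim _ _
    subst e
    have hne : ∀ z, ∏ i ∈ Finset.univ.erase q.1, det (of fun r => Function.update u q z (i, r))
        = ∏ i ∈ Finset.univ.erase q.1, det (of fun r => u (i, r)) := fun z =>
      Finset.prod_congr rfl fun i hi => by
        congr 2
        ext1 r
        exact Function.update_of_ne (fun h => Finset.ne_of_mem_erase hi (congrArg Prod.fst h)) _ _
    have heq : ∀ z, det (of fun r => Function.update u q z (q.1, r))
        = det (updateRow (of fun r => u (q.1, r)) q.2 z) := fun z => by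
      congr 1
      ext r j
      by_cases hr : r = q.2
      · subst hr; simp
      · rw [of_apply, Function.update_of_ne (fun h => hr (congrArg Prod.snd h)),
          updateRow_ne hr, of_apply]
    simp only [← Finset.mul_prod_erase _ _ (Finset.mem_univ q.1), hne, heq, det_updateRow_smul,
      smul_eq_mul, mul_assoc]

lemma detPow_apply {k n : ℕ} (u : Fin k × Fin n → Fin n → ℂ) :
    detPow k n u = ∏ i, det (of fun r => u (i, r)) := rfl

lemma detPow_vecMul {k n : ℕ} (u : Fin k × Fin n → Fin n → ℂ)
    (g : SpecialLinearGroup (Fin n) ℂ) : detPow k n (fun q => u q ᵥ* g.val) = detPow k n u := by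
  simp only [detPow_apply]
  refine Finset.prod_congr rfl fun i _ => ?_
  have h : (of fun r => u (i, r) ᵥ* g.val) = (of fun r => u (i, r)) * g.val := by
    ext r j; rfl
  rw [h, det_mul, g.2, mul_one]

lemma detPow_mulVec {k n : ℕ} (u : Fin k × Fin n → Fin n → ℂ)
    (g : SpecialLinearGroup (Fin n) ℂ) : detPow k n (fun q => g.val *ᵥ u q) = detPow k n u := by
  have h := detPow_vecMul u g.transpose
  rw [← h]
  congr 1
  ext1 q
  exact (vecMul_transpose _ _).symm

/-- Product of the signs of `k` permutations. -/
noncomputable def signs {k n : ℕ} (τ : Fin k → Equiv.Perm (Fin n)) : ℂ :=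
  ∏ i, ((Equiv.Perm.sign (τ i) : ℤ) : ℂ)

/-- The permuted standard frames. -/
noncomputable def frames {k n : ℕ} (τ : Fin k → Equiv.Perm (Fin n)) (q : Fin k × Fin n) :
    Fin n → ℂ := Pi.single (τ q.1 q.2) 1

/-- Antisymmetrizing pairings with standard frames gives determinants. -/
lemma sum_signs {k n : ℕ} (x : Fin k × Fin n → Fin n → ℂ) :
    ∑ τ : Fin k → Equiv.Perm (Fin n), signs τ * ∏ q, frames τ q ⬝ᵥ x q = detPow k n x := by
  simp only [detPow_apply, signs, frames, Fintype.prod_prod_type, ← Finset.prod_mul_distrib,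
    single_one_dotProduct]
  have h : ∀ i, det (of fun r => x (i, r)) = ∑ τ : Equiv.Perm (Fin n),
      ((Equiv.Perm.sign τ : ℤ) : ℂ) * ∏ r, x (i, r) (τ r) := fun i => by
    rw [← det_transpose, det_apply']
    rfl
  simp only [h]
  rw [Finset.prod_univ_sum, Fintype.piFinset_univ]

lemma detPow_frames {k n : ℕ} (τ : Fin k → Equiv.Perm (Fin n)) :
    detPow k n (frames τ) = signs τ := by
  rw [detPow_apply, signs]
  refine Finset.prod_congr rfl fun i _ => ?_
  rw [← det_permutation (R := ℂ)]
  congr 1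
  ext r j
  simp [frames, Equiv.Perm.permMatrix, PEquiv.toMatrix_apply, Pi.single_apply, eq_comm]

lemma signs_mul_self {k n : ℕ} (τ : Fin k → Equiv.Perm (Fin n)) : signs τ * signs τ = 1 := by
  rw [signs, ← Finset.prod_mul_distrib]
  refine Finset.prod_eq_one fun i _ => ?_
  rw [← Int.cast_mul, ← Units.val_mul, Int.units_mul_self]
  simp

/-- The normalization constant by which antisymmetrization over frames multiplies a form padded
with determinants. -/
lemma sum_signs_detPow (k n : ℕ) :
    ∃ N : ℂ, N ≠ 0 ∧ ∑ τ : Fin k → Equiv.Perm (Fin n), signs τ * detPow k n (frames τ) = N := by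
  refine ⟨_, ?_, rfl⟩
  simp only [detPow_frames, signs_mul_self, Finset.sum_const, Finset.card_univ, nsmul_eq_mul,
    mul_one]
  exact_mod_cast Fintype.card_ne_zero

/-- Regrouping of slots placing the padding block among the covectors. -/
def shufRight (I A M Q : Type) : (I ⊕ (A ⊕ M)) ⊕ Q ≃ I ⊕ ((A ⊕ Q) ⊕ M) where
  toFun := Sum.elim (Sum.elim Sum.inl (Sum.elim (Sum.inr ∘ Sum.inl ∘ Sum.inl) (Sum.inr ∘ Sum.inr)))
    (Sum.inr ∘ Sum.inl ∘ Sum.inr)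
  invFun := Sum.elim (Sum.inl ∘ Sum.inl) (Sum.elim (Sum.elim (Sum.inl ∘ Sum.inr ∘ Sum.inl) Sum.inr)
    (Sum.inl ∘ Sum.inr ∘ Sum.inr))
  left_inv := by rintro ((i | a | m) | q) <;> rfl
  right_inv := by rintro (i | (a | q) | m) <;> rfl

/-- Regrouping of slots placing the padding block among the vectors. -/
def shufLeft (B M J Q : Type) : ((B ⊕ M) ⊕ J) ⊕ Q ≃ ((B ⊕ Q) ⊕ M) ⊕ J where
  toFun := Sum.elim (Sum.elim (Sum.elim (Sum.inl ∘ Sum.inl ∘ Sum.inl) (Sum.inl ∘ Sum.inr)) Sum.inr)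
    (Sum.inl ∘ Sum.inl ∘ Sum.inr)
  invFun := Sum.elim (Sum.elim (Sum.elim (Sum.inl ∘ Sum.inl ∘ Sum.inl) Sum.inr)
    (Sum.inl ∘ Sum.inl ∘ Sum.inr)) (Sum.inl ∘ Sum.inr)
  left_inv := by rintro (((b | m) | j) | q) <;> rfl
  right_inv := by rintro (((b | q) | m) | j) <;> rfl

/-- The product of two multilinear forms in disjoint sets of arguments. -/
noncomputable def mulForms {P Q E : Type} [Fintype P] [Fintype Q] [AddCommGroup E] [Module ℂ E]
    (S : MultilinearMap ℂ (fun _ : P => E) ℂ) (T : MultilinearMap ℂ (fun _ : Q => E) ℂ) :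
    MultilinearMap ℂ (fun _ : P ⊕ Q => E) ℂ :=
  (LinearMap.mul' ℂ ℂ).compMultilinearMap (MultilinearMap.domCoprod S T)

lemma mulForms_apply {P Q E : Type} [Fintype P] [Fintype Q] [AddCommGroup E] [Module ℂ E]
    (S : MultilinearMap ℂ (fun _ : P => E) ℂ) (T : MultilinearMap ℂ (fun _ : Q => E) ℂ)
    (x : P ⊕ Q → E) :
    mulForms S T x = S (fun i => x (Sum.inl i)) * T (fun i => x (Sum.inr i)) := by
  simp [mulForms]

/-! ### The generators -/

/-- The generating invariants: traces, pairings, volume forms and dual volume forms. -/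
def gens (n a b c : ℕ) : Set (InvConfig n a b c → ℂ) :=
  ({h : InvConfig n a b c → ℂ | ∃ word : List (Fin c × Bool),
            h = fun p => Matrix.trace (wordProd p.2.2 word).val} ∪
         {h : InvConfig n a b c → ℂ |
            ∃ (word : List (Fin c × Bool)) (j : Fin a) (i : Fin b),
              h = fun p => p.1 j ((wordProd p.2.2 word).val.mulVec (p.2.1 i))} ∪
         {h : InvConfig n a b c → ℂ |
            ∃ (words : Fin n → List (Fin c × Bool)) (idx : Fin n → Fin b),
              h = fun p => Matrix.det (Matrix.of fun k =>
                (wordProd p.2.2 (words k)).val.mulVec (p.2.1 (idx k)))} ∪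
         {h : InvConfig n a b c → ℂ |
            ∃ (words : Fin n → List (Fin c × Bool)) (jdx : Fin n → Fin a),
              h = fun p => Matrix.det (Matrix.of fun k j =>
                p.1 (jdx k) ((wordProd p.2.2 (words k)).val.mulVec
                  (Pi.single j 1)))})

/-- The coefficient vector of the `j`-th covector. -/
def cov {n a b c : ℕ} (p : InvConfig n a b c) (j : Fin a) : Fin n → ℂ :=
  fun i => p.1 j (Pi.single i 1)

lemma cov_dotProduct {n a b c : ℕ} (p : InvConfig n a b c) (j : Fin a) (x : Fin n → ℂ) :
    cov p j ⬝ᵥ x = p.1 j x := by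
  rw [LinearMap.pi_apply_eq_sum_univ (p.1 j) x]
  simp only [dotProduct, cov, smul_eq_mul, mul_comm]
  refine Finset.sum_congr rfl fun i _ => ?_
  congr 2
  ext k
  simp [Pi.single_apply, eq_comm]

section
variable {n a b c : ℕ}

lemma trace_mem (t : List (Fin c × Bool)) :
    (fun p : InvConfig n a b c => trace (wordMat p.2.2 t)) ∈ Algebra.adjoin ℂ (gens n a b c) :=
  Algebra.subset_adjoin (Or.inl (Or.inl (Or.inl ⟨t, rfl⟩)))

lemma pairing_mem (t : List (Fin c × Bool)) (j : Fin a) (i : Fin b) :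
    (fun p : InvConfig n a b c => cov p j ⬝ᵥ (wordMat p.2.2 t *ᵥ p.2.1 i)) ∈
      Algebra.adjoin ℂ (gens n a b c) :=
  Algebra.subset_adjoin (Or.inl (Or.inl (Or.inr ⟨t, j, i, by
    ext p; exact cov_dotProduct _ _ _⟩)))

lemma vol_mem {k : ℕ} (t : Fin k × Fin n → List (Fin c × Bool)) (idx : Fin k × Fin n → Fin b) :
    (fun p : InvConfig n a b c => detPow k n fun q => wordMat p.2.2 (t q) *ᵥ p.2.1 (idx q)) ∈
      Algebra.adjoin ℂ (gens n a b c) := by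
  have h : (fun p : InvConfig n a b c => detPow k n fun q => wordMat p.2.2 (t q) *ᵥ p.2.1 (idx q))
      = ∏ i : Fin k, fun p : InvConfig n a b c =>
        det (of fun r => wordMat p.2.2 (t (i, r)) *ᵥ p.2.1 (idx (i, r))) := by
    ext p
    rw [detPow_apply, Finset.prod_apply]
  rw [h]
  exact prod_mem fun i _ => Algebra.subset_adjoin (Or.inl (Or.inr
    ⟨fun r => t (i, r), fun r => idx (i, r), rfl⟩))

lemma dualVol_mem {k : ℕ} (t : Fin k × Fin n → List (Fin c × Bool))
    (jdx : Fin k × Fin n → Fin a) :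
    (fun p : InvConfig n a b c => detPow k n fun q => cov p (jdx q) ᵥ* wordMat p.2.2 (t q)) ∈
      Algebra.adjoin ℂ (gens n a b c) := by
  have h : (fun p : InvConfig n a b c => detPow k n fun q => cov p (jdx q) ᵥ* wordMat p.2.2 (t q))
      = ∏ i : Fin k, fun p : InvConfig n a b c =>
        det (of fun r => cov p (jdx (i, r)) ᵥ* wordMat p.2.2 (t (i, r))) := by
    ext p
    rw [detPow_apply, Finset.prod_apply]
  rw [h]
  refine prod_mem fun i _ => Algebra.subset_adjoin (Or.inr
    ⟨fun r => t (i, r), fun r => jdx (i, r), ?_⟩)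
  ext p
  congr 1
  ext r j
  rw [of_apply, of_apply, ← cov_dotProduct, dotProduct_mulVec]
  simp [wordMat]

lemma traces_mem (tr : List (List (Fin c × Bool))) :
    (fun p : InvConfig n a b c => (tr.map fun t => trace (wordMat p.2.2 t)).prod) ∈
      Algebra.adjoin ℂ (gens n a b c) := by
  induction tr with
  | nil => exact one_mem _
  | cons t tr ih =>
    simp only [List.map_cons, List.prod_cons]
    exact mul_mem (trace_mem t) ih

end

/-! ### Multilinear invariants of vectors and covectors -/

/-- Invariance of a multilinear form in vectors (left block) and covectors (right block). -/
def SLInvariant {ι κ : Type} {n : ℕ}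
    (Φ : MultilinearMap ℂ (fun _ : ι ⊕ κ => Fin n → ℂ) ℂ) : Prop :=
  ∀ (g : SpecialLinearGroup (Fin n) ℂ) v w,
    Φ (Sum.elim (fun k => g.val *ᵥ v k) (fun k => w k ᵥ* (g⁻¹).val)) = Φ (Sum.elim v w)

/-- The value of `Φ` after contracting the matrix slots: the `k`-th matrix slot is the sum over
`i` of the vectors `X eᵢ` paired with the coordinate covectors `eᵢ`. -/
noncomputable def contracted {n a b c m : ℕ} {A B : Type} (la : A → Fin a) (lb : B → Fin b)
    (lc : Fin m → Fin c) (Φ : MultilinearMap ℂ (fun _ : (B ⊕ Fin m) ⊕ (A ⊕ Fin m) => Fin n → ℂ) ℂ)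
    (p : InvConfig n a b c) : ℂ :=
  ∑ I : Fin m → Fin n, Φ (Sum.elim
    (Sum.elim (fun i => p.2.1 (lb i)) (fun k => (p.2.2 (lc k)).val *ᵥ Pi.single (I k) 1))
    (Sum.elim (fun j => cov p (la j)) (fun k => Pi.single (I k) 1)))

/-- The scalar matrices `ζ • 1`, with `ζ` an `n`-th root of unity, force the numbers of vectors and
covectors of a nonzero invariant form to be congruent modulo `n`. -/
lemma card_modEq {ι κ : Type} [Fintype ι] [Fintype κ] {n : ℕ} (hn : 1 ≤ n)
    (Φ : MultilinearMap ℂ (fun _ : ι ⊕ κ => Fin n → ℂ) ℂ) (h : SLInvariant Φ)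
    (v : ι → Fin n → ℂ) (w : κ → Fin n → ℂ) (h0 : Φ (Sum.elim v w) ≠ 0) :
    Fintype.card ι ≡ Fintype.card κ [MOD n] := by
  have hn0 : n ≠ 0 := by lia
  have hζ := Complex.isPrimitiveRoot_exp n hn0
  generalize Complex.exp (2 * Real.pi * Complex.I / n) = ζ at hζ
  have hζ0 : ζ ≠ 0 := hζ.ne_zero hn0
  have hdet : ∀ z : ℂ, z ^ n = 1 → det (z • (1 : Matrix (Fin n) (Fin n) ℂ)) = 1 := fun z hz => by
    rw [det_smul, det_one, mul_one, Fintype.card_fin, hz]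
  let g : SpecialLinearGroup (Fin n) ℂ := ⟨ζ • 1, hdet _ hζ.pow_eq_one⟩
  let g' : SpecialLinearGroup (Fin n) ℂ := ⟨ζ⁻¹ • 1, hdet _ (by rw [inv_pow, hζ.pow_eq_one, inv_one])⟩
  have hg : g⁻¹ = g' := by
    apply inv_eq_of_mul_eq_one_right
    apply Subtype.ext
    change (ζ • (1 : Matrix (Fin n) (Fin n) ℂ)) * (ζ⁻¹ • 1) = 1
    rw [smul_mul_smul_comm, mul_inv_cancel₀ hζ0, one_smul, one_mul]
  have h1 := h g v w
  have h2 : (Sum.elim (fun k => g.val *ᵥ v k) (fun k => w k ᵥ* (g⁻¹).val) : ι ⊕ κ → Fin n → ℂ)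
      = fun i => (Sum.elim (fun _ => ζ) (fun _ => ζ⁻¹) i : ℂ) • Sum.elim v w i := by
    funext i
    rcases i with i | i
    · simp [g, smul_mulVec]
    · simp [hg, g', vecMul_smul]
  rw [h2, Φ.map_smul_univ] at h1
  simp only [Fintype.prod_sum_type, Sum.elim_inl, Sum.elim_inr, Finset.prod_const,
    Finset.card_univ, smul_eq_mul] at h1
  have h3 := mul_right_cancel₀ h0 (h1.trans (one_mul _).symm)
  rw [inv_pow] at h3
  have h4 : ζ ^ Fintype.card ι = ζ ^ Fintype.card κ := by
    rw [← mul_inv_eq_one₀ (pow_ne_zero _ hζ0)]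
    exact h3
  rw [Nat.modEq_iff_dvd, ← hζ.zpow_eq_one_iff_dvd, zpow_sub₀ hζ0, zpow_natCast, zpow_natCast, ← h4,
    div_self (pow_ne_zero _ hζ0)]

/-- With `k * n` more vectors than covectors, `k` determinants in new covector slots restore the
balance; antisymmetrizing these slots produces `k` volume forms. -/
lemma contracted_mem_of_vectors {n a b c m k : ℕ} (hn : 1 ≤ n) {A B : Type} [Fintype A]
    [Fintype B] [DecidableEq A] [DecidableEq B] (la : A → Fin a) (lb : B → Fin b)
    (lc : Fin m → Fin c) (Φ : MultilinearMap ℂ (fun _ : (B ⊕ Fin m) ⊕ (A ⊕ Fin m) => Fin n → ℂ) ℂ)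
    (h : SLInvariant Φ) (hcard : Fintype.card B = Fintype.card A + k * n) :
    contracted la lb lc Φ ∈ Algebra.adjoin ℂ (gens n a b c) := by
  let Ψ : MultilinearMap ℂ
      (fun _ : (B ⊕ Fin m) ⊕ ((A ⊕ (Fin k × Fin n)) ⊕ Fin m) => Fin n → ℂ) ℂ :=
    (mulForms Φ (detPow k n)).domDomCongr (shufRight (B ⊕ Fin m) A (Fin m) (Fin k × Fin n))
  have hΨ : ∀ v w u z, Ψ (Sum.elim v (Sum.elim (Sum.elim w u) z))
      = Φ (Sum.elim v (Sum.elim w z)) * detPow k n u := fun v w u z => by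
    simp only [Ψ, MultilinearMap.domDomCongr_apply, mulForms_apply]
    congr 2
    funext i
    rcases i with i | i | i <;> rfl
  have hΨinv : ∀ (g : SpecialLinearGroup (Fin n) ℂ) v w,
      Ψ (Sum.elim (fun k => g.val *ᵥ v k) (fun k => w k ᵥ* (g⁻¹).val)) = Ψ (Sum.elim v w) := by
    intro g v w
    obtain ⟨w₁, u, z, rfl⟩ : ∃ w₁ u z, w = Sum.elim (Sum.elim w₁ u) z :=
      ⟨fun i => w (Sum.inl (Sum.inl i)), fun i => w (Sum.inl (Sum.inr i)),
        fun i => w (Sum.inr i), by funext i; rcases i with (i | i) | i <;> rfl⟩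
    have h1 : (fun i => (Sum.elim (Sum.elim w₁ u) z i : Fin n → ℂ) ᵥ* (g⁻¹).val)
        = Sum.elim (Sum.elim (fun i => w₁ i ᵥ* (g⁻¹).val) (fun i => u i ᵥ* (g⁻¹).val))
          (fun i => z i ᵥ* (g⁻¹).val) := by
      funext i; rcases i with (i | i) | i <;> rfl
    rw [h1, hΨ, hΨ, detPow_vecMul, ← h g v (Sum.elim w₁ z)]
    congr 3
    funext i; rcases i with i | i <;> rfl
  have e : (A ⊕ (Fin k × Fin n)) ⊕ Fin m ≃ B ⊕ Fin m := Fintype.equivOfCardEq (by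
    simp [hcard])
  obtain ⟨cf, hcf⟩ := schurWeyl hn e Ψ hΨinv
  obtain ⟨N, hN0, hN⟩ := sum_signs_detPow k n
  have hΦ : ∀ v w z, Φ (Sum.elim v (Sum.elim w z)) = N⁻¹ * ∑ π, cf π *
      ∑ τ : Fin k → Equiv.Perm (Fin n), signs τ *
        ∏ j, (Sum.elim (Sum.elim w (frames τ)) z j : Fin n → ℂ) ⬝ᵥ v ((e.trans π) j) := by
    intro v w z
    rw [eq_inv_mul_iff_mul_eq₀ hN0, ← hN, Finset.sum_mul]
    simp only [Finset.mul_sum]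
    rw [Finset.sum_comm]
    refine Finset.sum_congr rfl fun τ _ => ?_
    rw [mul_assoc, mul_comm (detPow k n _), ← hΨ, hcf, Finset.mul_sum]
    refine Finset.sum_congr rfl fun π _ => ?_
    ring
  have hc := fun π : Equiv.Perm (B ⊕ Fin m) => contract (n := n) m (e.trans π) (fun _ => []) lc
  choose e' wd' tr hc using hc
  have hfun : contracted la lb lc Φ = N⁻¹ • ∑ π, cf π •
      ((∏ j : A, fun p : InvConfig n a b c => cov p (la j) ⬝ᵥ
          (wordMat p.2.2 (wd' π (Sum.inl j)) *ᵥ p.2.1 (lb (e' π (Sum.inl j))))) *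
        (fun p : InvConfig n a b c => detPow k n fun q =>
          wordMat p.2.2 (wd' π (Sum.inr q)) *ᵥ p.2.1 (lb (e' π (Sum.inr q)))) *
        fun p : InvConfig n a b c => ((tr π).map fun t => trace (wordMat p.2.2 t)).prod) := by
    ext p
    simp only [contracted, hΦ, Pi.smul_apply, Finset.sum_apply, Pi.mul_apply, Finset.prod_apply,
      smul_eq_mul]
    rw [← Finset.mul_sum, Finset.sum_comm]
    congr 1
    refine Finset.sum_congr rfl fun π _ => ?_
    rw [← Finset.mul_sum, Finset.sum_comm]
    congr 1
    rw [← sum_signs, Finset.mul_sum, Finset.sum_mul]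
    refine Finset.sum_congr rfl fun τ _ => ?_
    rw [← Finset.mul_sum]
    have h1 := hc π p.2.2 (fun i => p.2.1 (lb i)) (Sum.elim (fun j => cov p (la j)) (frames τ))
    simp only [wordMat_nil, one_mulVec] at h1
    rw [h1, Fintype.prod_sum_type]
    simp only [Sum.elim_inl, Sum.elim_inr]
    ring
  rw [hfun]
  refine Subalgebra.smul_mem _ (sum_mem fun π _ => Subalgebra.smul_mem _ (mul_mem (mul_mem
    (prod_mem fun j _ => pairing_mem _ _ _) (vol_mem _ _)) (traces_mem _)) _) _

/-- With `k * n` more covectors than vectors, `k` determinants in new vector slots restore the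
balance; antisymmetrizing these slots produces `k` dual volume forms. -/
lemma contracted_mem_of_covectors {n a b c m k : ℕ} (hn : 1 ≤ n) {A B : Type} [Fintype A]
    [Fintype B] [DecidableEq A] [DecidableEq B] (la : A → Fin a) (lb : B → Fin b)
    (lc : Fin m → Fin c) (Φ : MultilinearMap ℂ (fun _ : (B ⊕ Fin m) ⊕ (A ⊕ Fin m) => Fin n → ℂ) ℂ)
    (h : SLInvariant Φ) (hcard : Fintype.card A = Fintype.card B + k * n) :
    contracted la lb lc Φ ∈ Algebra.adjoin ℂ (gens n a b c) := by
  let Ψ : MultilinearMap ℂ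
      (fun _ : ((B ⊕ (Fin k × Fin n)) ⊕ Fin m) ⊕ (A ⊕ Fin m) => Fin n → ℂ) ℂ :=
    (mulForms Φ (detPow k n)).domDomCongr (shufLeft B (Fin m) (A ⊕ Fin m) (Fin k × Fin n))
  have hΨ : ∀ v w u z, Ψ (Sum.elim (Sum.elim (Sum.elim v u) z) w)
      = Φ (Sum.elim (Sum.elim v z) w) * detPow k n u := fun v w u z => by
    simp only [Ψ, MultilinearMap.domDomCongr_apply, mulForms_apply]
    congr 2
    funext i
    rcases i with (i | i) | i <;> rfl
  have hΨinv : ∀ (g : SpecialLinearGroup (Fin n) ℂ) v w,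
      Ψ (Sum.elim (fun k => g.val *ᵥ v k) (fun k => w k ᵥ* (g⁻¹).val)) = Ψ (Sum.elim v w) := by
    intro g v w
    obtain ⟨v₁, u, z, rfl⟩ : ∃ v₁ u z, v = Sum.elim (Sum.elim v₁ u) z :=
      ⟨fun i => v (Sum.inl (Sum.inl i)), fun i => v (Sum.inl (Sum.inr i)),
        fun i => v (Sum.inr i), by funext i; rcases i with (i | i) | i <;> rfl⟩
    have h1 : (fun i => g.val *ᵥ (Sum.elim (Sum.elim v₁ u) z i : Fin n → ℂ))
        = Sum.elim (Sum.elim (fun i => g.val *ᵥ v₁ i) (fun i => g.val *ᵥ u i))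
          (fun i => g.val *ᵥ z i) := by
      funext i; rcases i with (i | i) | i <;> rfl
    rw [h1, hΨ, hΨ, detPow_mulVec, ← h g (Sum.elim v₁ z) w]
    congr 3
    funext i; rcases i with i | i <;> rfl
  have e : A ⊕ Fin m ≃ (B ⊕ (Fin k × Fin n)) ⊕ Fin m := Fintype.equivOfCardEq (by
    simp [hcard])
  obtain ⟨cf, hcf⟩ := schurWeyl hn e Ψ hΨinv
  obtain ⟨N, hN0, hN⟩ := sum_signs_detPow k n
  have hΦ : ∀ v w z, Φ (Sum.elim (Sum.elim v z) w) = N⁻¹ * ∑ π, cf π *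
      ∑ τ : Fin k → Equiv.Perm (Fin n), signs τ *
        ∏ j, w j ⬝ᵥ (Sum.elim (Sum.elim v (frames τ)) z ((e.trans π) j) : Fin n → ℂ) := by
    intro v w z
    rw [eq_inv_mul_iff_mul_eq₀ hN0, ← hN, Finset.sum_mul]
    simp only [Finset.mul_sum]
    rw [Finset.sum_comm]
    refine Finset.sum_congr rfl fun τ _ => ?_
    rw [mul_assoc, mul_comm (detPow k n _), ← hΨ, hcf, Finset.mul_sum]
    refine Finset.sum_congr rfl fun π _ => ?_
    ring
  have hc := fun π : Equiv.Perm ((B ⊕ (Fin k × Fin n)) ⊕ Fin m) =>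
    contract (n := n) m (e.trans π) (fun _ => []) lc
  choose e' wd' tr hc using hc
  let s := fun π i => (e' π).symm i
  have hfun : contracted la lb lc Φ = N⁻¹ • ∑ π, cf π •
      ((∏ i : B, fun p : InvConfig n a b c => cov p (la (s π (Sum.inl i))) ⬝ᵥ
          (wordMat p.2.2 (wd' π (s π (Sum.inl i))) *ᵥ p.2.1 (lb i))) *
        (fun p : InvConfig n a b c => detPow k n fun q =>
          cov p (la (s π (Sum.inr q))) ᵥ* wordMat p.2.2 (wd' π (s π (Sum.inr q)))) *
        fun p : InvConfig n a b c => ((tr π).map fun t => trace (wordMat p.2.2 t)).prod) := by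
    ext p
    simp only [contracted, hΦ, Pi.smul_apply, Finset.sum_apply, Pi.mul_apply, Finset.prod_apply,
      smul_eq_mul]
    rw [← Finset.mul_sum, Finset.sum_comm]
    congr 1
    refine Finset.sum_congr rfl fun π _ => ?_
    rw [← Finset.mul_sum, Finset.sum_comm]
    congr 1
    rw [← sum_signs, Finset.mul_sum, Finset.sum_mul]
    refine Finset.sum_congr rfl fun τ _ => ?_
    rw [← Finset.mul_sum]
    have h1 := hc π p.2.2 (Sum.elim (fun i => p.2.1 (lb i)) (frames τ)) (fun j => cov p (la j))
    simp only [wordMat_nil, one_mulVec] at h1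
    rw [h1, ← (e' π).symm.prod_comp, Fintype.prod_sum_type]
    simp only [Equiv.apply_symm_apply, Sum.elim_inl, Sum.elim_inr, dotProduct_mulVec _ _ (frames _ _),
      dotProduct_comm _ (frames _ _), s]
    ring
  rw [hfun]
  refine Subalgebra.smul_mem _ (sum_mem fun π _ => Subalgebra.smul_mem _ (mul_mem (mul_mem
    (prod_mem fun j _ => pairing_mem _ _ _) (dualVol_mem _ _)) (traces_mem _)) _) _

/-- The contraction of an invariant multilinear form lies in the algebra of the generators. -/
lemma contracted_mem {n a b c m : ℕ} (hn : 1 ≤ n) {A B : Type} [Fintype A]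
    [Fintype B] [DecidableEq A] [DecidableEq B] (la : A → Fin a) (lb : B → Fin b)
    (lc : Fin m → Fin c) (Φ : MultilinearMap ℂ (fun _ : (B ⊕ Fin m) ⊕ (A ⊕ Fin m) => Fin n → ℂ) ℂ)
    (h : SLInvariant Φ) : contracted la lb lc Φ ∈ Algebra.adjoin ℂ (gens n a b c) := by
  by_cases h0 : ∀ v w, Φ (Sum.elim v w) = 0
  · have : contracted la lb lc Φ = 0 := by
      ext p
      simp [contracted, h0]
    rw [this]
    exact zero_mem _
  · push Not at h0
    obtain ⟨v, w, h0⟩ := h0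
    have h1 := card_modEq hn Φ h v w h0
    simp only [Fintype.card_sum] at h1
    have h2 : Fintype.card B ≡ Fintype.card A [MOD n] := Nat.ModEq.add_right_cancel' _ h1
    rcases le_total (Fintype.card A) (Fintype.card B) with hle | hle
    · obtain ⟨k, hk⟩ := (Nat.modEq_iff_dvd' hle).1 h2.symm
      exact contracted_mem_of_vectors (k := k) hn la lb lc Φ h (by rw [mul_comm, ← hk]; lia)
    · obtain ⟨k, hk⟩ := (Nat.modEq_iff_dvd' hle).1 h2
      exact contracted_mem_of_covectors (k := k) hn la lb lc Φ h (by rw [mul_comm, ← hk]; lia)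

/-! ### Multilinear invariants of vectors, covectors and matrices -/

/-- The linear space containing the configurations: covectors (as coefficient vectors), vectors and
arbitrary matrices. -/
abbrev LinConfig (n a b c : ℕ) :=
  (Fin a → Fin n → ℂ) × (Fin b → Fin n → ℂ) × (Fin c → Matrix (Fin n) (Fin n) ℂ)

section
variable {n a b c : ℕ}

/-- The linear action of `SL(n,ℂ)` on `LinConfig`. -/
noncomputable def act (g : SpecialLinearGroup (Fin n) ℂ) :
    LinConfig n a b c →ₗ[ℂ] LinConfig n a b c where
  toFun y := (fun j => y.1 j ᵥ* (g⁻¹).val, fun i => g.val *ᵥ y.2.1 i,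
    fun k => g.val * y.2.2 k * (g⁻¹).val)
  map_add' x y := by
    refine Prod.ext ?_ (Prod.ext ?_ ?_) <;> funext i
    · simp [add_vecMul]
    · simp [mulVec_add]
    · simp [mul_add, add_mul]
  map_smul' t y := by
    refine Prod.ext ?_ (Prod.ext ?_ ?_) <;> funext i
    · simp [smul_vecMul]
    · simp [mulVec_smul]
    · simp

/-- The tautological embedding of configurations. -/
def emb (p : InvConfig n a b c) : LinConfig n a b c :=
  (cov p, p.2.1, fun k => (p.2.2 k).val)

/-- Inclusion of the `j`-th covector. -/
noncomputable def inA (j : Fin a) : (Fin n → ℂ) →ₗ[ℂ] LinConfig n a b c :=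
  LinearMap.inl ℂ _ _ ∘ₗ LinearMap.single ℂ (fun _ : Fin a => Fin n → ℂ) j

/-- Inclusion of the `i`-th vector. -/
noncomputable def inB (i : Fin b) : (Fin n → ℂ) →ₗ[ℂ] LinConfig n a b c :=
  LinearMap.inr ℂ _ _ ∘ₗ LinearMap.inl ℂ _ _ ∘ₗ LinearMap.single ℂ (fun _ : Fin b => Fin n → ℂ) i

/-- Inclusion of the `k`-th matrix. -/
noncomputable def inC (k : Fin c) : Matrix (Fin n) (Fin n) ℂ →ₗ[ℂ] LinConfig n a b c :=
  LinearMap.inr ℂ _ _ ∘ₗ LinearMap.inr ℂ _ _ ∘ₗ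
    LinearMap.single ℂ (fun _ : Fin c => Matrix (Fin n) (Fin n) ℂ) k

lemma act_inA (g : SpecialLinearGroup (Fin n) ℂ) (j : Fin a) (w : Fin n → ℂ) :
    act g (inA j w : LinConfig n a b c) = inA j (w ᵥ* (g⁻¹).val) := by
  refine Prod.ext ?_ (Prod.ext ?_ ?_) <;> funext i
  · change Pi.single (M := fun _ => Fin n → ℂ) j w i ᵥ* (g⁻¹).val
      = Pi.single (M := fun _ => Fin n → ℂ) j (w ᵥ* (g⁻¹).val) i
    by_cases h : i = j
    · subst h; simp
    · simp [h]
  · exact mulVec_zero g.val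
  · change g.val * 0 * (g⁻¹).val = 0
    simp

lemma act_inB (g : SpecialLinearGroup (Fin n) ℂ) (j : Fin b) (v : Fin n → ℂ) :
    act g (inB j v : LinConfig n a b c) = inB j (g.val *ᵥ v) := by
  refine Prod.ext ?_ (Prod.ext ?_ ?_) <;> funext i
  · exact zero_vecMul (g⁻¹).val
  · change g.val *ᵥ Pi.single (M := fun _ => Fin n → ℂ) j v i
      = Pi.single (M := fun _ => Fin n → ℂ) j (g.val *ᵥ v) i
    by_cases h : i = j
    · subst h; simp
    · simp [h]
  · change g.val * 0 * (g⁻¹).val = 0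
    simp

lemma act_inC (g : SpecialLinearGroup (Fin n) ℂ) (j : Fin c) (X : Matrix (Fin n) (Fin n) ℂ) :
    act g (inC j X : LinConfig n a b c) = inC j (g.val * X * (g⁻¹).val) := by
  refine Prod.ext ?_ (Prod.ext ?_ ?_) <;> funext i
  · exact zero_vecMul (g⁻¹).val
  · exact mulVec_zero g.val
  · change g.val * Pi.single (M := fun _ => Matrix (Fin n) (Fin n) ℂ) j X i * (g⁻¹).val
      = Pi.single (M := fun _ => Matrix (Fin n) (Fin n) ℂ) j (g.val * X * (g⁻¹).val) i
    by_cases h : i = j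
    · subst h; simp
    · simp [h]

/-- One of the `a + b + c` components of a configuration. -/
noncomputable def part (y : LinConfig n a b c) : Fin a ⊕ (Fin b ⊕ Fin c) → LinConfig n a b c :=
  Sum.elim (fun j => inA j (y.1 j)) (Sum.elim (fun i => inB i (y.2.1 i)) (fun k => inC k (y.2.2 k)))

lemma sum_part (y : LinConfig n a b c) : ∑ t, part y t = y := by
  rw [Fintype.sum_sum_type, Fintype.sum_sum_type]
  have h1 : ∑ j, part y (Sum.inl j) = (y.1, 0, 0) := by
    simp only [part, Sum.elim_inl, inA, LinearMap.comp_apply]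
    rw [← map_sum]
    simp only [LinearMap.coe_single, Finset.univ_sum_single]
    rfl
  have h2 : ∑ j, part y (Sum.inr (Sum.inl j)) = (0, y.2.1, 0) := by
    simp only [part, Sum.elim_inl, Sum.elim_inr, inB, LinearMap.comp_apply]
    rw [← map_sum, ← map_sum]
    simp [LinearMap.coe_single, Finset.univ_sum_single]
  have h3 : ∑ j, part y (Sum.inr (Sum.inr j)) = (0, 0, y.2.2) := by
    simp only [part, Sum.elim_inr, inC, LinearMap.comp_apply]
    rw [← map_sum, ← map_sum]
    simp [LinearMap.coe_single, Finset.univ_sum_single]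
  rw [h1, h2, h3]
  refine Prod.ext ?_ (Prod.ext ?_ ?_) <;> simp

section slots
variable {A B : Type} {m : ℕ} (la : A → Fin a) (lb : B → Fin b) (lc : Fin m → Fin c)

/-- Filling the slots of a multilinear form on `LinConfig` with vectors and covectors; a matrix
slot receives a rank one matrix. -/
noncomputable def fill (u : (B ⊕ Fin m) ⊕ (A ⊕ Fin m) → Fin n → ℂ) :
    A ⊕ (B ⊕ Fin m) → LinConfig n a b c :=
  Sum.elim (fun j => inA (la j) (u (Sum.inr (Sum.inl j))))
    (Sum.elim (fun i => inB (lb i) (u (Sum.inl (Sum.inl i))))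
      (fun k => inC (lc k) (vecMulVec (u (Sum.inl (Sum.inr k))) (u (Sum.inr (Sum.inr k))))))

/-- Changing one vector or covector changes a single slot of `fill`, linearly. -/
lemma fill_update [DecidableEq A] [DecidableEq B]
    (u : (B ⊕ Fin m) ⊕ (A ⊕ Fin m) → Fin n → ℂ) (i : (B ⊕ Fin m) ⊕ (A ⊕ Fin m)) :
    ∃ (q : A ⊕ (B ⊕ Fin m)) (ℓ : (Fin n → ℂ) →ₗ[ℂ] LinConfig n a b c), ∀ x,
      fill la lb lc (Function.update u i x) = Function.update (fill la lb lc u) q (ℓ x) := by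
  rcases i with (i | k) | (j | k)
  · refine ⟨Sum.inr (Sum.inl i), inB (lb i), fun x => ?_⟩
    funext q
    rcases q with q | q | q
    · simp [fill]
    · by_cases hq : q = i
      · subst hq; simp [fill]
      · simp [fill, Function.update_of_ne, hq]
    · simp [fill]
  · refine ⟨Sum.inr (Sum.inr k),
      inC (lc k) ∘ₗ (vecMulVecBilin ℂ ℂ).flip (u (Sum.inr (Sum.inr k))), fun x => ?_⟩
    funext q
    rcases q with q | q | q
    · simp [fill]
    · simp [fill]
    · by_cases hq : q = k
      · subst hq; simp [fill]
      · simp [fill, Function.update_of_ne, hq]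
  · refine ⟨Sum.inl j, inA (la j), fun x => ?_⟩
    funext q
    rcases q with q | q | q
    · by_cases hq : q = j
      · subst hq; simp [fill]
      · simp [fill, Function.update_of_ne, hq]
    · simp [fill]
    · simp [fill]
  · refine ⟨Sum.inr (Sum.inr k),
      inC (lc k) ∘ₗ vecMulVecBilin ℂ ℂ (u (Sum.inl (Sum.inr k))), fun x => ?_⟩
    funext q
    rcases q with q | q | q
    · simp [fill]
    · simp [fill]
    · by_cases hq : q = k
      · subst hq; simp [fill]
      · simp [fill, Function.update_of_ne, hq]

/-- A multilinear form on `LinConfig`, restricted to the given components and to rank one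
matrices, as a multilinear form in vectors and covectors. -/
noncomputable def onVectors (T : MultilinearMap ℂ (fun _ : A ⊕ (B ⊕ Fin m) => LinConfig n a b c) ℂ) :
    MultilinearMap ℂ (fun _ : (B ⊕ Fin m) ⊕ (A ⊕ Fin m) => Fin n → ℂ) ℂ where
  toFun u := T (fill la lb lc u)
  map_update_add' := by
    classical
    intro inst u i x y
    have e : inst = fun a b => Classical.propDecidable (a = b) := Subsingleton.elim _ _
    subst e
    obtain ⟨q, ℓ, h⟩ := fill_update la lb lc u i
    have h' : ∀ x, fill la lb lc (@Function.update _ _ (fun a b => Classical.propDecidable (a = b))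
        u i x) = Function.update (fill la lb lc u) q (ℓ x) := fun x => by
      rw [← h]; congr!
    simp only [h', map_add, T.map_update_add]
  map_update_smul' := by
    classical
    intro inst u i t x
    have e : inst = fun a b => Classical.propDecidable (a = b) := Subsingleton.elim _ _
    subst e
    obtain ⟨q, ℓ, h⟩ := fill_update la lb lc u i
    have h' : ∀ x, fill la lb lc (@Function.update _ _ (fun a b => Classical.propDecidable (a = b))
        u i x) = Function.update (fill la lb lc u) q (ℓ x) := fun x => by
      rw [← h]; congr!
    simp only [h', map_smul, T.map_update_smul]

lemma onVectors_apply (T : MultilinearMap ℂ (fun _ : A ⊕ (B ⊕ Fin m) => LinConfig n a b c) ℂ)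
    (u : (B ⊕ Fin m) ⊕ (A ⊕ Fin m) → Fin n → ℂ) :
    onVectors la lb lc T u = T (fill la lb lc u) := rfl

lemma sum_vecMulVec (X : Matrix (Fin n) (Fin n) ℂ) :
    ∑ i, vecMulVec (X *ᵥ Pi.single i 1) (Pi.single i 1) = X := by
  ext r s
  simp [Matrix.sum_apply, vecMulVec_apply, Pi.single_apply]

/-- The case where every slot of an invariant form receives a prescribed component of the
configuration: matrices are sums of rank one matrices, so the value is a contraction. -/
lemma labelled_mem (hn : 1 ≤ n) [Fintype A] [Fintype B] [DecidableEq A] [DecidableEq B]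
    (T : MultilinearMap ℂ (fun _ : A ⊕ (B ⊕ Fin m) => LinConfig n a b c) ℂ)
    (h : ∀ g y, T (fun k => act g (y k)) = T y) :
    (fun p : InvConfig n a b c => T (fun k => part (emb p) (Sum.map la (Sum.map lb lc) k))) ∈
      Algebra.adjoin ℂ (gens n a b c) := by
  have hinv : SLInvariant (onVectors la lb lc T) := by
    intro g v w
    rw [onVectors_apply, onVectors_apply, ← h g (fill la lb lc (Sum.elim v w))]
    congr 1
    funext q
    rcases q with q | q | q
    · simp [fill, act_inA]
    · simp [fill, act_inB]
    · simp [fill, act_inC, mul_vecMulVec, vecMulVec_mul]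
  have hmem := contracted_mem hn la lb lc (onVectors la lb lc T) hinv
  have hfun : (fun p : InvConfig n a b c =>
      T (fun k => part (emb p) (Sum.map la (Sum.map lb lc) k))) =
      contracted la lb lc (onVectors la lb lc T) := by
    ext p
    let S := fixLeft (fixLeft T (fun j => part (emb p) (Sum.inl (la j))))
      (fun i => part (emb p) (Sum.inr (Sum.inl (lb i))))
    have h1 : T (fun k => part (emb p) (Sum.map la (Sum.map lb lc) k))
        = S (fun k => ∑ i : Fin n, inC (lc k)
          (vecMulVec ((p.2.2 (lc k)).val *ᵥ Pi.single i 1) (Pi.single i 1))) := by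
      simp only [← map_sum, sum_vecMulVec]
      simp only [S, fixLeft_apply]
      congr 1
      funext q
      rcases q with q | q | q <;> rfl
    rw [h1, S.map_sum (fun k i => inC (lc k)
          (vecMulVec ((p.2.2 (lc k)).val *ᵥ Pi.single i 1) (Pi.single i 1)))]
    rw [contracted]
    refine Finset.sum_congr rfl fun I _ => ?_
    simp only [S, fixLeft_apply, onVectors_apply]
    congr 1
  rw [hfun]
  exact hmem

end slots

/-- A choice of a component for each slot sorts the slots into covector, vector and matrix slots. -/
lemma exists_labels {S : Type} [Fintype S] (s : S → Fin a ⊕ (Fin b ⊕ Fin c)) :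
    ∃ (A B : Type) (_ : Fintype A) (_ : Fintype B) (m : ℕ) (la : A → Fin a) (lb : B → Fin b)
      (lc : Fin m → Fin c) (σ : A ⊕ (B ⊕ Fin m) ≃ S),
      ∀ q, s (σ q) = Sum.map la (Sum.map lb lc) q := by
  classical
  let A := Σ j : Fin a, {k // s k = Sum.inl j}
  let B := Σ j : Fin b, {k // s k = Sum.inr (Sum.inl j)}
  let C := Σ j : Fin c, {k // s k = Sum.inr (Sum.inr j)}
  let f : A ⊕ (B ⊕ C) → S :=
    Sum.elim (fun x => x.2.1) (Sum.elim (fun x => x.2.1) (fun x => x.2.1))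
  have hs : ∀ q, s (f q) = Sum.map Sigma.fst (Sum.map Sigma.fst Sigma.fst) q := by
    rintro (q | q | q)
    · exact q.2.2
    · exact q.2.2
    · exact q.2.2
  have hf : Function.Bijective f := by
    constructor
    · intro q q' hq
      have h1 := hs q
      rw [hq, hs q'] at h1
      rcases q with ⟨j, k, hk⟩ | ⟨j, k, hk⟩ | ⟨j, k, hk⟩ <;>
      rcases q' with ⟨j', k', hk'⟩ | ⟨j', k', hk'⟩ | ⟨j', k', hk'⟩ <;>
      simp only [Sum.map_inl, Sum.map_inr, Sum.inl.injEq, Sum.inr.injEq, reduceCtorEq] at h1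
      all_goals
        subst h1
        obtain rfl : k = k' := hq
        rfl
    · intro k
      rcases hk : s k with j | j | j
      · exact ⟨Sum.inl ⟨j, k, hk⟩, rfl⟩
      · exact ⟨Sum.inr (Sum.inl ⟨j, k, hk⟩), rfl⟩
      · exact ⟨Sum.inr (Sum.inr ⟨j, k, hk⟩), rfl⟩
  let e := Fintype.equivFin C
  refine ⟨A, B, inferInstance, inferInstance, Fintype.card C, Sigma.fst, Sigma.fst,
    fun k => (e.symm k).1,
    (Equiv.sumCongr (Equiv.refl A) (Equiv.sumCongr (Equiv.refl B) e.symm)).trans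
      (Equiv.ofBijective f hf), ?_⟩
  rintro (q | q | q)
  · exact hs (Sum.inl q)
  · exact hs (Sum.inr (Sum.inl q))
  · exact hs (Sum.inr (Sum.inr (e.symm q)))

/-- The restriction to the diagonal of an invariant multilinear form on configurations lies in
the algebra of the generators. -/
lemma diag_mem (hn : 1 ≤ n) {S : Type} [Fintype S]
    (T : MultilinearMap ℂ (fun _ : S => LinConfig n a b c) ℂ)
    (h : ∀ g y, T (fun k => act g (y k)) = T y) :
    (fun p : InvConfig n a b c => T (fun _ => emb p)) ∈ Algebra.adjoin ℂ (gens n a b c) := by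
  classical
  have h1 : (fun p : InvConfig n a b c => T (fun _ => emb p)) =
      ∑ s : S → Fin a ⊕ (Fin b ⊕ Fin c), fun p : InvConfig n a b c =>
        T (fun k => part (emb p) (s k)) := by
    ext p
    rw [Finset.sum_apply, ← T.map_sum (fun _ t => part (emb p) t)]
    simp only [sum_part]
  rw [h1]
  refine sum_mem fun s _ => ?_
  obtain ⟨A, B, _, _, m, la, lb, lc, σ, hσ⟩ := exists_labels s
  have h2 := labelled_mem la lb lc hn (T.domDomCongr σ.symm) (fun g y => by
    simp only [MultilinearMap.domDomCongr_apply]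
    exact h g (fun k => y (σ.symm k)))
  simp only [MultilinearMap.domDomCongr_apply, ← hσ, Equiv.apply_symm_apply] at h2
  exact h2

end

/-! ### Polarization of invariant polynomials -/

/-- A monomial as a product of a list of variables. -/
lemma exists_list {σ : Type} [Fintype σ] (s : σ →₀ ℕ) :
    ∃ l : Fin s.degree → σ, ∀ x : σ → ℂ, ∏ k, x (l k) = ∏ i, x i ^ s i := by
  have hlen : (Finsupp.toMultiset s).toList.length = s.degree := by
    rw [Multiset.length_toList, Finsupp.card_toMultiset]
    rfl
  refine ⟨fun k => (Finsupp.toMultiset s).toList.get (k.cast hlen.symm), fun x => ?_⟩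
  refine (Fintype.prod_equiv (finCongr hlen.symm) _
    (fun k => x ((Finsupp.toMultiset s).toList.get k)) (fun k => rfl)).trans ?_
  rw [← List.prod_ofFn]
  have h1 : List.ofFn (fun k => x ((Finsupp.toMultiset s).toList.get k))
      = (Finsupp.toMultiset s).toList.map x := by
    generalize (Finsupp.toMultiset s).toList = l
    exact List.ofFn_getElem_eq_map l x
  rw [h1, ← Multiset.prod_coe, ← Multiset.map_coe, Multiset.coe_toList, Finsupp.toMultiset_map,
    Finsupp.prod_toMultiset, Finsupp.prod_mapDomain_index (by simp) (by intros; rw [pow_add]),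
    Finsupp.prod_fintype _ _ (by simp)]

/-- A homogeneous polynomial is the restriction of a multilinear form to the diagonal. -/
lemma exists_multilinear {σ W : Type} [Fintype σ] [AddCommGroup W] [Module ℂ W]
    (L : W →ₗ[ℂ] (σ → ℂ)) {d : ℕ} (p : MvPolynomial σ ℂ) (hp : p.IsHomogeneous d) :
    ∃ T : MultilinearMap ℂ (fun _ : Fin d => W) ℂ,
      ∀ y, T (fun _ => y) = MvPolynomial.eval (L y) p := by
  have h1 : ∀ s : σ →₀ ℕ, ∃ T : MultilinearMap ℂ (fun _ : Fin d => W) ℂ,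
      ∀ y, T (fun _ => y) = p.coeff s * ∏ i, L y i ^ s i := fun s => by
    by_cases hs : p.coeff s = 0
    · exact ⟨0, fun y => by simp [hs]⟩
    · have hd : s.degree = d := by
        rw [Finsupp.degree_eq_weight_one]
        exact hp hs
      subst hd
      obtain ⟨l, hl⟩ := exists_list s
      refine ⟨p.coeff s • (MultilinearMap.mkPiAlgebra ℂ (Fin s.degree) ℂ).compLinearMap
        (fun k => LinearMap.proj (l k) ∘ₗ L), fun y => ?_⟩
      rw [← hl]
      simp
  choose T hT using h1
  refine ⟨∑ s ∈ p.support, T s, fun y => ?_⟩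
  rw [MvPolynomial.eval_eq', _root_.sum_apply]
  exact Finset.sum_congr rfl fun s _ => hT s y

section
variable {n a b c : ℕ}

/-- Index set of the coordinates on `LinConfig`. -/
abbrev Coord (n a b c : ℕ) := (Fin a × Fin n) ⊕ ((Fin b × Fin n) ⊕ (Fin c × (Fin n × Fin n)))

/-- The coordinates on `LinConfig`. -/
noncomputable def coords : LinConfig n a b c →ₗ[ℂ] (Coord n a b c → ℂ) where
  toFun y := Sum.elim (fun q => y.1 q.1 q.2)
    (Sum.elim (fun q => y.2.1 q.1 q.2) (fun q => y.2.2 q.1 q.2.1 q.2.2))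
  map_add' x y := by ext (q | q | q) <;> rfl
  map_smul' t y := by ext (q | q | q) <;> rfl

/-- The multilinear form given by a homogeneous invariant need not be invariant, but its
symmetrization is, by polarization. -/
lemma homogeneous_mem (hn : 1 ≤ n) {d : ℕ} (p : MvPolynomial (Coord n a b c) ℂ)
    (hp : p.IsHomogeneous d)
    (h : ∀ g y, MvPolynomial.eval (coords (act g y)) p = MvPolynomial.eval (coords y) p) :
    (fun q : InvConfig n a b c => MvPolynomial.eval (coords (emb q)) p) ∈
      Algebra.adjoin ℂ (gens n a b c) := by
  obtain ⟨T₀, hT₀⟩ := exists_multilinear coords p hp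
  have hN : (Fintype.card (Equiv.Perm (Fin d)) : ℂ) ≠ 0 := by exact_mod_cast Fintype.card_ne_zero
  let T : MultilinearMap ℂ (fun _ : Fin d => LinConfig n a b c) ℂ :=
    ∑ τ : Equiv.Perm (Fin d), T₀.domDomCongr τ
  have hT : ∀ y, T y = ∑ τ : Equiv.Perm (Fin d), T₀ (fun k => y (τ k)) := fun y => by
    simp [T]
  have hinv : ∀ g y, T (fun k => act g (y k)) = T y := fun g y => by
    have h1 := polarization (T₀.compLinearMap (fun _ => act g) - T₀) (fun y => by
      rw [_root_.sub_apply, MultilinearMap.compLinearMap_apply, hT₀, hT₀, h, sub_self]) y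
    simp only [_root_.sub_apply, MultilinearMap.compLinearMap_apply,
      Finset.sum_sub_distrib, sub_eq_zero] at h1
    rw [hT, hT]
    exact h1
  have h2 := Subalgebra.smul_mem _ (diag_mem hn T hinv) (Fintype.card (Equiv.Perm (Fin d)) : ℂ)⁻¹
  convert h2 using 1
  ext q
  rw [Pi.smul_apply, hT]
  simp only [hT₀, Finset.sum_const, Finset.card_univ, nsmul_eq_mul, smul_eq_mul]
  rw [inv_mul_cancel_left₀ hN]

/-- Polynomial invariants on the whole linear space lie in the algebra of the generators after
restriction to configurations of determinant one. -/
lemma polynomial_mem (hn : 1 ≤ n) (p : MvPolynomial (Coord n a b c) ℂ)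
    (h : ∀ g y, MvPolynomial.eval (coords (act g y)) p = MvPolynomial.eval (coords y) p) :
    (fun q : InvConfig n a b c => MvPolynomial.eval (coords (emb q)) p) ∈
      Algebra.adjoin ℂ (gens n a b c) := by
  have hscale : ∀ (t : ℂ) (d : ℕ) (y : LinConfig n a b c),
      MvPolynomial.eval (coords (t • y)) (MvPolynomial.homogeneousComponent d p)
        = t ^ d * MvPolynomial.eval (coords y) (MvPolynomial.homogeneousComponent d p) := by
    intro t d y
    obtain ⟨T₀, hT₀⟩ := exists_multilinear (W := LinConfig n a b c) coords _
      (MvPolynomial.homogeneousComponent_isHomogeneous d p)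
    rw [← hT₀, ← hT₀]
    have := T₀.map_smul_univ (fun _ => t) (fun _ => y)
    simpa using this
  have hexp : ∀ (t : ℂ) (y : LinConfig n a b c), MvPolynomial.eval (coords (t • y)) p
      = (∑ d ∈ Finset.range (p.totalDegree + 1), Polynomial.monomial d
        (MvPolynomial.eval (coords y) (MvPolynomial.homogeneousComponent d p))).eval t := by
    intro t y
    conv_lhs => rw [← MvPolynomial.sum_homogeneousComponent p]
    rw [map_sum, Polynomial.eval_finsetSum]
    refine Finset.sum_congr rfl fun d _ => ?_
    rw [hscale, Polynomial.eval_monomial, mul_comm]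
  -- comparing coefficients of powers of a scalar
  have hcomp : ∀ d ∈ Finset.range (p.totalDegree + 1), ∀ g (y : LinConfig n a b c),
      MvPolynomial.eval (coords (act g y)) (MvPolynomial.homogeneousComponent d p)
        = MvPolynomial.eval (coords y) (MvPolynomial.homogeneousComponent d p) := by
    intro d hd g y
    have h1 : (∑ d ∈ Finset.range (p.totalDegree + 1), Polynomial.monomial d
        (MvPolynomial.eval (coords (act g y)) (MvPolynomial.homogeneousComponent d p)))
        = ∑ d ∈ Finset.range (p.totalDegree + 1), Polynomial.monomial d
        (MvPolynomial.eval (coords y) (MvPolynomial.homogeneousComponent d p)) := by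
      apply Polynomial.funext
      intro t
      rw [← hexp, ← hexp, ← map_smul, h]
    have h2 := congrArg (fun q => Polynomial.coeff q d) h1
    simpa [Polynomial.finsetSum_coeff, Polynomial.coeff_monomial, Finset.mem_range.1 hd] using h2
  have hsum : (fun q : InvConfig n a b c => MvPolynomial.eval (coords (emb q)) p)
      = ∑ d ∈ Finset.range (p.totalDegree + 1), fun q : InvConfig n a b c =>
        MvPolynomial.eval (coords (emb q)) (MvPolynomial.homogeneousComponent d p) := by
    ext q
    conv_lhs => rw [← MvPolynomial.sum_homogeneousComponent p]
    rw [map_sum, Finset.sum_apply]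
  rw [hsum]
  exact sum_mem fun d hd => homogeneous_mem hn _
    (MvPolynomial.homogeneousComponent_isHomogeneous d p) (hcomp d hd)

end

/-! ### Extending invariants from determinant one to all matrices -/

section
variable {n a b c : ℕ}

/-- Rescaling of the matrices of a configuration. -/
def scale (t : Fin c → ℂ) (y : LinConfig n a b c) : LinConfig n a b c :=
  (y.1, y.2.1, fun k => t k • y.2.2 k)

lemma act_scale (g : SpecialLinearGroup (Fin n) ℂ) (t : Fin c → ℂ) (y : LinConfig n a b c) :
    act g (scale t y) = scale t (act g y) := by
  refine Prod.ext rfl (Prod.ext rfl ?_)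
  funext k
  simp [act, scale]

lemma det_act (g : SpecialLinearGroup (Fin n) ℂ) (y : LinConfig n a b c) (k : Fin c) :
    ((act g y).2.2 k).det = (y.2.2 k).det := by
  change (g.val * y.2.2 k * (g⁻¹).val).det = _
  rw [det_mul, det_mul, g.2, (g⁻¹).2, one_mul, mul_one]

/-- The total degree of a monomial in the entries of the `k`-th matrix. -/
def matDeg (s : Coord n a b c →₀ ℕ) (k : Fin c) : ℕ :=
  ∑ q : Fin n × Fin n, s (Sum.inr (Sum.inr (k, q)))

/-- The value of a monomial. -/
noncomputable def monoVal (s : Coord n a b c →₀ ℕ) (y : LinConfig n a b c) : ℂ :=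
  ∏ i, coords y i ^ s i

lemma monoVal_scale (s : Coord n a b c →₀ ℕ) (t : Fin c → ℂ) (y : LinConfig n a b c) :
    monoVal s (scale t y) = (∏ k, t k ^ matDeg s k) * monoVal s y := by
  simp only [monoVal, Fintype.prod_sum_type]
  have h1 : ∏ q : Fin c × (Fin n × Fin n), coords (scale t y) (Sum.inr (Sum.inr q)) ^
      s (Sum.inr (Sum.inr q)) = (∏ k, t k ^ matDeg s k) *
      ∏ q : Fin c × (Fin n × Fin n), coords y (Sum.inr (Sum.inr q)) ^ s (Sum.inr (Sum.inr q)) := by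
    have h2 : ∏ k, t k ^ matDeg s k
        = ∏ q : Fin c × (Fin n × Fin n), t q.1 ^ s (Sum.inr (Sum.inr q)) := by
      simp only [Fintype.prod_prod_type (fun q : Fin c × (Fin n × Fin n) => _), matDeg,
        Finset.prod_pow_eq_pow_sum]
    rw [h2, ← Finset.prod_mul_distrib]
    refine Finset.prod_congr rfl fun q _ => ?_
    rw [← mul_pow]
    rfl
  have h3 : ∀ q, coords (scale t y) (Sum.inl q) = coords y (Sum.inl q) := fun _ => rfl
  have h4 : ∀ q, coords (scale t y) (Sum.inr (Sum.inl q)) = coords y (Sum.inr (Sum.inl q)) :=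
    fun _ => rfl
  rw [h1]
  simp only [h3, h4]
  ring

lemma matDeg_le {p : MvPolynomial (Coord n a b c) ℂ} {s : Coord n a b c →₀ ℕ}
    (hs : s ∈ p.support) (k : Fin c) : matDeg s k ≤ p.totalDegree := by
  refine le_trans ?_ (MvPolynomial.le_totalDegree hs)
  rw [Finsupp.sum_fintype _ _ (by simp), Fintype.sum_sum_type, Fintype.sum_sum_type,
    Fintype.sum_prod_type (fun q : Fin c × (Fin n × Fin n) => s (Sum.inr (Sum.inr q)))]
  have h : matDeg s k ≤ ∑ k, matDeg s k :=
    Finset.single_le_sum (f := matDeg s) (fun _ _ => Nat.zero_le _) (Finset.mem_univ k)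
  simp only [matDeg] at h ⊢
  lia

/-- The determinant of the generic `k`-th matrix. -/
noncomputable def detPoly (k : Fin c) : MvPolynomial (Coord n a b c) ℂ :=
  det (of fun i j => MvPolynomial.X (Sum.inr (Sum.inr (k, i, j))))

lemma eval_detPoly (k : Fin c) (y : LinConfig n a b c) :
    MvPolynomial.eval (coords y) (detPoly k) = (y.2.2 k).det := by
  rw [detPoly, RingHom.map_det]
  congr 1
  ext i j
  simp [coords]

/-- The exponent of the determinant of the `k`-th matrix multiplying a monomial. -/
def detExp (p : MvPolynomial (Coord n a b c) ℂ) (s : Coord n a b c →₀ ℕ) (k : Fin c) : ℕ :=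
  p.totalDegree + 1 - matDeg s k / n

/-- The polynomial obtained from `p` by multiplying each monomial with powers of the determinants,
so that the degree in each matrix depends on the monomial only through its residue modulo `n`. The
summand `1` in `detExp` makes every exponent positive. -/
noncomputable def lift (p : MvPolynomial (Coord n a b c) ℂ) : MvPolynomial (Coord n a b c) ℂ :=
  ∑ s ∈ p.support, MvPolynomial.monomial s (p.coeff s) * ∏ k, detPoly k ^ detExp p s k

lemma eval_lift (p : MvPolynomial (Coord n a b c) ℂ) (y : LinConfig n a b c) :
    MvPolynomial.eval (coords y) (lift p)
      = ∑ s ∈ p.support, p.coeff s * monoVal s y * ∏ k, (y.2.2 k).det ^ detExp p s k := by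
  rw [lift, map_sum]
  refine Finset.sum_congr rfl fun s _ => ?_
  rw [map_mul, map_prod, MvPolynomial.eval_monomial, Finsupp.prod_fintype _ _ (by simp)]
  simp only [map_pow, eval_detPoly]
  rfl

lemma eval_eq_monoVal (p : MvPolynomial (Coord n a b c) ℂ) (y : LinConfig n a b c) :
    MvPolynomial.eval (coords y) p = ∑ s ∈ p.support, p.coeff s * monoVal s y :=
  MvPolynomial.eval_eq' _ _

lemma eval_lift_of_det (p : MvPolynomial (Coord n a b c) ℂ) (y : LinConfig n a b c)
    (hy : ∀ k, (y.2.2 k).det = 1) :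
    MvPolynomial.eval (coords y) (lift p) = MvPolynomial.eval (coords y) p := by
  rw [eval_lift, eval_eq_monoVal]
  simp [hy]

/-- The dependence of the lifted polynomial on rescalings of the matrices, up to a fixed monomial
in the scaling factors. -/
noncomputable def scalePoly (p : MvPolynomial (Coord n a b c) ℂ) (y : LinConfig n a b c) :
    MvPolynomial (Fin c) ℂ :=
  ∑ s ∈ p.support, MvPolynomial.monomial (Finsupp.equivFunOnFinite.symm fun k => matDeg s k % n)
    (p.coeff s * monoVal s y)

lemma eval_scalePoly (p : MvPolynomial (Coord n a b c) ℂ) (y : LinConfig n a b c)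
    (t : Fin c → ℂ) : MvPolynomial.eval t (scalePoly p y)
      = ∑ s ∈ p.support, p.coeff s * monoVal s y * ∏ k, t k ^ (matDeg s k % n) := by
  rw [scalePoly, map_sum]
  refine Finset.sum_congr rfl fun s _ => ?_
  rw [MvPolynomial.eval_monomial, Finsupp.prod_fintype _ _ (by simp)]
  rfl

lemma degreeOf_scalePoly (hn : 1 ≤ n) (p : MvPolynomial (Coord n a b c) ℂ)
    (y : LinConfig n a b c) (k : Fin c) : MvPolynomial.degreeOf k (scalePoly p y) < n := by
  refine lt_of_le_of_lt (MvPolynomial.degreeOf_sum_le k _ _) ?_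
  rw [Finset.sup_lt_iff (by exact hn)]
  intro s _
  by_cases h : p.coeff s * monoVal s y = 0
  · rw [h, map_zero, MvPolynomial.degreeOf_zero]
    exact hn
  · rw [MvPolynomial.degreeOf_monomial_eq _ _ h]
    exact Nat.mod_lt _ hn

/-- On rescalings of matrices of determinant one, the lift is a fixed monomial in the scalars times
a polynomial of degree less than `n` in each scalar, hence determined by its values at `n`-th roots
of unity. -/
lemma eval_lift_scale (p : MvPolynomial (Coord n a b c) ℂ) (y : LinConfig n a b c)
    (hy : ∀ k, (y.2.2 k).det = 1) (t : Fin c → ℂ) :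
    MvPolynomial.eval (coords (scale t y)) (lift p)
      = (∏ k, t k ^ (n * (p.totalDegree + 1))) * MvPolynomial.eval t (scalePoly p y) := by
  rw [eval_lift, eval_scalePoly, Finset.mul_sum]
  refine Finset.sum_congr rfl fun s hs => ?_
  have hdet : ∀ k, ((scale t y).2.2 k).det = t k ^ n := fun k => by
    change (t k • y.2.2 k).det = _
    rw [det_smul, hy, Fintype.card_fin, mul_one]
  have hexp : ∀ k, n * detExp p s k + matDeg s k
      = n * (p.totalDegree + 1) + matDeg s k % n := fun k => by
    have h1 := matDeg_le hs k
    have h2 := Nat.div_le_self (matDeg s k) n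
    have h3 := Nat.div_add_mod (matDeg s k) n
    rw [detExp, Nat.mul_sub]
    have h4 : n * (matDeg s k / n) ≤ n * (p.totalDegree + 1) := Nat.mul_le_mul_left _ (by lia)
    lia
  have hprod : (∏ k, t k ^ matDeg s k) * ∏ k, (t k ^ n) ^ detExp p s k
      = (∏ k, t k ^ (n * (p.totalDegree + 1))) * ∏ k, t k ^ (matDeg s k % n) := by
    rw [← Finset.prod_mul_distrib, ← Finset.prod_mul_distrib]
    refine Finset.prod_congr rfl fun k _ => ?_
    rw [← pow_mul, ← pow_add, ← pow_add, ← hexp, add_comm]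
  simp only [hdet, monoVal_scale]
  linear_combination p.coeff s * monoVal s y * hprod

/-- If `p` is invariant on configurations of determinant one then its lift is invariant. -/
lemma lift_invariant (hn : 1 ≤ n) (p : MvPolynomial (Coord n a b c) ℂ)
    (h : ∀ g (y : LinConfig n a b c), (∀ k, (y.2.2 k).det = 1) →
      MvPolynomial.eval (coords (act g y)) p = MvPolynomial.eval (coords y) p)
    (g : SpecialLinearGroup (Fin n) ℂ) (y : LinConfig n a b c) :
    MvPolynomial.eval (coords (act g y)) (lift p) = MvPolynomial.eval (coords y) (lift p) := by
  have hn0 : n ≠ 0 := by lia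
  by_cases hy : ∃ k, (y.2.2 k).det = 0
  -- every monomial of the lift carries a positive power of each determinant
  · obtain ⟨k, hk⟩ := hy
    have hz : ∀ z : LinConfig n a b c, (z.2.2 k).det = 0 →
        MvPolynomial.eval (coords z) (lift p) = 0 := fun z hz => by
      rw [eval_lift]
      refine Finset.sum_eq_zero fun s hs => ?_
      have h1 : detExp p s k ≠ 0 := by
        have h1 := matDeg_le hs k
        have h2 := Nat.div_le_self (matDeg s k) n
        rw [detExp]
        lia
      rw [Finset.prod_eq_zero (Finset.mem_univ k) (by rw [hz, zero_pow h1]), mul_zero]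
    rw [hz _ hk, hz _ (by rw [det_act, hk])]
  · push Not at hy
    have hroot : ∀ k, ∃ t : ℂ, t ^ n = (y.2.2 k).det := fun k =>
      IsAlgClosed.exists_pow_nat_eq _ (by lia)
    choose t ht using hroot
    have ht0 : ∀ k, t k ≠ 0 := fun k h0 => hy k (by rw [← ht, h0, zero_pow hn0])
    let x := scale (fun k => (t k)⁻¹) y
    have hx : ∀ k, (x.2.2 k).det = 1 := fun k => by
      change ((t k)⁻¹ • y.2.2 k).det = 1
      rw [det_smul, Fintype.card_fin, inv_pow, ht, inv_mul_cancel₀ (hy k)]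
    have hyx : y = scale t x := by
      refine Prod.ext rfl (Prod.ext rfl ?_)
      funext k
      change y.2.2 k = t k • (t k)⁻¹ • y.2.2 k
      rw [smul_smul, mul_inv_cancel₀ (ht0 k), one_smul]
    have hgx : ∀ k, ((act g x).2.2 k).det = 1 := fun k => by rw [det_act, hx]
    have hq : scalePoly p (act g x) - scalePoly p x = 0 := by
      refine MvPolynomial.eq_zero_of_eval_zero_at_prod_finset _
        (fun _ => Polynomial.nthRootsFinset n (1 : ℂ)) (fun k => ?_) (fun z hz => ?_)
      · rw [(Complex.isPrimitiveRoot_exp n hn0).card_nthRootsFinset]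
        exact lt_of_le_of_lt (MvPolynomial.degreeOf_sub_le _ _ _)
          (max_lt (degreeOf_scalePoly hn _ _ _) (degreeOf_scalePoly hn _ _ _))
      · have hz1 : ∀ k, z k ^ n = 1 := fun k =>
          (Polynomial.mem_nthRootsFinset (by lia) _).1 (hz k)
        have hzx : ∀ k, ((scale z x).2.2 k).det = 1 := fun k => by
          change (z k • x.2.2 k).det = 1
          rw [det_smul, Fintype.card_fin, hz1, hx, one_mul]
        have hone : ∏ k, z k ^ (n * (p.totalDegree + 1)) = 1 :=
          Finset.prod_eq_one fun k _ => by rw [pow_mul, hz1, one_pow]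
        have h1 := eval_lift_scale p x hx z
        have h2 := eval_lift_scale p (act g x) hgx z
        rw [hone, one_mul] at h1 h2
        rw [map_sub, ← h1, ← h2, ← act_scale, eval_lift_of_det _ _ hzx,
          eval_lift_of_det _ _ (fun k => by rw [det_act, hzx]), h g _ hzx, sub_self]
    rw [hyx, act_scale, eval_lift_scale p x hx, eval_lift_scale p _ hgx, sub_eq_zero.1 hq]

/-- Every point of `LinConfig` whose matrices have determinant one comes from a configuration. -/
lemma exists_emb (y : LinConfig n a b c) (hy : ∀ k, (y.2.2 k).det = 1) :
    ∃ q : InvConfig n a b c, emb q = y := by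
  refine ⟨(fun j => LinearMap.toSpanSingleton ℂ ℂ 1 ∘ₗ dotProductBilin ℂ ℂ (y.1 j), y.2.1,
    fun k => ⟨y.2.2 k, hy k⟩), Prod.ext ?_ rfl⟩
  funext j i
  simp [emb, cov]

/-- The action on configurations. -/
def actConfig (g : SpecialLinearGroup (Fin n) ℂ) (p : InvConfig n a b c) : InvConfig n a b c :=
  (fun j => (p.1 j).comp (Matrix.mulVecLin (g⁻¹).val), fun i => g.val.mulVec (p.2.1 i),
    fun k => g * p.2.2 k * g⁻¹)

lemma emb_actConfig (g : SpecialLinearGroup (Fin n) ℂ) (p : InvConfig n a b c) :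
    emb (actConfig g p) = act g (emb p) := by
  refine Prod.ext ?_ rfl
  funext j i
  change p.1 j ((g⁻¹).val *ᵥ Pi.single i 1) = (cov p j ᵥ* (g⁻¹).val) i
  rw [← cov_dotProduct, dotProduct_mulVec]
  simp

lemma invariant_mem (hn : 1 ≤ n) (p : MvPolynomial (Coord n a b c) ℂ)
    (h : ∀ g (q : InvConfig n a b c), MvPolynomial.eval (coords (emb (actConfig g q))) p
      = MvPolynomial.eval (coords (emb q)) p) :
    (fun q : InvConfig n a b c => MvPolynomial.eval (coords (emb q)) p) ∈
      Algebra.adjoin ℂ (gens n a b c) := by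
  have h1 := polynomial_mem hn (lift p) (lift_invariant hn p fun g y hy => by
    obtain ⟨q, rfl⟩ := exists_emb y hy
    rw [← emb_actConfig, h])
  convert h1 using 1
  ext q
  rw [eval_lift_of_det]
  exact fun k => (q.2.2 k).2

end

/-! ### Polynomial functions and the generators -/

section
variable {n a b c : ℕ}

/-- The coordinate functions on configurations. -/
def coordFuns (n a b c : ℕ) : Set (InvConfig n a b c → ℂ) :=
  ({h : InvConfig n a b c → ℂ | ∃ (j : Fin a) (i : Fin n),
              h = fun p => p.1 j (Pi.single i 1)} ∪
           {h : InvConfig n a b c → ℂ | ∃ (i : Fin b) (j : Fin n),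
              h = fun p => p.2.1 i j} ∪
           {h : InvConfig n a b c → ℂ | ∃ (k : Fin c) (i j : Fin n),
              h = fun p => (p.2.2 k).val i j})

/-- Polynomial functions are restrictions of polynomials in the coordinates of `LinConfig`. -/
lemma exists_polynomial {f : InvConfig n a b c → ℂ}
    (hf : f ∈ Algebra.adjoin ℂ (coordFuns n a b c)) :
    ∃ p : MvPolynomial (Coord n a b c) ℂ,
      f = fun q => MvPolynomial.eval (coords (emb q)) p := by
  induction hf using Algebra.adjoin_induction with
  | mem f hf =>
    rcases hf with (⟨j, i, rfl⟩ | ⟨i, j, rfl⟩) | ⟨k, i, j, rfl⟩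
    · exact ⟨MvPolynomial.X (Sum.inl (j, i)), by ext q; rw [MvPolynomial.eval_X]; rfl⟩
    · exact ⟨MvPolynomial.X (Sum.inr (Sum.inl (i, j))), by ext q; rw [MvPolynomial.eval_X]; rfl⟩
    · exact ⟨MvPolynomial.X (Sum.inr (Sum.inr (k, i, j))), by
        ext q; rw [MvPolynomial.eval_X]; rfl⟩
  | algebraMap r => exact ⟨MvPolynomial.C r, by ext q; rw [MvPolynomial.eval_C]; rfl⟩
  | add f g _ _ hf hg =>
    obtain ⟨p, rfl⟩ := hf
    obtain ⟨p', rfl⟩ := hg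
    exact ⟨p + p', by ext q; rw [map_add]; rfl⟩
  | mul f g _ _ hf hg =>
    obtain ⟨p, rfl⟩ := hf
    obtain ⟨p', rfl⟩ := hg
    exact ⟨p * p', by ext q; rw [map_mul]; rfl⟩

lemma det_polynomial {m : ℕ} (P : Subalgebra ℂ (InvConfig n a b c → ℂ))
    (M : InvConfig n a b c → Matrix (Fin m) (Fin m) ℂ) (h : ∀ i j, (fun p => M p i j) ∈ P) :
    (fun p => (M p).det) ∈ P := by
  have h1 : (fun p => (M p).det) = ∑ τ : Equiv.Perm (Fin m),
      ((Equiv.Perm.sign τ : ℤ) : ℂ) • ∏ i, fun p => M p (τ i) i := by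
    ext p
    simp [det_apply']
  rw [h1]
  exact sum_mem fun τ _ => P.smul_mem (prod_mem fun i _ => h _ _) _

lemma dot_polynomial (P : Subalgebra ℂ (InvConfig n a b c → ℂ))
    (u v : InvConfig n a b c → Fin n → ℂ) (hu : ∀ i, (fun p => u p i) ∈ P)
    (hv : ∀ i, (fun p => v p i) ∈ P) : (fun p => u p ⬝ᵥ v p) ∈ P := by
  have h1 : (fun p => u p ⬝ᵥ v p) = ∑ i, (fun p => u p i) * fun p => v p i := by
    ext p
    simp [dotProduct]
  rw [h1]
  exact sum_mem fun i _ => mul_mem (hu i) (hv i)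

lemma wordMat_polynomial (s : List (Fin c × Bool)) : ∀ i j : Fin n,
    (fun p : InvConfig n a b c => wordMat p.2.2 s i j) ∈ Algebra.adjoin ℂ (coordFuns n a b c) := by
  have hX : ∀ k (i j : Fin n), (fun p : InvConfig n a b c => (p.2.2 k).val i j) ∈
      Algebra.adjoin ℂ (coordFuns n a b c) := fun k i j =>
    Algebra.subset_adjoin (Or.inr ⟨k, i, j, rfl⟩)
  induction s with
  | nil => exact fun i j => Subalgebra.algebraMap_mem _ ((1 : Matrix (Fin n) (Fin n) ℂ) i j)
  | cons l s ih =>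
    intro i j
    have h1 : (fun p : InvConfig n a b c => wordMat p.2.2 (l :: s) i j)
        = fun p => (fun k => wordMat p.2.2 [l] i k) ⬝ᵥ fun k => wordMat p.2.2 s k j := by
      ext p
      rw [show l :: s = [l] ++ s from rfl, wordMat_append]
      rfl
    rw [h1]
    refine dot_polynomial _ _ _ (fun k => ?_) (fun k => ih k j)
    obtain ⟨l, t⟩ := l
    cases t
    · have h2 : ∀ p : InvConfig n a b c, wordMat p.2.2 [(l, false)] = (p.2.2 l).val.adjugate :=
        fun p => by simp [wordMat, wordProd]
      simp only [h2, adjugate_apply]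
      refine det_polynomial _ _ fun r r' => ?_
      by_cases hr : r = k
      · subst hr
        simp only [updateRow_self]
        exact Subalgebra.algebraMap_mem _ ((Pi.single i 1 : Fin n → ℂ) r')
      · simp only [updateRow_ne hr]
        exact hX _ _ _
    · simp only [wordMat_letter]
      exact hX _ _ _

lemma cov_polynomial (j : Fin a) (i : Fin n) : (fun p : InvConfig n a b c => cov p j i) ∈
    Algebra.adjoin ℂ (coordFuns n a b c) :=
  Algebra.subset_adjoin (Or.inl (Or.inl ⟨j, i, rfl⟩))

lemma mulVec_polynomial (s : List (Fin c × Bool)) (i : Fin b) (r : Fin n) :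
    (fun p : InvConfig n a b c => (wordMat p.2.2 s *ᵥ p.2.1 i) r) ∈
      Algebra.adjoin ℂ (coordFuns n a b c) :=
  dot_polynomial _ (fun p => wordMat p.2.2 s r) (fun p => p.2.1 i)
    (fun k => wordMat_polynomial s r k)
    (fun k => Algebra.subset_adjoin (Or.inl (Or.inr ⟨i, k, rfl⟩)))

lemma gens_polynomial {f : InvConfig n a b c → ℂ} (hf : f ∈ gens n a b c) :
    f ∈ Algebra.adjoin ℂ (coordFuns n a b c) := by
  rcases hf with ((⟨s, rfl⟩ | ⟨s, j, i, rfl⟩) | ⟨s, i, rfl⟩) | ⟨s, j, rfl⟩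
  · have h1 : (fun p : InvConfig n a b c => trace (wordProd p.2.2 s).val)
        = ∑ i, fun p : InvConfig n a b c => wordMat p.2.2 s i i := by
      ext p
      rw [Finset.sum_apply]
      rfl
    rw [h1]
    exact sum_mem fun i _ => wordMat_polynomial s i i
  · simp only [← cov_dotProduct]
    exact dot_polynomial _ _ _ (cov_polynomial j) (mulVec_polynomial s i)
  · exact det_polynomial _ _ fun k r => mulVec_polynomial (s k) (i k) r
  · refine det_polynomial _ _ fun k r => ?_
    simp only [of_apply, ← cov_dotProduct, mulVec_single_one]
    exact dot_polynomial _ _ _ (cov_polynomial (j k)) fun i => wordMat_polynomial (s k) i r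

lemma wordProd_conj (g : SpecialLinearGroup (Fin n) ℂ) (X : Fin c → SpecialLinearGroup (Fin n) ℂ)
    (s : List (Fin c × Bool)) :
    wordProd (fun k => g * X k * g⁻¹) s = g * wordProd X s * g⁻¹ := by
  induction s with
  | nil => simp [wordProd]
  | cons l s ih =>
    rw [show l :: s = [l] ++ s from rfl, wordProd_append, wordProd_append, ih]
    obtain ⟨l, t⟩ := l
    cases t <;> simp [wordProd, mul_assoc]

lemma wordMat_act (g : SpecialLinearGroup (Fin n) ℂ) (p : InvConfig n a b c)
    (s : List (Fin c × Bool)) :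
    (wordProd (actConfig g p).2.2 s).val = g.val * (wordProd p.2.2 s).val * (g⁻¹).val :=
  congrArg Subtype.val (wordProd_conj g p.2.2 s)

lemma val_inv_mul (g : SpecialLinearGroup (Fin n) ℂ) : (g⁻¹).val * g.val = 1 :=
  congrArg Subtype.val (inv_mul_cancel g)

lemma conj_mulVec (g : SpecialLinearGroup (Fin n) ℂ) (M : Matrix (Fin n) (Fin n) ℂ)
    (v : Fin n → ℂ) : (g.val * M * (g⁻¹).val) *ᵥ (g.val *ᵥ v) = g.val *ᵥ (M *ᵥ v) := by
  rw [mulVec_mulVec, mul_assoc, val_inv_mul, mul_one, mulVec_mulVec]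

lemma gens_invariant {f : InvConfig n a b c → ℂ} (hf : f ∈ gens n a b c)
    (g : SpecialLinearGroup (Fin n) ℂ) (p : InvConfig n a b c) : f (actConfig g p) = f p := by
  rcases hf with ((⟨s, rfl⟩ | ⟨s, j, i, rfl⟩) | ⟨s, i, rfl⟩) | ⟨s, j, rfl⟩
  · simp only [wordMat_act]
    rw [trace_mul_comm, ← mul_assoc, val_inv_mul, one_mul]
  · simp only [wordMat_act]
    change p.1 j ((g⁻¹).val *ᵥ ((g.val * (wordProd p.2.2 s).val * (g⁻¹).val) *ᵥ
      (g.val *ᵥ p.2.1 i))) = _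
    rw [conj_mulVec, mulVec_mulVec, val_inv_mul, one_mulVec]
  · simp only [wordMat_act]
    have h1 : (of fun k => (g.val * (wordProd p.2.2 (s k)).val * (g⁻¹).val) *ᵥ
        ((actConfig g p).2.1 (i k))) =
        (of fun k => (wordProd p.2.2 (s k)).val *ᵥ p.2.1 (i k)) * g.valᵀ := by
      ext k r
      change ((g.val * (wordProd p.2.2 (s k)).val * (g⁻¹).val) *ᵥ (g.val *ᵥ p.2.1 (i k))) r = _
      rw [conj_mulVec, ← vecMul_transpose]
      rfl
    exact (congrArg det h1).trans (by rw [det_mul, det_transpose, g.2, mul_one])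
  · simp only [wordMat_act]
    have h1 : (of fun k r => (actConfig g p).1 (j k)
        ((g.val * (wordProd p.2.2 (s k)).val * (g⁻¹).val) *ᵥ Pi.single r 1)) =
        (of fun k r => p.1 (j k) ((wordProd p.2.2 (s k)).val *ᵥ Pi.single r 1)) * (g⁻¹).val := by
      ext k r
      change p.1 (j k) ((g⁻¹).val *ᵥ ((g.val * (wordProd p.2.2 (s k)).val * (g⁻¹).val) *ᵥ
        Pi.single r 1)) = ((fun r => p.1 (j k) ((wordProd p.2.2 (s k)).val *ᵥ Pi.single r 1)) ᵥ*
        (g⁻¹).val) r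
      rw [mulVec_mulVec, mul_assoc, ← mul_assoc, val_inv_mul, one_mul]
      simp only [← cov_dotProduct, dotProduct_mulVec]
      rw [← vecMul_vecMul]
      simp
    exact (congrArg det h1).trans (by rw [det_mul, (g⁻¹).2, mul_one])

lemma adjoin_invariant {f : InvConfig n a b c → ℂ} (hf : f ∈ Algebra.adjoin ℂ (gens n a b c))
    (g : SpecialLinearGroup (Fin n) ℂ) (p : InvConfig n a b c) : f (actConfig g p) = f p := by
  induction hf using Algebra.adjoin_induction with
  | mem f hf => exact gens_invariant hf g p
  | algebraMap r => rfl
  | add f f' _ _ hf hf' => rw [Pi.add_apply, Pi.add_apply, hf, hf']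
  | mul f f' _ _ hf hf' => rw [Pi.mul_apply, Pi.mul_apply, hf, hf']

end

theorem first_fundamental_theorem_vectors_covectors_matrices
    (n a b c : ℕ) (hn : 1 ≤ n) :
    {f : InvConfig n a b c → ℂ |
        -- f is a polynomial function: it lies in the ℂ-subalgebra generated by
        -- the coordinate functions (entries of the covectors, of the vectors,
        -- and of the special linear matrices)
        f ∈ Algebra.adjoin ℂ
          ({h : InvConfig n a b c → ℂ | ∃ (j : Fin a) (i : Fin n),
              h = fun p => p.1 j (Pi.single i 1)} ∪
           {h : InvConfig n a b c → ℂ | ∃ (i : Fin b) (j : Fin n),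
              h = fun p => p.2.1 i j} ∪
           {h : InvConfig n a b c → ℂ | ∃ (k : Fin c) (i j : Fin n),
              h = fun p => (p.2.2 k).val i j}) ∧
        -- f is SL(n,ℂ)-invariant
        ∀ (g : Matrix.SpecialLinearGroup (Fin n) ℂ) (p : InvConfig n a b c),
          f (fun j => (p.1 j).comp (Matrix.mulVecLin (g⁻¹).val),
             fun i => g.val.mulVec (p.2.1 i),
             fun k => g * p.2.2 k * g⁻¹) = f p} =
      (Algebra.adjoin ℂ
        -- (i) traces of words in the matrices and their inverses
        ({h : InvConfig n a b c → ℂ | ∃ word : List (Fin c × Bool),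
            h = fun p => Matrix.trace (wordProd p.2.2 word).val} ∪
        -- (ii) pairings w_j (M v_i)
         {h : InvConfig n a b c → ℂ |
            ∃ (word : List (Fin c × Bool)) (j : Fin a) (i : Fin b),
              h = fun p => p.1 j ((wordProd p.2.2 word).val.mulVec (p.2.1 i))} ∪
        -- (iii) volume forms det(M₁ v_{i₁}, …, Mₙ v_{iₙ})
         {h : InvConfig n a b c → ℂ |
            ∃ (words : Fin n → List (Fin c × Bool)) (idx : Fin n → Fin b),
              h = fun p => Matrix.det (Matrix.of fun k =>
                (wordProd p.2.2 (words k)).val.mulVec (p.2.1 (idx k)))} ∪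
        -- (iv) dual volume forms det(w_{j₁} ∘ M₁, …, w_{jₙ} ∘ Mₙ)
         {h : InvConfig n a b c → ℂ |
            ∃ (words : Fin n → List (Fin c × Bool)) (jdx : Fin n → Fin a),
              h = fun p => Matrix.det (Matrix.of fun k j =>
                p.1 (jdx k) ((wordProd p.2.2 (words k)).val.mulVec
                  (Pi.single j 1)))}) : Set _) := by
  apply Set.Subset.antisymm
  · rintro f ⟨hf, hinv⟩
    obtain ⟨p, rfl⟩ := exists_polynomial hf
    exact invariant_mem hn p hinv
  · intro f hf
    exact ⟨Algebra.adjoin_le (fun f hf => gens_polynomial hf) hf, adjoin_invariant hf⟩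
end

section
/- Let n ≥ 1 and let a, b be natural numbers, and let V = ℂ^n. Consider the algebra P of polynomial functions on (V*)^a × V^b, i.e., the ℂ-subalgebra of complex-valued functions on (Fin a → Module.Dual ℂ V) × (Fin b → V) generated by the coordinate functions (the entries of the a covectors and of the b vectors). The group SL(n,ℂ) acts by g·(w, v) = (w ∘ g⁻¹ componentwise, g·v componentwise). Then the subalgebra of SL(n,ℂ)-invariant elements of P is generated, as a ℂ-algebra, by: (i) the pairings (w,v) ↦ w_j(v_i) for 1 ≤ j ≤ a, 1 ≤ i ≤ b; (ii) the volume forms (w,v) ↦ det(v_{i₁}, …, v_{i_n}) for indices i₁,…,i_n among the b vectors; (iii) the dual volume forms (w,v) ↦ det(w_{j₁}, …, w_{j_n}) for indices j₁,…,j_n among the a covectors. -/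
/-!
The proof has three ingredients, all in the coordinates `(W, V)`, where the rows of `W` are the
covectors and the rows of `V` the vectors, so that `g` acts by `(W g⁻¹, V gᵀ)`.

* *Square case* (`mem_genAlg_square`), `a = b = n`. If `det W ≠ 0`, then `SL n` moves `(W, V)` to
  a pair whose first matrix is `diag(det W, 1, …, 1)`; decomposing a polynomial invariant into
  weight vectors for `diag(t, 1, …, 1)` expands it as a Laurent polynomial in `det W` with
  coefficients polynomial in the pairings `W Vᵀ`. Similarly there is an expansion in `(det V)⁻¹`
  when `det V ≠ 0`. As `det W * det V = det (W Vᵀ)`, comparison of coefficients shows that the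
  terms with negative powers of `det W` are terms with positive powers of `det V`.

* *Complete reducibility*. For the Fischer product `⟨p, q⟩ = ∑ α! conj(p_α) q_α` on polynomials,
  the adjoint of the substitution `x ↦ L x` is the substitution `x ↦ Lᴴ x` (`fischer_linSubst`),
  because multiplication by a variable is adjoint to a partial derivative. Hence the orthogonal
  complement of the generated algebra, in bounded degree, is stable under all substitutions
  `(W, V) ↦ (h W, k V)`, where `h` and `k` need not be invertible.

* *Reduction to the square case* (`mem_genAlg_of_isInv`). Let `q` be the component of an
  invariant orthogonal to the generated algebra. If `h` and `k` factor through `ℂⁿ`, then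
  `q(h W, k V)` comes from an invariant of `n` covectors and `n` vectors, so it lies both in the
  generated algebra and in its orthogonal complement, and vanishes. As `W` and `V` have rank at
  most `n`, some such `h` and `k` satisfy `h W = W` and `k V = V`; therefore `q = 0`.
-/

open Matrix

/-- The underlying set: `a` covectors and `b` vectors, where `V = ℂⁿ`. -/
abbrev VecCovecConfig (n a b : ℕ) :=
  (Fin a → Module.Dual ℂ (Fin n → ℂ)) × (Fin b → Fin n → ℂ)

namespace VectorFFT

open MvPolynomial

/-! ### The Fischer product and linear substitutions -/

section Fischer

variable {σ : Type*} [Fintype σ]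

/-- The Fischer (apolar) Hermitian product on complex polynomials, conjugate-linear in the
first argument: distinct monomials are orthogonal, and `x^α` has square norm `α!`. -/
noncomputable def fischer (p q : MvPolynomial σ ℂ) : ℂ :=
  ∑ α ∈ p.support, (∏ i, ((α i).factorial : ℂ)) * (starRingEnd ℂ (coeff α p) * coeff α q)

lemma fischer_of_subset {p : MvPolynomial σ ℂ} (q : MvPolynomial σ ℂ) {s : Finset (σ →₀ ℕ)}
    (h : p.support ⊆ s) :
    fischer p q =
      ∑ α ∈ s, (∏ i, ((α i).factorial : ℂ)) * (starRingEnd ℂ (coeff α p) * coeff α q) := by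
  refine Finset.sum_subset h fun α _ hα => ?_
  simp [notMem_support_iff.mp hα]

lemma fischer_add_left (p p' q : MvPolynomial σ ℂ) :
    fischer (p + p') q = fischer p q + fischer p' q := by
  classical
  rw [fischer_of_subset q (support_add (p := p) (q := p')),
    fischer_of_subset q (Finset.subset_union_left (s₁ := p.support) (s₂ := p'.support)),
    fischer_of_subset q (Finset.subset_union_right (s₁ := p.support) (s₂ := p'.support)),
    ← Finset.sum_add_distrib]
  refine Finset.sum_congr rfl fun α _ => ?_
  simp only [coeff_add, map_add]
  ring

lemma fischer_smul_left (r : ℂ) (p q : MvPolynomial σ ℂ) :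
    fischer (r • p) q = starRingEnd ℂ r * fischer p q := by
  rw [fischer_of_subset q (support_smul (a := r) (f := p)), fischer, Finset.mul_sum]
  refine Finset.sum_congr rfl fun α _ => ?_
  simp only [coeff_smul, smul_eq_mul, map_mul]
  ring

lemma fischer_conj_symm (p q : MvPolynomial σ ℂ) :
    starRingEnd ℂ (fischer q p) = fischer p q := by
  classical
  rw [fischer_of_subset p (Finset.subset_union_left (s₁ := q.support) (s₂ := p.support)),
    fischer_of_subset q (Finset.subset_union_right (s₁ := q.support) (s₂ := p.support)), map_sum]
  refine Finset.sum_congr rfl fun α _ => ?_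
  simp only [map_mul, map_prod, map_natCast, Complex.conj_conj]
  ring

lemma fischer_sum_left {ι : Type*} (s : Finset ι) (p : ι → MvPolynomial σ ℂ)
    (q : MvPolynomial σ ℂ) : fischer (∑ i ∈ s, p i) q = ∑ i ∈ s, fischer (p i) q := by
  classical
  induction s using Finset.induction_on with
  | empty => simp [fischer]
  | insert i s hi ih => rw [Finset.sum_insert hi, Finset.sum_insert hi, fischer_add_left, ih]

lemma fischer_add_right (p q q' : MvPolynomial σ ℂ) :
    fischer p (q + q') = fischer p q + fischer p q' := by
  simp only [fischer, coeff_add, mul_add, Finset.sum_add_distrib]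

lemma fischer_smul_right (r : ℂ) (p q : MvPolynomial σ ℂ) :
    fischer p (r • q) = r * fischer p q := by
  rw [← fischer_conj_symm, fischer_smul_left, map_mul, fischer_conj_symm, Complex.conj_conj]

lemma fischer_sum_right {ι : Type*} (s : Finset ι) (p : MvPolynomial σ ℂ)
    (q : ι → MvPolynomial σ ℂ) : fischer p (∑ i ∈ s, q i) = ∑ i ∈ s, fischer p (q i) := by
  rw [← fischer_conj_symm, fischer_sum_left, map_sum]
  simp only [fischer_conj_symm]

lemma fischer_self (p : MvPolynomial σ ℂ) :
    fischer p p =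
      ((∑ α ∈ p.support, (∏ i, ((α i).factorial : ℝ)) * Complex.normSq (coeff α p) : ℝ) : ℂ) := by
  rw [fischer]
  push_cast
  refine Finset.sum_congr rfl fun α _ => ?_
  rw [Complex.normSq_eq_conj_mul_self]

/-- The Fischer product, bundled for the construction of an inner product space. -/
@[reducible] noncomputable def fischerCore : InnerProductSpace.Core ℂ (MvPolynomial σ ℂ) where
  inner := fischer
  conj_inner_symm p q := fischer_conj_symm p q
  re_inner_nonneg p := by
    rw [fischer_self]
    simp only [RCLike.re_to_complex, Complex.ofReal_re]
    exact Finset.sum_nonneg fun α _ =>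
      mul_nonneg (Finset.prod_nonneg fun i _ => Nat.cast_nonneg _) (Complex.normSq_nonneg _)
  add_left := fischer_add_left
  smul_left p q r := fischer_smul_left r p q
  definite p h := by
    change fischer p p = 0 at h
    rw [fischer_self, Complex.ofReal_eq_zero, Finset.sum_eq_zero_iff_of_nonneg (fun α _ =>
      mul_nonneg (Finset.prod_nonneg fun i _ => Nat.cast_nonneg _) (Complex.normSq_nonneg _))] at h
    ext α
    by_cases hα : α ∈ p.support
    · have h2 : (∏ i, ((α i).factorial : ℝ)) ≠ 0 :=
        Finset.prod_ne_zero_iff.mpr fun i _ => Nat.cast_ne_zero.mpr (Nat.factorial_ne_zero _)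
      simpa [h2] using h α hα
    · simpa using hα

lemma eq_zero_of_fischer_self {p : MvPolynomial σ ℂ} (h : fischer p p = 0) : p = 0 :=
  fischerCore.definite p h

/-- Orthogonal projection, for the Fischer product, onto a finite-dimensional subspace. -/
lemma exists_fischer_projection (K : Submodule ℂ (MvPolynomial σ ℂ)) [FiniteDimensional ℂ K]
    (p : MvPolynomial σ ℂ) : ∃ e ∈ K, ∀ k ∈ K, fischer k (p - e) = 0 := by
  let _ : NormedAddCommGroup (MvPolynomial σ ℂ) := fischerCore.toNormedAddCommGroup
  let _ : InnerProductSpace ℂ (MvPolynomial σ ℂ) := InnerProductSpace.ofCore fischerCore.toCore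
  obtain ⟨e, he, z, hz, h⟩ := K.exists_add_mem_mem_orthogonal p
  refine ⟨e, he, fun k hk => ?_⟩
  have h2 : p - e = z := by rw [h, add_sub_cancel_left]
  rw [h2]
  exact (Submodule.mem_orthogonal K z).mp hz k hk

lemma fischer_monomial (α : σ →₀ ℕ) (c : ℂ) (q : MvPolynomial σ ℂ) :
    fischer (monomial α c) q =
      (∏ i, ((α i).factorial : ℂ)) * (starRingEnd ℂ c * coeff α q) := by
  rw [fischer_of_subset q (support_monomial_subset (s := α) (a := c)), Finset.sum_singleton]
  classical
  rw [coeff_monomial, if_pos rfl]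

/-- Multiplication by a variable is adjoint to the corresponding partial derivative. -/
lemma fischer_X_mul (i : σ) (p q : MvPolynomial σ ℂ) :
    fischer (X i * p) q = fischer p (pderiv i q) := by
  classical
  induction p using MvPolynomial.induction_on' with
  | add p p' h h' => rw [mul_add, fischer_add_left, fischer_add_left, h, h']
  | monomial α c =>
    have hfac : (∏ j, (((Finsupp.single i 1 + α : σ →₀ ℕ) j).factorial : ℂ)) =
        (α i + 1) * ∏ j, ((α j).factorial : ℂ) := by
      rw [← Finset.mul_prod_erase _ _ (Finset.mem_univ i),
        ← Finset.mul_prod_erase (Finset.univ) (fun j => ((α j).factorial : ℂ))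
          (Finset.mem_univ i), ← mul_assoc]
      congr 1
      · rw [Finsupp.add_apply, Finsupp.single_eq_same, add_comm, Nat.factorial_succ]
        push_cast
        ring
      · refine Finset.prod_congr rfl fun j hj => ?_
        rw [Finsupp.add_apply, Finsupp.single_eq_of_ne (Finset.ne_of_mem_erase hj), zero_add]
    rw [X, monomial_mul, one_mul, fischer_monomial, fischer_monomial, coeff_pderiv, hfac,
      add_comm α]
    ring

/-- The linear substitution `x ↦ L x` in a polynomial. -/
noncomputable def linSubst (L : Matrix σ σ ℂ) : MvPolynomial σ ℂ →ₐ[ℂ] MvPolynomial σ ℂ :=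
  aeval fun i => ∑ j, L i j • X j

lemma linSubst_X (L : Matrix σ σ ℂ) (i : σ) : linSubst L (X i) = ∑ j, L i j • X j := by
  simp [linSubst]

lemma eval_linSubst (L : Matrix σ σ ℂ) (x : σ → ℂ) (p : MvPolynomial σ ℂ) :
    eval x (linSubst L p) = eval (L *ᵥ x) p := by
  induction p using MvPolynomial.induction_on with
  | C c => simp [linSubst]
  | add p q hp hq => rw [map_add, map_add, map_add, hp, hq]
  | mul_X p i hp =>
    rw [map_mul, map_mul, map_mul, hp, linSubst_X]
    simp [Matrix.mulVec, dotProduct, smul_eval]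

lemma totalDegree_linSubst_le (L : Matrix σ σ ℂ) (p : MvPolynomial σ ℂ) :
    (linSubst L p).totalDegree ≤ p.totalDegree := by
  conv_lhs => rw [p.as_sum, map_sum]
  refine totalDegree_finsetSum_le fun α hα => ?_
  have hX : ∀ i, (∑ j, L i j • X j : MvPolynomial σ ℂ).IsHomogeneous 1 := fun i =>
    IsHomogeneous.sum _ _ _ fun j _ => by
      rw [smul_eq_C_mul]
      simpa using (isHomogeneous_C σ (L i j)).mul (isHomogeneous_X ℂ j)
  have h := (isHomogeneous_monomial (coeff α p) (rfl : α.degree = α.degree)).aeval _ hX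
  refine h.totalDegree_le.trans ?_
  rw [one_mul]
  exact le_totalDegree hα

lemma pderiv_linSubst (L : Matrix σ σ ℂ) (i : σ) (q : MvPolynomial σ ℂ) :
    pderiv i (linSubst L q) = ∑ j, L j i • linSubst L (pderiv j q) := by
  classical
  induction q using MvPolynomial.induction_on with
  | C c => simp [linSubst]
  | add p q hp hq => simp only [map_add, hp, hq, smul_add, Finset.sum_add_distrib]
  | mul_X p k hp =>
    have h1 : pderiv i (linSubst L (X k)) = C (L k i) := by
      rw [linSubst_X, map_sum]
      simp [pderiv_X, Pi.single_apply, smul_eq_C_mul]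
    rw [map_mul, pderiv_mul, hp, h1]
    simp only [pderiv_mul, map_add, map_mul, smul_add, Finset.sum_add_distrib, Finset.sum_mul,
      smul_mul_assoc]
    congr 1
    simp [pderiv_X, Pi.single_apply, smul_eq_C_mul, apply_ite, mul_comm]

/-- The adjoint of a linear substitution is the substitution of the conjugate transpose. -/
lemma fischer_linSubst (L : Matrix σ σ ℂ) (p q : MvPolynomial σ ℂ) :
    fischer (linSubst L p) q = fischer p (linSubst Lᴴ q) := by
  induction p using MvPolynomial.induction_on generalizing q with
  | C c =>
    have h0 : coeff 0 (linSubst Lᴴ q) = coeff 0 q := by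
      have := eval_linSubst Lᴴ 0 q
      rw [Matrix.mulVec_zero] at this
      simpa [← constantCoeff_eq] using this
    have hc : linSubst L (C c) = C c := by simp [linSubst]
    rw [hc, C_apply, fischer_monomial, fischer_monomial, h0]
  | add p p' hp hp' => rw [map_add, fischer_add_left, fischer_add_left, hp, hp']
  | mul_X p i hp =>
    rw [mul_comm p, fischer_X_mul, pderiv_linSubst, map_mul, linSubst_X, Finset.sum_mul,
      fischer_sum_left, fischer_sum_right]
    refine Finset.sum_congr rfl fun j _ => ?_
    rw [smul_mul_assoc, fischer_smul_left, fischer_X_mul, hp, fischer_smul_right,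
      Matrix.conjTranspose_apply]
    rfl

end Fischer

/-! ### Polynomial functions and the generated algebra in coordinates -/

section Pairs

/-- Precomposition with `φ` maps a subalgebra of functions generated by `S` into any
subalgebra that contains the images of the generators. -/
lemma adjoin_comp_mem {A B : Type*} {S : Set (A → ℂ)} {T : Subalgebra ℂ (B → ℂ)} (φ : B → A)
    (h : ∀ s ∈ S, (fun y => s (φ y)) ∈ T) {f : A → ℂ} (hf : f ∈ Algebra.adjoin ℂ S) :
    (fun y => f (φ y)) ∈ T := by
  induction hf using Algebra.adjoin_induction with
  | mem s hs => exact h s hs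
  | algebraMap r => exact T.algebraMap_mem r
  | add f g _ _ hf hg => exact T.add_mem hf hg
  | mul f g _ _ hf hg => exact T.mul_mem hf hg

/-- The coordinate form of a configuration: a matrix whose rows are the `a` covectors and a
matrix whose rows are the `b` vectors. -/
abbrev MatPair (n a b : ℕ) := Matrix (Fin a) (Fin n) ℂ × Matrix (Fin b) (Fin n) ℂ

/-- The index set of the coordinates on `MatPair n a b`. -/
abbrev CoordIdx (n a b : ℕ) := (Fin a × Fin n) ⊕ (Fin b × Fin n)

/-- The coordinate vector of a pair of matrices. -/
def coords {n a b : ℕ} (x : MatPair n a b) : CoordIdx n a b → ℂ :=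
  Sum.elim (fun q => x.1 q.1 q.2) (fun q => x.2 q.1 q.2)

/-- The algebra of polynomial functions on `MatPair n a b`. -/
noncomputable def polyFun (n a b : ℕ) : Subalgebra ℂ (MatPair n a b → ℂ) :=
  Algebra.adjoin ℂ (Set.range fun (s : CoordIdx n a b) (x : MatPair n a b) => coords x s)

/-- The algebra generated by the pairings and the maximal minors of both matrices. -/
noncomputable def genAlg (n a b : ℕ) : Subalgebra ℂ (MatPair n a b → ℂ) :=
  Algebra.adjoin ℂ
    ({h | ∃ (j : Fin a) (i : Fin b), h = fun x => (x.1 * (x.2)ᵀ) j i} ∪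
     {h | ∃ idx : Fin n → Fin b, h = fun x => (x.2.submatrix idx id).det} ∪
     {h | ∃ jdx : Fin n → Fin a, h = fun x => (x.1.submatrix jdx id).det})

/-- Invariance under `SL n`, acting by `(W, V) ↦ (W g⁻¹, V gᵀ)`; here `g'` stands for `g⁻¹`. -/
def IsInv {n a b : ℕ} (f : MatPair n a b → ℂ) : Prop :=
  ∀ g g' : Matrix (Fin n) (Fin n) ℂ, g * g' = 1 → g.det = 1 →
    ∀ x : MatPair n a b, f (x.1 * g', x.2 * gᵀ) = f x

/-- Replacing covectors and vectors by linear combinations of given ones; this commutes with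
the action of `SL n`. -/
def act {n a b a' b' : ℕ} (h : Matrix (Fin a) (Fin a') ℂ) (k : Matrix (Fin b) (Fin b') ℂ)
    (x : MatPair n a' b') : MatPair n a b := (h * x.1, k * x.2)

variable {n a b a' b' : ℕ}

lemma pairing_mem (j : Fin a) (i : Fin b) :
    (fun x : MatPair n a b => (x.1 * (x.2)ᵀ) j i) ∈ genAlg n a b :=
  Algebra.subset_adjoin (Or.inl (Or.inl ⟨j, i, rfl⟩))

lemma det_vec_mem (idx : Fin n → Fin b) :
    (fun x : MatPair n a b => (x.2.submatrix idx id).det) ∈ genAlg n a b :=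
  Algebra.subset_adjoin (Or.inl (Or.inr ⟨idx, rfl⟩))

lemma det_covec_mem (jdx : Fin n → Fin a) :
    (fun x : MatPair n a b => (x.1.submatrix jdx id).det) ∈ genAlg n a b :=
  Algebra.subset_adjoin (Or.inr ⟨jdx, rfl⟩)

lemma covec_coord_mem (j : Fin a) (i : Fin n) :
    (fun x : MatPair n a b => x.1 j i) ∈ polyFun n a b :=
  Algebra.subset_adjoin ⟨Sum.inl (j, i), rfl⟩

lemma vec_coord_mem (j : Fin b) (i : Fin n) :
    (fun x : MatPair n a b => x.2 j i) ∈ polyFun n a b :=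
  Algebra.subset_adjoin ⟨Sum.inr (j, i), rfl⟩

lemma mem_polyFun_iff {f : MatPair n a b → ℂ} :
    f ∈ polyFun n a b ↔
      ∃ p : MvPolynomial (CoordIdx n a b) ℂ, ∀ x, f x = eval (coords x) p := by
  have key : ∀ (p : MvPolynomial (CoordIdx n a b) ℂ) (x : MatPair n a b),
      aeval (fun s (x : MatPair n a b) => coords x s) p x = eval (coords x) p := by
    intro p x
    induction p using MvPolynomial.induction_on with
    | C c => simp
    | add p q hp hq => simp [hp, hq]
    | mul_X p i hp => simp [hp]
  rw [polyFun, Algebra.adjoin_range_eq_range_aeval, AlgHom.mem_range]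
  constructor
  · rintro ⟨p, rfl⟩
    exact ⟨p, key p⟩
  · rintro ⟨p, hp⟩
    refine ⟨p, ?_⟩
    funext x
    rw [hp x]
    exact key p x

lemma coords_surjective : Function.Surjective (coords (n := n) (a := a) (b := b)) := fun y =>
  ⟨(Matrix.of fun j i => y (Sum.inl (j, i)), Matrix.of fun j i => y (Sum.inr (j, i))), by
    funext s
    rcases s with s | s <;> rfl⟩

lemma mvPoly_eq_of_eval_coords {p q : MvPolynomial (CoordIdx n a b) ℂ}
    (h : ∀ x : MatPair n a b, eval (coords x) p = eval (coords x) q) : p = q :=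
  MvPolynomial.funext fun y => by
    obtain ⟨x, rfl⟩ := coords_surjective y
    exact h x

/-- Density of the nonvanishing locus of a nonzero polynomial function. -/
lemma polyFun_eq_of_dense {f F d : MatPair n a b → ℂ} (hf : f ∈ polyFun n a b)
    (hF : F ∈ polyFun n a b) (hd : d ∈ polyFun n a b) (hd0 : ∃ x, d x ≠ 0)
    (h : ∀ x, d x ≠ 0 → f x = F x) : f = F := by
  obtain ⟨p, hp⟩ := mem_polyFun_iff.mp hf
  obtain ⟨q, hq⟩ := mem_polyFun_iff.mp hF
  obtain ⟨r, hr⟩ := mem_polyFun_iff.mp hd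
  have hmul : (p - q) * r = 0 := mvPoly_eq_of_eval_coords fun x => by
    rw [map_mul, map_sub, map_zero, ← hp, ← hq, ← hr]
    by_cases hx : d x = 0
    · rw [hx, mul_zero]
    · rw [h x hx, sub_self, zero_mul]
  have hr0 : r ≠ 0 := by
    rintro rfl
    obtain ⟨x, hx⟩ := hd0
    exact hx (by rw [hr, map_zero])
  have hpq := sub_eq_zero.mp ((mul_eq_zero.mp hmul).resolve_right hr0)
  funext x
  rw [hp, hq, hpq]

lemma det_mem_of_entries {A : Type*} (T : Subalgebra ℂ (A → ℂ))
    (M : A → Matrix (Fin n) (Fin n) ℂ) (h : ∀ i j, (fun x => M x i j) ∈ T) :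
    (fun x => (M x).det) ∈ T := by
  have h2 : (fun x => (M x).det) =
      ∑ σ : Equiv.Perm (Fin n), (Equiv.Perm.sign σ : ℤ) • ∏ i, fun x => M x (σ i) i := by
    funext x
    simp [Matrix.det_apply, Units.smul_def]
  rw [h2]
  exact sum_mem fun σ _ => zsmul_mem (prod_mem fun i _ => h _ _) _

lemma genAlg_le_polyFun : genAlg n a b ≤ polyFun n a b := by
  refine Algebra.adjoin_le ?_
  rintro h ((⟨j, i, rfl⟩ | ⟨idx, rfl⟩) | ⟨jdx, rfl⟩)
  · have h2 : (fun x : MatPair n a b => (x.1 * (x.2)ᵀ) j i) =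
        ∑ l, (fun x : MatPair n a b => x.1 j l) * fun x => x.2 i l := by
      funext x
      simp [Matrix.mul_apply]
    rw [h2]
    exact sum_mem fun l _ => mul_mem (covec_coord_mem _ _) (vec_coord_mem _ _)
  · exact det_mem_of_entries _ (fun x : MatPair n a b => x.2.submatrix idx id) fun i j =>
      vec_coord_mem (idx i) j
  · exact det_mem_of_entries _ (fun x : MatPair n a b => x.1.submatrix jdx id) fun i j =>
      covec_coord_mem (jdx i) j

lemma genAlg_isInv {f : MatPair n a b → ℂ} (hf : f ∈ genAlg n a b) : IsInv f := by
  intro g g' hg hdet x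
  have hg' : g'.det = 1 := by
    have := congrArg Matrix.det hg
    rwa [Matrix.det_mul, hdet, one_mul, Matrix.det_one] at this
  induction hf using Algebra.adjoin_induction with
  | mem s hs =>
    rcases hs with (⟨j, i, rfl⟩ | ⟨idx, rfl⟩) | ⟨jdx, rfl⟩
    · have : x.1 * g' * (x.2 * gᵀ)ᵀ = x.1 * (x.2)ᵀ := by
        rw [Matrix.transpose_mul, Matrix.transpose_transpose, Matrix.mul_assoc,
          ← Matrix.mul_assoc g', mul_eq_one_comm.mp hg, Matrix.one_mul]
      simp only [this]
    · have : (x.2 * gᵀ).submatrix idx id = x.2.submatrix idx id * gᵀ := rfl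
      simp only [this, Matrix.det_mul, Matrix.det_transpose, hdet, mul_one]
    · have : (x.1 * g').submatrix jdx id = x.1.submatrix jdx id * g' := rfl
      simp only [this, Matrix.det_mul, hg', mul_one]
  | algebraMap r => rfl
  | add f g _ _ hf hg => exact congrArg₂ (· + ·) hf hg
  | mul f g _ _ hf hg => exact congrArg₂ (· * ·) hf hg

lemma det_submatrix_mul (h : Matrix (Fin a) (Fin a') ℂ) (W : Matrix (Fin a') (Fin n) ℂ)
    (idx : Fin n → Fin a) :
    ((h * W).submatrix idx id).det =
      ∑ r : Fin n → Fin a', (∏ k, h (idx k) (r k)) * (W.submatrix r id).det := by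
  have h1 : (h * W).submatrix idx id = fun k => ∑ j, h (idx k) j • W j := by
    ext k i
    simp [Matrix.mul_apply]
  have h2 := (Matrix.detRowAlternating (R := ℂ) (n := Fin n)).toMultilinearMap.map_sum
    (fun k j => h (idx k) j • W j)
  rw [h1]
  refine h2.trans (Finset.sum_congr rfl fun r _ => ?_)
  exact (Matrix.detRowAlternating (R := ℂ) (n := Fin n)).toMultilinearMap.map_smul_univ
    (fun k => h (idx k) (r k)) (fun k => W (r k))

lemma genAlg_act (h : Matrix (Fin a) (Fin a') ℂ) (k : Matrix (Fin b) (Fin b') ℂ)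
    {f : MatPair n a b → ℂ} (hf : f ∈ genAlg n a b) :
    (fun x => f (act h k x)) ∈ genAlg n a' b' := by
  refine adjoin_comp_mem (act h k) ?_ hf
  rintro s ((⟨j, i, rfl⟩ | ⟨idx, rfl⟩) | ⟨jdx, rfl⟩)
  · have h2 : (fun x : MatPair n a' b' => ((act h k x).1 * ((act h k x).2)ᵀ) j i) =
        ∑ j', ∑ i', (h j j' * k i i') • fun x : MatPair n a' b' => (x.1 * (x.2)ᵀ) j' i' := by
      funext x
      have : (act h k x).1 * ((act h k x).2)ᵀ = h * (x.1 * (x.2)ᵀ) * kᵀ := by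
        simp only [act, Matrix.transpose_mul, Matrix.mul_assoc]
      simp only [this]
      simp only [Matrix.mul_apply (M := h * (x.1 * (x.2)ᵀ)), Matrix.mul_apply (M := h),
        Matrix.transpose_apply, Finset.sum_apply, Pi.smul_apply, smul_eq_mul, Finset.sum_mul]
      rw [Finset.sum_comm]
      exact Finset.sum_congr rfl fun _ _ => Finset.sum_congr rfl fun _ _ => by ring
    rw [h2]
    exact sum_mem fun j' _ => sum_mem fun i' _ => Subalgebra.smul_mem _ (pairing_mem _ _) _
  · have h2 : (fun x : MatPair n a' b' => ((act h k x).2.submatrix idx id).det) =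
        ∑ r : Fin n → Fin b', (∏ l, k (idx l) (r l)) •
          fun x : MatPair n a' b' => (x.2.submatrix r id).det := by
      funext x
      simp [act, det_submatrix_mul]
    rw [h2]
    exact sum_mem fun r _ => Subalgebra.smul_mem _ (det_vec_mem _) _
  · have h2 : (fun x : MatPair n a' b' => ((act h k x).1.submatrix jdx id).det) =
        ∑ r : Fin n → Fin a', (∏ l, h (jdx l) (r l)) •
          fun x : MatPair n a' b' => (x.1.submatrix r id).det := by
      funext x
      simp [act, det_submatrix_mul]
    rw [h2]
    exact sum_mem fun r _ => Subalgebra.smul_mem _ (det_covec_mem _) _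

lemma polyFun_act (h : Matrix (Fin a) (Fin a') ℂ) (k : Matrix (Fin b) (Fin b') ℂ)
    {f : MatPair n a b → ℂ} (hf : f ∈ polyFun n a b) :
    (fun x => f (act h k x)) ∈ polyFun n a' b' := by
  refine adjoin_comp_mem (act h k) ?_ hf
  rintro _ ⟨⟨j, i⟩ | ⟨j, i⟩, rfl⟩
  · have h2 : (fun x : MatPair n a' b' => coords (act h k x) (Sum.inl (j, i))) =
        ∑ l, h j l • fun x : MatPair n a' b' => x.1 l i := by
      funext x
      simp [coords, act, Matrix.mul_apply]
    simp only [h2]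
    exact sum_mem fun l _ => Subalgebra.smul_mem _ (covec_coord_mem _ _) _
  · have h2 : (fun x : MatPair n a' b' => coords (act h k x) (Sum.inr (j, i))) =
        ∑ l, k j l • fun x : MatPair n a' b' => x.2 l i := by
      funext x
      simp [coords, act, Matrix.mul_apply]
    simp only [h2]
    exact sum_mem fun l _ => Subalgebra.smul_mem _ (vec_coord_mem _ _) _

lemma IsInv.act {f : MatPair n a b → ℂ} (hf : IsInv f) (h : Matrix (Fin a) (Fin a') ℂ)
    (k : Matrix (Fin b) (Fin b') ℂ) : IsInv fun x => f (act h k x) := by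
  intro g g' hg hdet x
  have := hf g g' hg hdet (VectorFFT.act h k x)
  simpa only [VectorFFT.act, Matrix.mul_assoc] using this

end Pairs

/-! ### The case of `n` covectors and `n` vectors -/

section Square

/-- Grouping the monomials by weight for the action `x s ↦ t ^ wt s * x s` of `ℂˣ`. -/
lemma exists_weight_decomp {σ : Type*} [Fintype σ] (p : MvPolynomial σ ℂ) (wt : σ → ℤ) :
    ∃ (K : Finset ℤ) (c : ℤ → MvPolynomial σ ℂ), ∀ t : ℂ, t ≠ 0 → ∀ x : σ → ℂ,
      eval (fun s => x s * t ^ wt s) p = ∑ k ∈ K, t ^ k * eval x (c k) := by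
  classical
  let w : (σ →₀ ℕ) → ℤ := fun α => ∑ s, wt s * α s
  refine ⟨p.support.image w, fun k => ∑ α ∈ p.support with w α = k, monomial α (coeff α p),
    fun t ht x => ?_⟩
  have h1 : ∀ α : σ →₀ ℕ,
      ∏ s, (x s * t ^ wt s) ^ α s = t ^ w α * ∏ s, x s ^ α s := by
    intro α
    have h2 : t ^ w α = ∏ s, t ^ (wt s * α s) := by
      simp only [w]
      induction (Finset.univ : Finset σ) using Finset.induction_on with
      | empty => simp
      | insert s S hs ih => rw [Finset.sum_insert hs, Finset.prod_insert hs, zpow_add₀ ht, ih]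
    rw [h2, ← Finset.prod_mul_distrib]
    refine Finset.prod_congr rfl fun s _ => ?_
    rw [mul_pow, _root_.zpow_mul, zpow_natCast, mul_comm]
  rw [eval_eq', ← Finset.sum_fiberwise_of_maps_to (t := p.support.image w) (g := w)
    fun α hα => Finset.mem_image_of_mem w hα]
  refine Finset.sum_congr rfl fun k _ => ?_
  rw [map_sum, Finset.mul_sum]
  refine Finset.sum_congr rfl fun α hα => ?_
  rw [h1, (Finset.mem_filter.mp hα).2, eval_monomial, Finsupp.prod_fintype _ _ (by simp)]
  ring

/-- Coefficients of Laurent polynomials are determined by the values on `ℂˣ`: distinct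
characters of `ℂˣ` are linearly independent. -/
lemma laurent_coeff_eq (K : Finset ℤ) (A B : ℤ → ℂ)
    (h : ∀ t : ℂ, t ≠ 0 → ∑ k ∈ K, t ^ k * A k = ∑ k ∈ K, t ^ k * B k) :
    ∀ k ∈ K, A k = B k := by
  let χ : ℤ → (ℂˣ →* ℂ) := fun k => (Units.coeHom ℂ).comp (zpowGroupHom k)
  have hχ : Function.Injective χ := by
    intro k l hkl
    have h2 := DFunLike.congr_fun hkl (Units.mk0 (2 : ℂ) two_ne_zero)
    have h3 : ((2 : ℝ) : ℂ) ^ k = ((2 : ℝ) : ℂ) ^ l := by simpa [χ] using h2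
    have h4 : (2 : ℝ) ^ k = (2 : ℝ) ^ l := by exact_mod_cast h3
    exact zpow_right_injective₀ (by norm_num) (by norm_num) h4
  have hli := (linearIndependent_monoidHom ℂˣ ℂ).comp χ hχ
  have h5 := linearIndependent_iff'.mp hli K (fun k => A k - B k) (by
    funext t
    have := h t t.ne_zero
    simp only [Finset.sum_apply, Pi.smul_apply, Function.comp_apply, smul_eq_mul, sub_mul,
      Finset.sum_sub_distrib, Pi.zero_apply, sub_eq_zero]
    simpa [χ, mul_comm] using this)
  exact fun k hk => sub_eq_zero.mp (h5 k hk)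

variable {n a b : ℕ}

/-- The one-parameter subgroup `diag(t, 1, …, 1)`, with the entry `t` in position `i₀`. -/
noncomputable def torus (i₀ : Fin n) (t : ℂ) : Matrix (Fin n) (Fin n) ℂ :=
  Matrix.diagonal fun i => t ^ (if i = i₀ then (1 : ℤ) else 0)

lemma torus_det (i₀ : Fin n) (t : ℂ) : (torus i₀ t).det = t := by
  rw [torus, Matrix.det_diagonal, Finset.prod_eq_single i₀]
  · simp
  · intro j _ hj
    simp [hj]
  · simp

lemma torus_mul_inv (i₀ : Fin n) {t : ℂ} (ht : t ≠ 0) : torus i₀ t * torus i₀ t⁻¹ = 1 := by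
  rw [torus, torus, Matrix.diagonal_mul_diagonal, ← Matrix.diagonal_one]
  congr 1
  funext i
  rw [← mul_zpow, mul_inv_cancel₀ ht, _root_.one_zpow]

lemma torus_inv_mul (i₀ : Fin n) {t : ℂ} (ht : t ≠ 0) : torus i₀ t⁻¹ * torus i₀ t = 1 :=
  mul_eq_one_comm.mp (torus_mul_inv i₀ ht)

lemma torus_transpose (i₀ : Fin n) (t : ℂ) : (torus i₀ t)ᵀ = torus i₀ t :=
  Matrix.diagonal_transpose _

/-- Weight decomposition of a polynomial function under the one-parameter subgroup `torus`. -/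
lemma exists_torus_decomp (i₀ : Fin n) {f : MatPair n a b → ℂ} (hf : f ∈ polyFun n a b) :
    ∃ (K : Finset ℤ) (c : ℤ → MatPair n a b → ℂ), (∀ k, c k ∈ polyFun n a b) ∧
      ∀ t : ℂ, t ≠ 0 → ∀ x : MatPair n a b,
        f (x.1 * torus i₀ t, x.2 * torus i₀ t⁻¹) = ∑ k ∈ K, t ^ k * c k x := by
  obtain ⟨p, hp⟩ := mem_polyFun_iff.mp hf
  obtain ⟨K, c, hc⟩ := exists_weight_decomp p
    (Sum.elim (fun q => if q.2 = i₀ then (1 : ℤ) else 0)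
      (fun q => -(if q.2 = i₀ then (1 : ℤ) else 0)))
  refine ⟨K, fun k x => eval (coords x) (c k),
    fun k => mem_polyFun_iff.mpr ⟨c k, fun x => rfl⟩, fun t ht x => ?_⟩
  rw [hp, ← hc t ht]
  congr 2
  funext s
  rcases s with ⟨j, i⟩ | ⟨j, i⟩
  · simp only [coords, Sum.elim_inl, torus, Matrix.mul_diagonal]
  · simp only [coords, Sum.elim_inr, torus, Matrix.mul_diagonal, _root_.inv_zpow, _root_.zpow_neg]

/-- The case of exactly `n` covectors and `n` vectors. An invariant is determined on the locus
`det W ≠ 0` by its values on pairs `(torus t, ·)`, and on the locus `det V ≠ 0` by its values on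
pairs `(·, torus t)`. The two resulting Laurent expansions, in `det W` and in `det V`, have
matching coefficients; the nonnegative part of the first and the negative part of the second
then give a polynomial expression in `det W`, `det V` and the pairings. -/
lemma mem_genAlg_square (hn : 1 ≤ n) {f : MatPair n n n → ℂ} (hf : f ∈ polyFun n n n)
    (hinv : IsInv f) : f ∈ genAlg n n n := by
  obtain ⟨K, c, hc, hdec⟩ := exists_torus_decomp (⟨0, hn⟩ : Fin n) hf
  generalize (⟨0, hn⟩ : Fin n) = i₀ at hdec
  have H1 : ∀ W V : Matrix (Fin n) (Fin n) ℂ, W.det ≠ 0 →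
      f (W, V) = ∑ k ∈ K, W.det ^ k * c k (1, V * Wᵀ) := by
    intro W V hW
    rw [← hdec _ hW, ← hinv (torus i₀ W.det⁻¹ * W) (W⁻¹ * torus i₀ W.det)]
    · simp only [Matrix.transpose_mul, torus_transpose, Matrix.one_mul, Matrix.mul_assoc]
      rw [← Matrix.mul_assoc W, Matrix.mul_nonsing_inv _ (isUnit_iff_ne_zero.mpr hW),
        Matrix.one_mul]
    · rw [Matrix.mul_assoc, ← Matrix.mul_assoc W,
        Matrix.mul_nonsing_inv _ (isUnit_iff_ne_zero.mpr hW), Matrix.one_mul,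
        torus_inv_mul i₀ hW]
    · rw [Matrix.det_mul, torus_det, inv_mul_cancel₀ hW]
  have H2 : ∀ W V : Matrix (Fin n) (Fin n) ℂ, V.det ≠ 0 →
      f (W, V) = ∑ k ∈ K, (V.det⁻¹) ^ k * c k (W * Vᵀ, 1) := by
    intro W V hV
    have hV' : IsUnit V.det := isUnit_iff_ne_zero.mpr hV
    rw [← hdec _ (inv_ne_zero hV), inv_inv,
      ← hinv (torus i₀ V.det * (V⁻¹)ᵀ) (Vᵀ * torus i₀ V.det⁻¹)]
    · simp only [Matrix.transpose_mul, torus_transpose, Matrix.transpose_transpose,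
        Matrix.one_mul, Matrix.mul_assoc]
      rw [← Matrix.mul_assoc V, Matrix.mul_nonsing_inv _ hV', Matrix.one_mul]
    · rw [Matrix.mul_assoc, ← Matrix.mul_assoc (V⁻¹)ᵀ, ← Matrix.transpose_mul,
        Matrix.mul_nonsing_inv _ hV', Matrix.transpose_one, Matrix.one_mul,
        torus_mul_inv i₀ hV]
    · rw [Matrix.det_mul, torus_det, Matrix.det_transpose, Matrix.det_nonsing_inv,
        Ring.inverse_eq_inv', mul_inv_cancel₀ hV]
  -- Comparing both expansions along the curve `(torus t, Zᵀ * torus t⁻¹)`, on which the product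
  -- `W * Vᵀ = Z` is constant.
  have H3 : ∀ Z : Matrix (Fin n) (Fin n) ℂ, Z.det ≠ 0 → ∀ k ∈ K,
      c k (1, Zᵀ) = (Z.det⁻¹) ^ k * c k (Z, 1) := by
    intro Z hZ
    refine laurent_coeff_eq K _ _ fun t ht => ?_
    have hdV : (Zᵀ * torus i₀ t⁻¹).det = Z.det * t⁻¹ := by
      rw [Matrix.det_mul, torus_det, Matrix.det_transpose]
    have e1 := H1 (torus i₀ t) (Zᵀ * torus i₀ t⁻¹) (by rwa [torus_det])
    have e2 := H2 (torus i₀ t) (Zᵀ * torus i₀ t⁻¹) (by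
      rw [hdV]
      exact mul_ne_zero hZ (inv_ne_zero ht))
    rw [torus_det, torus_transpose, Matrix.mul_assoc, torus_inv_mul i₀ ht, Matrix.mul_one] at e1
    rw [hdV, Matrix.transpose_mul, torus_transpose, Matrix.transpose_transpose,
      ← Matrix.mul_assoc, torus_mul_inv i₀ ht, Matrix.one_mul] at e2
    rw [← e1, e2]
    refine Finset.sum_congr rfl fun k _ => ?_
    rw [mul_inv, inv_inv, mul_zpow]
    ring
  have hdetW : (fun x : MatPair n n n => x.1.det) ∈ genAlg n n n := det_covec_mem id
  have hdetV : (fun x : MatPair n n n => x.2.det) ∈ genAlg n n n := det_vec_mem id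
  have hone : ∀ i j : Fin n, (fun _ : MatPair n n n => (1 : Matrix (Fin n) (Fin n) ℂ) i j) ∈
      genAlg n n n := fun i j => (genAlg n n n).algebraMap_mem _
  have hc1 : ∀ k, (fun x : MatPair n n n => c k (1, x.2 * (x.1)ᵀ)) ∈ genAlg n n n := by
    intro k
    refine adjoin_comp_mem (fun x : MatPair n n n => ((1, x.2 * (x.1)ᵀ) : MatPair n n n)) ?_ (hc k)
    rintro _ ⟨⟨j, i⟩ | ⟨j, i⟩, rfl⟩
    · exact hone j i
    · have h2 : (fun x : MatPair n n n => (x.2 * (x.1)ᵀ) j i) =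
          fun x : MatPair n n n => (x.1 * (x.2)ᵀ) i j := by
        funext x
        rw [← Matrix.transpose_apply (x.1 * (x.2)ᵀ), Matrix.transpose_mul,
          Matrix.transpose_transpose]
      change (fun x : MatPair n n n => (x.2 * (x.1)ᵀ) j i) ∈ _
      rw [h2]
      exact pairing_mem i j
  have hc2 : ∀ k, (fun x : MatPair n n n => c k (x.1 * (x.2)ᵀ, 1)) ∈ genAlg n n n := by
    intro k
    refine adjoin_comp_mem (fun x : MatPair n n n => ((x.1 * (x.2)ᵀ, 1) : MatPair n n n)) ?_ (hc k)
    rintro _ ⟨⟨j, i⟩ | ⟨j, i⟩, rfl⟩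
    · exact pairing_mem j i
    · exact hone j i
  let F : MatPair n n n → ℂ := ∑ k ∈ K, if 0 ≤ k
    then (fun x : MatPair n n n => x.1.det) ^ k.toNat * fun x => c k (1, x.2 * (x.1)ᵀ)
    else (fun x : MatPair n n n => x.2.det) ^ (-k).toNat * fun x => c k (x.1 * (x.2)ᵀ, 1)
  have hF : F ∈ genAlg n n n := by
    refine sum_mem fun k _ => ?_
    split_ifs
    · exact mul_mem (pow_mem hdetW _) (hc1 k)
    · exact mul_mem (pow_mem hdetV _) (hc2 k)
  have hfF : f = F := by
    refine polyFun_eq_of_dense hf (genAlg_le_polyFun hF)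
      (genAlg_le_polyFun (mul_mem hdetW hdetV)) ⟨(1, 1), by simp⟩ ?_
    rintro ⟨W, V⟩ hx
    have hW : W.det ≠ 0 := left_ne_zero_of_mul hx
    have hV : V.det ≠ 0 := right_ne_zero_of_mul hx
    rw [H1 W V hW]
    simp only [F, Finset.sum_apply]
    refine Finset.sum_congr rfl fun k hk => ?_
    split_ifs with h0
    · simp only [Pi.mul_apply, Pi.pow_apply]
      rw [← zpow_natCast, Int.toNat_of_nonneg h0]
    · have h3 := H3 (W * Vᵀ) (by
        rw [Matrix.det_mul, Matrix.det_transpose]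
        exact mul_ne_zero hW hV) k hk
      rw [Matrix.transpose_mul, Matrix.transpose_transpose, Matrix.det_mul,
        Matrix.det_transpose] at h3
      simp only [Pi.mul_apply, Pi.pow_apply]
      rw [h3, ← zpow_natCast, Int.toNat_of_nonneg (by omega), ← mul_assoc, ← mul_zpow,
        mul_inv, mul_inv_cancel_left₀ hW, _root_.zpow_neg, _root_.inv_zpow]
  rw [hfF]
  exact hF

end Square

/-! ### Reduction to the square case -/

section General

open scoped Kronecker

variable {n a b : ℕ}

/-- The matrix, in coordinates, of `(W, V) ↦ (h W, k V)`. -/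
noncomputable def actMat (n : ℕ) {a b : ℕ} (h : Matrix (Fin a) (Fin a) ℂ)
    (k : Matrix (Fin b) (Fin b) ℂ) : Matrix (CoordIdx n a b) (CoordIdx n a b) ℂ :=
  Matrix.fromBlocks (h ⊗ₖ 1) 0 0 (k ⊗ₖ 1)

lemma actMat_mulVec (h : Matrix (Fin a) (Fin a) ℂ) (k : Matrix (Fin b) (Fin b) ℂ)
    (x : MatPair n a b) : actMat n h k *ᵥ coords x = coords (act h k x) := by
  funext s
  rcases s with ⟨j, i⟩ | ⟨j, i⟩
  · simp [actMat, coords, act, Matrix.mulVec, dotProduct, Fintype.sum_prod_type,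
      Matrix.mul_apply, Matrix.one_apply]
  · simp [actMat, coords, act, Matrix.mulVec, dotProduct, Fintype.sum_prod_type,
      Matrix.mul_apply, Matrix.one_apply]

lemma actMat_conjTranspose (h : Matrix (Fin a) (Fin a) ℂ) (k : Matrix (Fin b) (Fin b) ℂ) :
    (actMat n h k)ᴴ = actMat n hᴴ kᴴ := by
  simp only [actMat, Matrix.fromBlocks_conjTranspose, Matrix.conjTranspose_zero,
    Matrix.conjTranspose_kronecker, Matrix.conjTranspose_one]

lemma eval_linSubst_actMat (h : Matrix (Fin a) (Fin a) ℂ) (k : Matrix (Fin b) (Fin b) ℂ)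
    (p : MvPolynomial (CoordIdx n a b) ℂ) (x : MatPair n a b) :
    eval (coords x) (linSubst (actMat n h k) p) = eval (coords (act h k x)) p := by
  rw [eval_linSubst, actMat_mulVec]

/-- Every matrix has a generalized inverse. -/
lemma exists_ginverse (W : Matrix (Fin a) (Fin n) ℂ) :
    ∃ G : Matrix (Fin n) (Fin a) ℂ, W * G * W = W := by
  obtain ⟨s, hs⟩ := W.mulVecLin.rangeRestrict.exists_rightInverse_of_surjective
    (LinearMap.range_rangeRestrict _)
  obtain ⟨g, hg⟩ := LinearMap.exists_extend s
  refine ⟨LinearMap.toMatrix' g, ?_⟩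
  apply Matrix.toLin'.injective
  refine LinearMap.ext fun v => ?_
  have h1 : g (W *ᵥ v) = s ⟨W *ᵥ v, ⟨v, rfl⟩⟩ := by
    rw [← hg]
    rfl
  have h2 := LinearMap.congr_fun hs ⟨W *ᵥ v, ⟨v, rfl⟩⟩
  rw [Matrix.toLin'_mul, Matrix.toLin'_mul, Matrix.toLin'_toMatrix']
  simp only [LinearMap.comp_apply, Matrix.toLin'_apply]
  rw [h1]
  exact congrArg Subtype.val h2

/-- Reduction of the general case to `n` covectors and `n` vectors. Let `q` be the component of
the invariant orthogonal to the generated algebra. The orthogonal complement is stable under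
all `(W, V) ↦ (h W, k V)`, because the adjoint of such a substitution is one of the same kind.
When `h` and `k` factor through `ℂⁿ`, the square case puts the transform of `q` in the generated
algebra, so it vanishes; since every `(W, V)` is fixed by some such `(h, k)`, `q = 0`. -/
lemma mem_genAlg_of_isInv (hn : 1 ≤ n) {f : MatPair n a b → ℂ} (hf : f ∈ polyFun n a b)
    (hinv : IsInv f) : f ∈ genAlg n a b := by
  obtain ⟨p, hp⟩ := mem_polyFun_iff.mp hf
  -- The elements of the generated algebra of degree at most `deg p`.
  let K : Submodule ℂ (MvPolynomial (CoordIdx n a b) ℂ) :=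
    { carrier := {r | (fun x : MatPair n a b => eval (coords x) r) ∈ genAlg n a b}
      add_mem' := fun {r s} hr hs => by
        simp only [Set.mem_ofPred_eq, map_add] at hr hs ⊢
        exact add_mem hr hs
      zero_mem' := by
        simp only [Set.mem_ofPred_eq, map_zero]
        exact zero_mem _
      smul_mem' := fun c r hr => by
        simp only [Set.mem_ofPred_eq, smul_eval] at hr ⊢
        exact Subalgebra.smul_mem _ hr c } ⊓ restrictTotalDegree _ ℂ p.totalDegree
  have hKmem : ∀ r, r ∈ K ↔ (fun x : MatPair n a b => eval (coords x) r) ∈ genAlg n a b ∧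
      r.totalDegree ≤ p.totalDegree := fun r => by
    rw [Submodule.mem_inf, mem_restrictTotalDegree]
    rfl
  have hfin : FiniteDimensional ℂ K := Submodule.finiteDimensional_inf_right _ _
  obtain ⟨e, he, hort⟩ := exists_fischer_projection K p
  obtain ⟨heA, hed⟩ := (hKmem e).mp he
  set q := p - e with hq
  let fq : MatPair n a b → ℂ := fun x => eval (coords x) q
  have hfq : fq = f - fun x => eval (coords x) e := by
    funext x
    simp [fq, hq, hp]
  have hqP : fq ∈ polyFun n a b := mem_polyFun_iff.mpr ⟨q, fun _ => rfl⟩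
  have hqinv : IsInv fq := by
    intro g g' hg hdet x
    rw [hfq]
    exact congrArg₂ (· - ·) (hinv g g' hg hdet x) (genAlg_isInv heA g g' hg hdet x)
  have hqdeg : q.totalDegree ≤ p.totalDegree :=
    (totalDegree_sub p e).trans (max_le le_rfl hed)
  have hKstab : ∀ h k, ∀ r ∈ K, linSubst (actMat n h k) r ∈ K := by
    intro h k r hr
    rw [hKmem] at hr ⊢
    refine ⟨?_, (totalDegree_linSubst_le _ _).trans hr.2⟩
    simp only [eval_linSubst_actMat]
    exact genAlg_act h k hr.1
  have hvanish : ∀ (h₁ : Matrix (Fin a) (Fin n) ℂ) (h₂ : Matrix (Fin n) (Fin a) ℂ)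
      (k₁ : Matrix (Fin b) (Fin n) ℂ) (k₂ : Matrix (Fin n) (Fin b) ℂ),
      linSubst (actMat n (h₁ * h₂) (k₁ * k₂)) q = 0 := by
    intro h₁ h₂ k₁ k₂
    have hmem : linSubst (actMat n (h₁ * h₂) (k₁ * k₂)) q ∈ K := by
      rw [hKmem]
      refine ⟨?_, (totalDegree_linSubst_le _ _).trans hqdeg⟩
      have hsq := genAlg_act h₂ k₂
        (mem_genAlg_square hn (polyFun_act h₁ k₁ hqP) (hqinv.act h₁ k₁))
      simp only [eval_linSubst_actMat]
      simpa only [act, fq, Matrix.mul_assoc] using hsq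
    apply eq_zero_of_fischer_self
    rw [← Matrix.conjTranspose_conjTranspose (actMat n (h₁ * h₂) (k₁ * k₂)),
      ← fischer_linSubst, Matrix.conjTranspose_conjTranspose, actMat_conjTranspose]
    exact hort _ (hKstab _ _ _ hmem)
  have hq0 : fq = 0 := by
    funext x
    obtain ⟨G, hG⟩ := exists_ginverse x.1
    obtain ⟨H, hH⟩ := exists_ginverse x.2
    have h1 := eval_linSubst_actMat (x.1 * G) (x.2 * H) q x
    rw [hvanish, map_zero] at h1
    have h2 : act (x.1 * G) (x.2 * H) x = x := Prod.ext hG hH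
    rw [h2] at h1
    exact h1.symm
  rw [hq0] at hfq
  rw [sub_eq_zero.mp hfq.symm]
  exact heA

end General

/-! ### Coordinates on configurations -/

section Transfer

variable {n a b : ℕ}

/-- The coordinate form of a configuration: row `j` of the first matrix lists the values of the
`j`-th covector on the standard basis. -/
def toPair (p : VecCovecConfig n a b) : MatPair n a b :=
  (Matrix.of fun j i => p.1 j (Pi.single i 1), Matrix.of p.2)

/-- The configuration with given coordinates. -/
noncomputable def ofPair (x : MatPair n a b) : VecCovecConfig n a b :=
  (fun j => ∑ i, x.1 j i • LinearMap.proj i, x.2)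

lemma ofPair_fst_apply (x : MatPair n a b) (j : Fin a) (v : Fin n → ℂ) :
    (ofPair x).1 j v = ∑ i, x.1 j i * v i := by
  simp [ofPair]

lemma ofPair_fst_single (x : MatPair n a b) (j : Fin a) (i : Fin n) :
    (ofPair x).1 j (Pi.single i 1) = x.1 j i := by
  simp [ofPair_fst_apply, Pi.single_apply]

lemma covec_apply (w : Module.Dual ℂ (Fin n → ℂ)) (v : Fin n → ℂ) :
    w v = ∑ i, w (Pi.single i 1) * v i := by
  conv_lhs => rw [pi_eq_sum_univ' v, map_sum]
  refine Finset.sum_congr rfl fun i _ => ?_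
  rw [map_smul, smul_eq_mul, mul_comm]

lemma ofPair_toPair (p : VecCovecConfig n a b) : ofPair (toPair p) = p := by
  refine Prod.ext (funext fun j => LinearMap.ext fun v => ?_) rfl
  rw [ofPair_fst_apply, covec_apply (p.1 j)]
  rfl

lemma toPair_ofPair (x : MatPair n a b) : toPair (ofPair x) = x := by
  refine Prod.ext ?_ rfl
  ext j i
  exact ofPair_fst_single x j i

lemma toPair_smul (p : VecCovecConfig n a b) (g g' : Matrix (Fin n) (Fin n) ℂ) :
    toPair (fun j => (p.1 j).comp (Matrix.mulVecLin g'), fun i => g.mulVec (p.2 i)) =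
      ((toPair p).1 * g', (toPair p).2 * gᵀ) := by
  refine Prod.ext ?_ ?_
  · ext j i
    simp only [toPair, Matrix.of_apply, LinearMap.comp_apply, Matrix.mul_apply]
    rw [covec_apply]
    simp
  · ext j i
    simp [toPair, Matrix.mul_apply, Matrix.mulVec, dotProduct, mul_comm]

end Transfer

end VectorFFT

open VectorFFT in
theorem first_fundamental_theorem_vectors_covectors (n a b : ℕ) (hn : 1 ≤ n) :
    {f : VecCovecConfig n a b → ℂ |
        -- f is a polynomial function: it lies in the ℂ-subalgebra generated by
        -- the entries of the covectors and the entries of the vectors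
        f ∈ Algebra.adjoin ℂ
          ({h : VecCovecConfig n a b → ℂ | ∃ (j : Fin a) (i : Fin n),
              h = fun p => p.1 j (Pi.single i 1)} ∪
           {h : VecCovecConfig n a b → ℂ | ∃ (i : Fin b) (j : Fin n),
              h = fun p => p.2 i j}) ∧
        -- f is SL(n,ℂ)-invariant
        ∀ (g : Matrix.SpecialLinearGroup (Fin n) ℂ) (p : VecCovecConfig n a b),
          f (fun j => (p.1 j).comp (Matrix.mulVecLin (g⁻¹).val),
             fun i => g.val.mulVec (p.2 i)) = f p} =
      (Algebra.adjoin ℂ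
        -- (i) the pairings w_j(v_i)
        ({h : VecCovecConfig n a b → ℂ | ∃ (j : Fin a) (i : Fin b),
            h = fun p => p.1 j (p.2 i)} ∪
        -- (ii) the volume forms det(v_{i₁}, …, v_{iₙ})
         {h : VecCovecConfig n a b → ℂ | ∃ idx : Fin n → Fin b,
            h = fun p => Matrix.det (Matrix.of fun k => p.2 (idx k))} ∪
        -- (iii) the dual volume forms det(w_{j₁}, …, w_{jₙ})
         {h : VecCovecConfig n a b → ℂ | ∃ jdx : Fin n → Fin a,
            h = fun p => Matrix.det (Matrix.of fun k j =>
              p.1 (jdx k) (Pi.single j 1))}) : Set _) := by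
  ext f
  simp only [Set.mem_ofPred_eq, SetLike.mem_coe]
  constructor
  · rintro ⟨hf, hinv⟩
    have hpoly : (fun x : MatPair n a b => f (ofPair x)) ∈ polyFun n a b := by
      refine adjoin_comp_mem ofPair ?_ hf
      rintro _ (⟨j, i, rfl⟩ | ⟨i, j, rfl⟩)
      · simp only [ofPair_fst_single]
        exact covec_coord_mem j i
      · exact vec_coord_mem i j
    have hI : IsInv fun x : MatPair n a b => f (ofPair x) := by
      intro g g' hg hdet x
      have hg' : ((⟨g, hdet⟩ : Matrix.SpecialLinearGroup (Fin n) ℂ)⁻¹ :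
          Matrix.SpecialLinearGroup (Fin n) ℂ).val = g' := by
        change (Matrix.adjugate g) = g'
        rw [← Matrix.mul_one (Matrix.adjugate _), ← hg,
          ← Matrix.mul_assoc, Matrix.adjugate_mul, hdet, one_smul, Matrix.one_mul]
      have h1 := hinv (⟨g, hdet⟩ : Matrix.SpecialLinearGroup (Fin n) ℂ) (ofPair x)
      rw [hg'] at h1
      refine Eq.trans (congrArg f ?_) h1
      rw [← ofPair_toPair (fun j => _, fun i => _), toPair_smul, toPair_ofPair]
    have hA := mem_genAlg_of_isInv hn hpoly hI
    have hf' : f = fun p => f (ofPair (toPair p)) := by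
      funext p
      rw [ofPair_toPair]
    rw [hf']
    refine adjoin_comp_mem toPair ?_ hA
    rintro _ ((⟨j, i, rfl⟩ | ⟨idx, rfl⟩) | ⟨jdx, rfl⟩)
    · refine Algebra.subset_adjoin (Or.inl (Or.inl ⟨j, i, ?_⟩))
      funext p
      rw [covec_apply (p.1 j)]
      rfl
    · exact Algebra.subset_adjoin (Or.inl (Or.inr ⟨idx, rfl⟩))
    · exact Algebra.subset_adjoin (Or.inr ⟨jdx, rfl⟩)
  · intro hf
    have hA : (fun x : MatPair n a b => f (ofPair x)) ∈ genAlg n a b := by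
      refine adjoin_comp_mem ofPair ?_ hf
      rintro _ ((⟨j, i, rfl⟩ | ⟨idx, rfl⟩) | ⟨jdx, rfl⟩)
      · simp only [ofPair_fst_apply]
        exact pairing_mem j i
      · exact det_vec_mem idx
      · simp only [ofPair_fst_single]
        exact det_covec_mem jdx
    have hf' : f = fun p => f (ofPair (toPair p)) := by
      funext p
      rw [ofPair_toPair]
    constructor
    · rw [hf']
      refine adjoin_comp_mem toPair ?_ (genAlg_le_polyFun hA)
      rintro _ ⟨⟨j, i⟩ | ⟨j, i⟩, rfl⟩
      · exact Algebra.subset_adjoin (Or.inl ⟨j, i, rfl⟩)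
      · exact Algebra.subset_adjoin (Or.inr ⟨j, i, rfl⟩)
    · intro g p
      have hg : g.val * (g⁻¹).val = 1 := by
        rw [← Matrix.SpecialLinearGroup.coe_mul, mul_inv_cancel,
          Matrix.SpecialLinearGroup.coe_one]
      have h1 := genAlg_isInv hA g.val (g⁻¹).val hg g.prop (toPair p)
      simpa only [← toPair_smul, ofPair_toPair] using h1
end

section
/- Let n ≥ 1 and b be natural numbers, and let V = ℂ^n. Consider the algebra P of polynomial functions on V^b, i.e., the ℂ-subalgebra of complex-valued functions on (Fin b → V) generated by the coordinate functions (the entries of the b vectors). The group SL(n,ℂ) acts by g·v = (g·v_i)_i. Then the subalgebra of SL(n,ℂ)-invariant elements of P is generated, as a ℂ-algebra, by the volume forms v ↦ det(v_{i₁}, …, v_{i_n}), where i₁,…,i_n range over all n-tuples of indices in {1,…,b}. -/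
/-!
The proof that every invariant is a polynomial in the minors is a form of Cayley's Ω-process.

Let `f` be an invariant polynomial function. For a matrix `g` of indeterminates, `f (g v)` is a
polynomial `F` in the entries of `g` whose coefficients are functions of `v`. An invertible `g` is
an element of `SL n` times `diag (det g, 1, …, 1)`, so invariance gives
`f (g v) = f (diag (det g, 1, …, 1) v)`, and hence `F = ∑ k, P k * det g ^ k` identically in `g`,
where each `P k` is a function of `v` (`aeval_genForm_eq_aeval_genDet`). Setting `g = 1` gives
`f = ∑ k, P k`, so it suffices that each `P k` lies in the algebra `S` generated by the minors.

The coefficients are isolated with the apolar pairing `⟨p, q⟩ = ∑ α, α! p_α q_α`. Powers of `det`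
of different degree are orthogonal, and `⟨det ^ k, det ^ k⟩` is a positive real number as a sum of
squares, so `P k` is a nonzero constant multiple of `⟨det ^ k, F⟩`. Multiplication by `X i` is
adjoint to `∂ / ∂ X i`, so multiplication by `det` is adjoint to Cayley's operator
`Ω = det (∂ / ∂ g_ij)`. Now `F` is a polynomial in the linear forms `∑ m, g_jm * v_im`, and by the
chain rule `Ω` sends such a polynomial to a combination, with minors as coefficients, of
polynomials of the same kind (`omega_aeval_genForm`). Induction on `k` then shows that
`⟨det ^ k, F⟩` lies in `S` (`pairing_genDet_pow_mem`).
-/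

open Matrix
namespace SLFFT
open MvPolynomial

/-! ### The apolar pairing -/

/-- The apolar (Fischer) pairing `⟨p, q⟩ = ∑ α, α! p_α q_α`, bilinear over the coefficient ring;
it is defined by its values `⟨X ^ α, q⟩ = α! q_α` on monomials. -/
noncomputable def pairing {σ R : Type*} [Fintype σ] [CommRing R] :
    MvPolynomial σ R →ₗ[R] MvPolynomial σ R →ₗ[R] R :=
  (basisMonomials σ R).constr R fun α => ((∏ i, (α i).factorial : ℕ) : R) • lcoeff R α

lemma monomial_eq_smul {σ R : Type*} [CommRing R] (α : σ →₀ ℕ) (a : R) :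
    monomial α a = a • monomial α (1 : R) := by
  simp [smul_monomial]

section pairing
variable {σ R : Type*} [Fintype σ] [CommRing R]

lemma pairing_monomial (α : σ →₀ ℕ) (q : MvPolynomial σ R) :
    pairing (monomial α 1) q = ((∏ i, (α i).factorial : ℕ) : R) * q.coeff α := by
  have := (basisMonomials σ R).constr_basis R
    (fun α => ((∏ i, (α i).factorial : ℕ) : R) • lcoeff R α) α
  rw [coe_basisMonomials] at this
  unfold pairing
  rw [this]
  simp [lcoeff]

lemma pairing_eq_sum (p q : MvPolynomial σ R) :
    pairing p q = ∑ α ∈ p.support,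
      p.coeff α * (((∏ i, (α i).factorial : ℕ) : R) * q.coeff α) := by
  conv_lhs => rw [p.as_sum]
  rw [map_sum, LinearMap.sum_apply]
  refine Finset.sum_congr rfl fun α _ => ?_
  rw [← pairing_monomial, monomial_eq_smul]
  simp

lemma pairing_one (q : MvPolynomial σ R) : pairing 1 q = constantCoeff q := by
  have := pairing_monomial (0 : σ →₀ ℕ) q
  simpa [constantCoeff_eq] using this

/-- Multiplication by a variable is adjoint to the corresponding partial derivative:
`(α + e_i)! = (α_i + 1) α!`. -/
lemma pairing_X_mul (i : σ) (p q : MvPolynomial σ R) :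
    pairing (X i * p) q = pairing p (pderiv i q) := by
  classical
  induction p using MvPolynomial.induction_on' with
  | add p₁ p₂ h₁ h₂ => rw [mul_add]; simp [h₁, h₂]
  | monomial α a =>
    rw [X, monomial_mul, one_mul, monomial_eq_smul, monomial_eq_smul α]
    simp only [map_smul, LinearMap.smul_apply, pairing_monomial, coeff_pderiv]
    have hf : (∏ j, ((Finsupp.single i 1 + α : σ →₀ ℕ) j).factorial)
        = (α i + 1) * ∏ j, (α j).factorial := by
      rw [Fintype.prod_eq_mul_prod_compl i, Fintype.prod_eq_mul_prod_compl i, ← mul_assoc]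
      congr 1
      · simp [add_comm 1, Nat.factorial_succ]
      · refine Finset.prod_congr rfl fun j hj => ?_
        have : i ≠ j := by rintro rfl; simp at hj
        simp [Finsupp.single_eq_of_ne' this]
    rw [hf, add_comm (Finsupp.single i 1) α]
    push_cast
    ring_nf

/-- The pairing commutes with change of coefficients. -/
lemma pairing_map {S : Type*} [CommRing S] (φ : R →+* S) (p q : MvPolynomial σ R) :
    pairing (map φ p) (map φ q) = φ (pairing p q) := by
  induction p using MvPolynomial.induction_on' with
  | add p₁ p₂ h₁ h₂ => simp [h₁, h₂]
  | monomial α a =>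
    rw [map_monomial, monomial_eq_smul, monomial_eq_smul α a]
    simp [pairing_monomial, coeff_map]

lemma pairing_self_pos (p : MvPolynomial σ ℝ) (hp : p ≠ 0) : 0 < pairing p p := by
  rw [pairing_eq_sum]
  refine Finset.sum_pos (fun α hα => ?_) (by simpa using hp)
  have h0 : p.coeff α ≠ 0 := mem_support_iff.mp hα
  have h1 : (0 : ℝ) < ((∏ i, (α i).factorial : ℕ) : ℝ) := by
    exact_mod_cast Finset.prod_pos fun i _ => Nat.factorial_pos _
  have := mul_pos h1 (pow_pos (abs_pos.mpr h0) 2)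
  rw [sq_abs] at this
  linarith [this]

/-- Homogeneous polynomials of different degrees share no monomial, so they are orthogonal. -/
lemma pairing_eq_zero_of_ne {p q : MvPolynomial σ R} {k l : ℕ} (hp : p.IsHomogeneous k)
    (hq : q.IsHomogeneous l) (h : k ≠ l) : pairing p q = 0 := by
  rw [pairing_eq_sum]
  refine Finset.sum_eq_zero fun α _ => ?_
  by_cases hk : α.degree = k
  · rw [hq.coeff_eq_zero (by omega)]; simp
  · rw [hp.coeff_eq_zero hk]; simp

/-- The iterated partial derivative `∂_{d (m-1)} ⋯ ∂_{d 0}`, the derivative along `d 0` being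
taken first. -/
noncomputable def iterPDeriv : {m : ℕ} → (Fin m → σ) → MvPolynomial σ R →ₗ[R] MvPolynomial σ R
  | 0, _ => LinearMap.id
  | _ + 1, d => iterPDeriv (Fin.tail d) ∘ₗ (pderiv (d 0)).toLinearMap

lemma pairing_prod_X_mul {m : ℕ} (d : Fin m → σ) (p q : MvPolynomial σ R) :
    pairing ((∏ t, X (d t)) * p) q = pairing p (iterPDeriv d q) := by
  induction m generalizing p q with
  | zero => simp [iterPDeriv]
  | succ m ih =>
    rw [Fin.prod_univ_succ, mul_assoc, pairing_X_mul]
    exact ih (Fin.tail d) p _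
end pairing

/-! ### Cayley's Ω-operator -/

section omega
variable {R : Type*} [CommRing R] {n : ℕ}

/-- Cayley's operator `Ω = det (∂ / ∂ X (i, j))` on polynomials in the
entries of an `n × n` matrix. -/
noncomputable def omega (q : MvPolynomial (Fin n × Fin n) R) : MvPolynomial (Fin n × Fin n) R :=
  ∑ s : Equiv.Perm (Fin n), (Equiv.Perm.sign s : ℤ) • iterPDeriv (fun t => (t, s t)) q

/-- The determinant of the generic `n × n` matrix, as a polynomial over `R`. -/
noncomputable abbrev genDet (n : ℕ) (R : Type*) [CommRing R] : MvPolynomial (Fin n × Fin n) R :=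
  (mvPolynomialX (Fin n) (Fin n) R).det

/-- Multiplication by the determinant is adjoint to `Ω`. -/
lemma pairing_genDet_mul (p q : MvPolynomial (Fin n × Fin n) R) :
    pairing (genDet n R * p) q = pairing p (omega q) := by
  rw [genDet, ← Matrix.det_transpose, Matrix.det_apply, Finset.sum_mul, omega]
  simp only [map_sum, LinearMap.sum_apply, map_zsmul]
  refine Finset.sum_congr rfl fun s _ => ?_
  rw [← pairing_prod_X_mul, smul_mul_assoc, Units.smul_def, map_zsmul, LinearMap.smul_apply]
  simp [mvPolynomialX_apply]

lemma genDet_isHomogeneous : (genDet n R).IsHomogeneous n := by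
  rw [genDet, Matrix.det_apply]
  refine IsHomogeneous.sum _ _ _ fun s _ => ?_
  have h : (∏ t, mvPolynomialX (Fin n) (Fin n) R (s t) t).IsHomogeneous n := by
    have := IsHomogeneous.prod Finset.univ (fun t => mvPolynomialX (Fin n) (Fin n) R (s t) t)
      (fun _ => 1) (fun t _ => by simpa using isHomogeneous_X R (s t, t))
    simpa using this
  rcases Int.units_eq_one_or (Equiv.Perm.sign s) with hs | hs <;> rw [hs]
  · simpa using h
  · simpa using h.neg

lemma map_genDet {S : Type*} [CommRing S] (φ : R →+* S) : map φ (genDet n R) = genDet n S := by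
  rw [genDet, RingHom.map_det, genDet]
  congr 1
  ext i j : 2
  simp

end omega

/-! ### The action of Ω on polynomials in the linear forms -/

section linear
variable {A : Type*} [CommRing A] [Algebra ℂ A] {n b : ℕ}

/-- The `j`-th coordinate of `g * x i` for the generic matrix `g`, where `p = (i, j)`: the linear
form `∑ m, g_jm * x_im` in the entries of `g`. Hence `aeval (genForm x) G` is `G (g x)`. -/
noncomputable def genForm (x : Fin b → Fin n → A) (p : Fin b × Fin n) :
    MvPolynomial (Fin n × Fin n) A :=
  ∑ m, C (x p.1 m) * X (p.2, m)

/-- Chain rule: only the linear forms coming from row `j` of the generic matrix involve the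
variable `(j, m)`, and the one with index `(i, j)` does so with coefficient `x i m`. -/
lemma pderiv_aeval_genForm (x : Fin b → Fin n → A) (j m : Fin n)
    (G : MvPolynomial (Fin b × Fin n) ℂ) :
    pderiv (j, m) (aeval (genForm x) G) =
      ∑ i, C (x i m) * aeval (genForm x) (pderiv (i, j) G) := by
  classical
  have hX : ∀ i j', pderiv (j, m) (genForm x (i, j')) = if j' = j then C (x i m) else 0 := by
    intro i j'
    simp only [genForm, map_sum, pderiv_C_mul, pderiv_X]
    split_ifs with h
    · subst h
      rw [Finset.sum_eq_single m] <;> simp +contextual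
    · refine Finset.sum_eq_zero fun m' _ => ?_
      simp [h]
  induction G using MvPolynomial.induction_on with
  | C a => simp [IsScalarTower.algebraMap_apply ℂ A (MvPolynomial (Fin n × Fin n) A), algebraMap_eq]
  | add p q hp hq => simp [hp, hq, mul_add, Finset.sum_add_distrib]
  | mul_X p ij hp =>
    obtain ⟨i, j'⟩ := ij
    simp only [map_mul, aeval_X, pderiv_mul, hp, hX, map_add, mul_add, Finset.sum_add_distrib,
      Finset.sum_mul, pderiv_X, mul_assoc]
    congr 1
    rw [Finset.sum_eq_single i]
    · by_cases h : j' = j <;> simp [h, mul_comm]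
    · intro i' _ hi
      simp [hi.symm]
    · simp

/-- The chain rule iterated: `idx` records the vector selected at each differentiation. -/
lemma iterPDeriv_aeval_genForm (x : Fin b → Fin n → A) {m : ℕ} (d : Fin m → Fin n × Fin n)
    (G : MvPolynomial (Fin b × Fin n) ℂ) :
    iterPDeriv d (aeval (genForm x) G) =
      ∑ idx : Fin m → Fin b, C (∏ t, x (idx t) (d t).2) *
        aeval (genForm x) (iterPDeriv (fun t => (idx t, (d t).1)) G) := by
  induction m generalizing G with
  | zero => simp [iterPDeriv]
  | succ m ih =>
    rw [← (Fin.consEquiv fun _ : Fin (m + 1) => Fin b).sum_comp, Fintype.sum_prod_type]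
    have hd : pderiv (d 0) (aeval (genForm x) G) = _ := pderiv_aeval_genForm x (d 0).1 (d 0).2 G
    simp only [iterPDeriv, LinearMap.comp_apply, Derivation.coeFn_coe]
    rw [hd, map_sum]
    refine Finset.sum_congr rfl fun i _ => ?_
    rw [← smul_eq_C_mul, map_smul, ih, Finset.smul_sum]
    refine Finset.sum_congr rfl fun idx _ => ?_
    rw [Fin.prod_univ_succ]
    simp [smul_eq_C_mul, mul_assoc, Fin.consEquiv, Fin.tail_def]

/-- Summing the iterated chain rule over permutations with signs assembles the coefficients
into minors, since the remaining derivative does not depend on the permutation. -/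
lemma omega_aeval_genForm (x : Fin b → Fin n → A) (G : MvPolynomial (Fin b × Fin n) ℂ) :
    omega (aeval (genForm x) G) = ∑ idx : Fin n → Fin b,
      C (Matrix.det (Matrix.of fun t => x (idx t))) *
        aeval (genForm x) (iterPDeriv (fun t => (idx t, t)) G) := by
  simp only [omega, iterPDeriv_aeval_genForm, Finset.smul_sum]
  rw [Finset.sum_comm]
  refine Finset.sum_congr rfl fun idx _ => ?_
  rw [← Matrix.det_transpose, Matrix.det_apply, map_sum, Finset.sum_mul]
  refine Finset.sum_congr rfl fun s _ => ?_
  rw [Units.smul_def, map_zsmul, smul_mul_assoc]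
  simp

/-- Pairing `G (g x)` with a power of the determinant of `g` lands in any subalgebra containing
the minors of `x`. -/
lemma pairing_genDet_pow_mem (S : Subalgebra ℂ A) (x : Fin b → Fin n → A)
    (hS : ∀ idx : Fin n → Fin b, Matrix.det (Matrix.of fun t => x (idx t)) ∈ S) (k : ℕ)
    (G : MvPolynomial (Fin b × Fin n) ℂ) :
    pairing (genDet n A ^ k) (aeval (genForm x) G) ∈ S := by
  induction k generalizing G with
  | zero =>
    have h : constantCoeff (aeval (genForm x) G) = algebraMap ℂ A (constantCoeff G) := by
      rw [map_aeval]
      have h0 : (fun i => constantCoeff (genForm x i)) = fun _ => (0 : A) := by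
        funext i; simp [genForm]
      rw [h0, coe_eval₂Hom, eval₂_zero'_apply]
      rw [RingHom.comp_apply, IsScalarTower.algebraMap_apply ℂ A (MvPolynomial (Fin n × Fin n) A),
        algebraMap_eq, constantCoeff_C]
    rw [pow_zero, pairing_one, h]
    exact S.algebraMap_mem _
  | succ k ih =>
    rw [pow_succ', pairing_genDet_mul, omega_aeval_genForm, map_sum]
    refine S.sum_mem fun idx _ => ?_
    rw [← smul_eq_C_mul, map_smul, smul_eq_mul]
    exact S.mul_mem (hS idx) (ih _)

/-- The determinant has real coefficients, so its powers have positive norm; in particular this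
norm is a unit constant in every `ℂ`-algebra. -/
lemma pairing_genDet_pow_self (n : ℕ) (A : Type*) [CommRing A] [Algebra ℂ A] (k : ℕ) :
    ∃ c : ℂ, c ≠ 0 ∧ pairing (genDet n A ^ k) (genDet n A ^ k) = algebraMap ℂ A c := by
  have hpos : 0 < pairing (genDet n ℝ ^ k) (genDet n ℝ ^ k) :=
    pairing_self_pos _ (pow_ne_zero _ (det_mvPolynomialX_ne_zero _ _))
  refine ⟨(pairing (genDet n ℝ ^ k) (genDet n ℝ ^ k) : ℝ), by exact_mod_cast hpos.ne', ?_⟩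
  have := pairing_map ((algebraMap ℂ A).comp Complex.ofRealHom) (genDet n ℝ ^ k) (genDet n ℝ ^ k)
  rw [map_pow, map_genDet] at this
  simpa using this

/-- If `G (g x)` is a polynomial in the determinant of `g`, its coefficients lie in any subalgebra
containing the minors of `x`: they are recovered, up to nonzero constants, by pairing with powers
of the determinant. For `n = 0` all these powers have degree zero, hence the hypothesis on `n`. -/
lemma coeff_mem_of_eq_aeval_genDet (hn : 1 ≤ n) (S : Subalgebra ℂ A) (x : Fin b → Fin n → A)
    (hS : ∀ idx : Fin n → Fin b, Matrix.det (Matrix.of fun t => x (idx t)) ∈ S)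
    (G : MvPolynomial (Fin b × Fin n) ℂ) (P : Polynomial A)
    (h : aeval (genForm x) G = Polynomial.aeval (genDet n A) P) (k : ℕ) : P.coeff k ∈ S := by
  obtain ⟨c, hc, hck⟩ := pairing_genDet_pow_self n A k
  have h1 := pairing_genDet_pow_mem S x hS k G
  have h2 : pairing (genDet n A ^ k) (aeval (genForm x) G) = c • P.coeff k := by
    rw [h, Polynomial.aeval_eq_sum_range' (n := max (k + 1) (P.natDegree + 1)) (by omega), map_sum,
      Finset.sum_eq_single k]
    · rw [map_smul, hck, smul_eq_mul, mul_comm, Algebra.smul_def]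
    · intro l _ hl
      rw [map_smul, pairing_eq_zero_of_ne (genDet_isHomogeneous.pow k) (genDet_isHomogeneous.pow l),
        smul_zero]
      exact fun hkl => hl (Nat.eq_of_mul_eq_mul_left hn hkl).symm
    · intro hk
      simp at hk
  rw [h2] at h1
  simpa [smul_smul, hc] using S.smul_mem h1 c⁻¹
end linear

/-! ### Invariant functions -/

section functions
variable {n b : ℕ}

/-- The coordinates of `diag (1, …, T, …, 1) v`, with the variable `T` at position `j₀`, as
polynomials in `T` over the ring of functions of `v`. -/
noncomputable def coordPoly (j₀ : Fin n) (p : Fin b × Fin n) :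
    Polynomial ((Fin b → Fin n → ℂ) → ℂ) :=
  Polynomial.C (fun v => v p.1 p.2) * (if p.2 = j₀ then Polynomial.X else 1)

/-- For an invariant `G`, the polynomial `G (g v)` in the entries of `g` depends on `g` only through
its determinant: it equals `G (diag (1, …, det g, …, 1) v)`. -/
lemma aeval_genForm_eq_aeval_genDet (j₀ : Fin n) (G : MvPolynomial (Fin b × Fin n) ℂ)
    (hG : ∀ (g : Matrix.SpecialLinearGroup (Fin n) ℂ) (v : Fin b → Fin n → ℂ),
      eval (fun p => g.val.mulVec (v p.1) p.2) G = eval (fun p => v p.1 p.2) G) :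
    aeval (genForm fun i j (v : Fin b → Fin n → ℂ) => v i j) G =
      Polynomial.aeval (genDet n _) (aeval (coordPoly j₀) G) := by
  -- An identity over the ring of functions of `v` may be checked separately at each `v`.
  ext α v
  have key : map (Pi.evalRingHom (fun _ : Fin b → Fin n → ℂ => ℂ) v)
        (aeval (genForm fun i j (v : Fin b → Fin n → ℂ) => v i j) G) =
      map (Pi.evalRingHom (fun _ : Fin b → Fin n → ℂ => ℂ) v)
        (Polynomial.aeval (genDet n _) (aeval (coordPoly j₀) G)) := by
    refine eq_of_eval_eq_on_gl fun g => ?_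
    set δ : ℂ := (g : Matrix (Fin n) (Fin n) ℂ).det with hδ
    have hδ0 : δ ≠ 0 := (Matrix.isUnits_det_units g).ne_zero
    let d : Fin n → ℂ := fun j => if j = j₀ then δ else 1
    have hd : ∏ j, d j = δ := by simp [d]
    have hd0 : ∀ j, d j ≠ 0 := fun j => by simp only [d]; split_ifs <;> simp [hδ0]
    -- `g = h * diagonal d` with `h` of determinant one
    let h : Matrix.SpecialLinearGroup (Fin n) ℂ :=
      ⟨(g : Matrix (Fin n) (Fin n) ℂ) * Matrix.diagonal (fun j => (d j)⁻¹), by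
        rw [Matrix.det_mul, Matrix.det_diagonal, Finset.prod_inv_distrib, hd, ← hδ,
          mul_inv_cancel₀ hδ0]⟩
    have hh : h.val * Matrix.diagonal d = (g : Matrix (Fin n) (Fin n) ℂ) := by
      simp only [h]
      rw [Matrix.mul_assoc, Matrix.diagonal_mul_diagonal]
      simp [hd0]
    have hinv := hG h (fun i => (Matrix.diagonal d).mulVec (v i))
    simp only [Matrix.mulVec_mulVec, hh] at hinv
    have hL : ∀ q : MvPolynomial (Fin b × Fin n) ℂ,
        eval (fun ij : Fin n × Fin n => (g : Matrix (Fin n) (Fin n) ℂ) ij.1 ij.2)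
          (map (Pi.evalRingHom (fun _ : Fin b → Fin n → ℂ => ℂ) v)
            (aeval (genForm fun i j (v : Fin b → Fin n → ℂ) => v i j) q)) =
        eval (fun p => (g : Matrix (Fin n) (Fin n) ℂ).mulVec (v p.1) p.2) q := by
      intro q
      induction q using MvPolynomial.induction_on with
      | C a => simp [IsScalarTower.algebraMap_apply ℂ ((Fin b → Fin n → ℂ) → ℂ)
          (MvPolynomial (Fin n × Fin n) ((Fin b → Fin n → ℂ) → ℂ)), algebraMap_eq]
      | add p q hp hq => simp only [map_add, hp, hq]
      | mul_X p i hp =>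
        simp only [map_mul, hp]
        simp [genForm, Matrix.mulVec, dotProduct, mul_comm]
    have hR : ∀ q : MvPolynomial (Fin b × Fin n) ℂ,
        eval (fun ij : Fin n × Fin n => (g : Matrix (Fin n) (Fin n) ℂ) ij.1 ij.2)
          (map (Pi.evalRingHom (fun _ : Fin b → Fin n → ℂ => ℂ) v)
            (Polynomial.aeval (genDet n ((Fin b → Fin n → ℂ) → ℂ)) (aeval (coordPoly j₀) q))) =
        eval (fun p => (Matrix.diagonal d).mulVec (v p.1) p.2) q := by
      intro q
      induction q using MvPolynomial.induction_on with
      | C a => simp [IsScalarTower.algebraMap_apply ℂ ((Fin b → Fin n → ℂ) → ℂ)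
          (Polynomial ((Fin b → Fin n → ℂ) → ℂ)), algebraMap_eq]
      | add p q hp hq => simp only [map_add, hp, hq]
      | mul_X p i hp =>
        simp only [map_mul, hp]
        congr 1
        have hg : eval (fun ij : Fin n × Fin n => (g : Matrix (Fin n) (Fin n) ℂ) ij.1 ij.2)
            (genDet n ℂ) = δ := eval_det_mvPolynomialX _ _ _
        by_cases hi : i.2 = j₀
        · simp [coordPoly, hi, algebraMap_eq, map_genDet, hg, Matrix.mulVec_diagonal, d]
          exact mul_comm _ _
        · simp [coordPoly, hi, algebraMap_eq, Matrix.mulVec_diagonal, d]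
    rw [hL, hR]
    exact hinv
  have := congrArg (coeff α) key
  rwa [coeff_map, coeff_map] at this

lemma aeval_coord_apply (G : MvPolynomial (Fin b × Fin n) ℂ) (v : Fin b → Fin n → ℂ) :
    aeval (fun p (v : Fin b → Fin n → ℂ) => v p.1 p.2) G v = eval (fun p => v p.1 p.2) G := by
  induction G using MvPolynomial.induction_on with
  | C a => simp
  | add p q hp hq => simp [hp, hq]
  | mul_X p i hp => simp [hp]

lemma eval_one_aeval_coordPoly (j₀ : Fin n) (G : MvPolynomial (Fin b × Fin n) ℂ) :
    (aeval (coordPoly j₀) G).eval 1 = aeval (fun p (v : Fin b → Fin n → ℂ) => v p.1 p.2) G := by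
  induction G using MvPolynomial.induction_on with
  | C a => simp [IsScalarTower.algebraMap_apply ℂ ((Fin b → Fin n → ℂ) → ℂ)
          (Polynomial ((Fin b → Fin n → ℂ) → ℂ))]
  | add p q hp hq => simp [hp, hq]
  | mul_X p i hp =>
    rw [map_mul, map_mul, Polynomial.eval_mul, hp, aeval_X, aeval_X, coordPoly]
    split_ifs <;> simp

lemma mem_of_invariant (hn : 1 ≤ n) (S : Subalgebra ℂ ((Fin b → Fin n → ℂ) → ℂ))
    (hS : ∀ idx : Fin n → Fin b,
      (fun v : Fin b → Fin n → ℂ => Matrix.det (Matrix.of fun k => v (idx k))) ∈ S)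
    (G : MvPolynomial (Fin b × Fin n) ℂ)
    (hG : ∀ (g : Matrix.SpecialLinearGroup (Fin n) ℂ) (v : Fin b → Fin n → ℂ),
      eval (fun p => g.val.mulVec (v p.1) p.2) G = eval (fun p => v p.1 p.2) G) :
    (fun v : Fin b → Fin n → ℂ => eval (fun p => v p.1 p.2) G) ∈ S := by
  set P := aeval (coordPoly (b := b) (⟨0, hn⟩ : Fin n)) G with hP
  have hcoeff := coeff_mem_of_eq_aeval_genDet hn S
    (fun i j (v : Fin b → Fin n → ℂ) => v i j) (fun idx => by
      convert hS idx using 1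
      funext v
      exact RingHom.map_det (Pi.evalRingHom (fun _ : Fin b → Fin n → ℂ => ℂ) v) _) G P
    (aeval_genForm_eq_aeval_genDet _ G hG)
  have hone : (fun v : Fin b → Fin n → ℂ => eval (fun p => v p.1 p.2) G) = P.eval 1 := by
    rw [hP, eval_one_aeval_coordPoly]
    exact funext fun v => (aeval_coord_apply G v).symm
  rw [hone, Polynomial.eval_eq_sum_range]
  exact S.sum_mem fun k _ => by simpa using hcoeff k
end functions
end SLFFT




theorem first_fundamental_theorem_vectors (n b : ℕ) (hn : 1 ≤ n) :
    {f : (Fin b → Fin n → ℂ) → ℂ |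
        -- f is a polynomial function: it lies in the ℂ-subalgebra generated by
        -- the coordinate functions v ↦ v i j
        f ∈ Algebra.adjoin ℂ
          {h : (Fin b → Fin n → ℂ) → ℂ | ∃ (i : Fin b) (j : Fin n),
            h = fun v => v i j} ∧
        -- f is SL(n,ℂ)-invariant
        ∀ (g : Matrix.SpecialLinearGroup (Fin n) ℂ) (v : Fin b → Fin n → ℂ),
          f (fun i => g.val.mulVec (v i)) = f v} =
      -- the subalgebra generated by the volume forms (maximal minors)
      (Algebra.adjoin ℂ
        {h : (Fin b → Fin n → ℂ) → ℂ | ∃ idx : Fin n → Fin b,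
          h = fun v => Matrix.det (Matrix.of fun k => v (idx k))} : Set _) := by
  apply Set.Subset.antisymm
  · rintro f ⟨hf, hinv⟩
    have hset : {h : (Fin b → Fin n → ℂ) → ℂ | ∃ (i : Fin b) (j : Fin n), h = fun v => v i j} =
        Set.range fun (p : Fin b × Fin n) (v : Fin b → Fin n → ℂ) => v p.1 p.2 := by
      ext h
      simp [Prod.exists, eq_comm]
    rw [hset, Algebra.adjoin_range_eq_range_aeval] at hf
    obtain ⟨G, rfl⟩ := hf
    have hG : ∀ v, MvPolynomial.aeval (fun (p : Fin b × Fin n) (v : Fin b → Fin n → ℂ) =>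
        v p.1 p.2) G v = MvPolynomial.eval (fun p => v p.1 p.2) G := SLFFT.aeval_coord_apply G
    simp only [AlgHom.toRingHom_eq_coe, RingHom.coe_coe, hG] at hinv
    have := SLFFT.mem_of_invariant hn (Algebra.adjoin ℂ
        {h : (Fin b → Fin n → ℂ) → ℂ | ∃ idx : Fin n → Fin b,
          h = fun v => Matrix.det (Matrix.of fun k => v (idx k))})
      (fun idx => Algebra.subset_adjoin ⟨idx, rfl⟩) G hinv
    rw [← funext hG] at this
    exact this
  · intro f hf
    have hcoord : ∀ i j, (fun v : Fin b → Fin n → ℂ => v i j) ∈ Algebra.adjoin ℂ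
        {h : (Fin b → Fin n → ℂ) → ℂ | ∃ (i : Fin b) (j : Fin n), h = fun v => v i j} :=
      fun i j => Algebra.subset_adjoin ⟨i, j, rfl⟩
    induction hf using Algebra.adjoin_induction with
    | mem f hf =>
      obtain ⟨idx, rfl⟩ := hf
      constructor
      · have : (fun v : Fin b → Fin n → ℂ => Matrix.det (Matrix.of fun k => v (idx k))) =
            ∑ s : Equiv.Perm (Fin n), (Equiv.Perm.sign s : ℤ) •
              ∏ t, fun v : Fin b → Fin n → ℂ => v (idx (s t)) t := by
          funext v
          simp [Matrix.det_apply, Units.smul_def, Finset.prod_apply]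
        rw [this]
        exact sum_mem fun s _ => zsmul_mem (prod_mem fun t _ => hcoord _ _) _
      · intro g v
        have : (Matrix.of fun k => g.val.mulVec (v (idx k))) =
            (Matrix.of fun k => v (idx k)) * g.valᵀ := by
          ext k j
          simp [Matrix.mul_apply, Matrix.mulVec, dotProduct, mul_comm]
        simp only [this, Matrix.det_mul, Matrix.det_transpose, g.prop, mul_one]
    | algebraMap r => exact ⟨Subalgebra.algebraMap_mem _ r, fun g v => rfl⟩
    | add p q _ _ hp hq =>
      exact ⟨add_mem hp.1 hq.1, fun g v => by simp only [Pi.add_apply, hp.2, hq.2]⟩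
    | mul p q _ _ hp hq =>
      exact ⟨mul_mem hp.1 hq.1, fun g v => by simp only [Pi.mul_apply, hp.2, hq.2]⟩
end
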